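/- For every reduced word i ∈ Σ_{n+1} and every dominant integral weight λ, the N-dimensional Euclidean volume of the string polytope Δ_i(λ) equals the N-dimensional Euclidean volume of the Gelfand–Cetlin polytope GC(λ). -/

import Mathlib

open scoped Classical

noncomputable section

namespace StringPolytope

/-! ### Words, reduced words, two-moves -/

/-- the simple transposition `s_a = (a, a+1)` acting on `ℕ` (wires are `1, …, n+1`). -/
def sTrans (a : ℕ) : Equiv.Perm ℕ := Equiv.swap a (a + 1)

/-- product `s_{i₁} ⋯ s_{i_N}` of the simple transpositions of a word. -/
def wordProd (w : List ℕ) : Equiv.Perm ℕ := (w.map sTrans).prod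

/-- the longest element `w₀` of the symmetric group on `{1, …, n+1}`,
sending `k ↦ n + 2 - k` there and fixing everything else. -/
def longestPerm (n : ℕ) : Equiv.Perm ℕ :=
  Function.Involutive.toPerm
    (fun k => if 1 ≤ k ∧ k ≤ n + 1 then n + 2 - k else k)
    (by intro k; dsimp only; split_ifs <;> omega)

/-- `w ∈ Σ_{n+1}`: a reduced word of the longest element of `S_{n+1}`,
i.e. a word over `[n] = {1,…,n}` of length `N = n(n+1)/2` whose product is `w₀`. -/
def IsReduced (n : ℕ) (w : List ℕ) : Prop :=
  w.length = n * (n + 1) / 2 ∧ (∀ a ∈ w, 1 ≤ a ∧ a ≤ n) ∧ wordProd w = longestPerm n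

/-- a single 2-move: exchange two adjacent letters `(a, b)` with `|a - b| > 1`. -/
def TwoMoveStep (w w' : List ℕ) : Prop :=
  ∃ u v a b, (a + 1 < b ∨ b + 1 < a) ∧ w = u ++ a :: b :: v ∧ w' = u ++ b :: a :: v

/-- 2-move equivalence of words. -/
def TwoMoveEquiv : List ℕ → List ℕ → Prop := Relation.ReflTransGen TwoMoveStep

/-- `A_n = (1, 2, …, n)`. -/
def ascWord (n : ℕ) : List ℕ := (List.range n).map (· + 1)

/-- `D_n = (n, n-1, …, 1)`. -/
def descWord (n : ℕ) : List ℕ := (ascWord n).reverse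

/-! ### The wiring diagram -/

/-- the letter `i_j` of `w` (1-based index `j`); the node `t_j` lies in column `i_j`. -/
def letterAt (w : List ℕ) (j : ℕ) : ℕ := w.getD (j - 1) 0

/-- `1 ≤ j ≤ N`: `t_j` is an actual node of the diagram. -/
def ValidNode (w : List ℕ) (j : ℕ) : Prop := 1 ≤ j ∧ j ≤ w.length

/-- the column-to-wire assignment just above node `t_j`
(at the top of the diagram, wire `k` is in column `k`). -/
def stateAbove (w : List ℕ) (j : ℕ) : Equiv.Perm ℕ := wordProd (w.take (j - 1))

/-- the column-to-wire assignment just below node `t_j`. -/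
def stateBelow (w : List ℕ) (j : ℕ) : Equiv.Perm ℕ := wordProd (w.take j)

/-- one of the two wires crossing at node `t_j` (the one leaving upward-left). -/
def wireX (w : List ℕ) (j : ℕ) : ℕ := stateAbove w j (letterAt w j)

/-- the other wire crossing at node `t_j` (the one leaving upward-right). -/
def wireY (w : List ℕ) (j : ℕ) : ℕ := stateAbove w j (letterAt w j + 1)

/-- the node `t_j` lies on the wire `ℓ_r`. -/
def NodeOnWire (w : List ℕ) (j r : ℕ) : Prop := wireX w j = r ∨ wireY w j = r

/-- given one wire `r` at node `t_j`, the other wire crossing there. -/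
def otherWire (w : List ℕ) (j r : ℕ) : ℕ := if wireX w j = r then wireY w j else wireX w j

/-- the column of wire `ℓ_r` at the height of node `t_j`. -/
def wireCol (w : List ℕ) (j r : ℕ) : ℕ := (stateBelow w j).symm r

/-- node `t_j` lies strictly below the wire `ℓ_{n+1}`
(which runs from the bottom-left corner to the top-right corner). -/
def BelowWireLast (n : ℕ) (w : List ℕ) (j : ℕ) : Prop :=
  wireCol w j (n + 1) < letterAt w j

/-- node `t_j` lies strictly above the wire `ℓ_{n+1}`. -/
def AboveWireLast (n : ℕ) (w : List ℕ) (j : ℕ) : Prop :=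
  letterAt w j + 1 < wireCol w j (n + 1)

/-- node `t_j` lies strictly below the wire `ℓ_1`
(which runs from the bottom-right corner to the top-left corner). -/
def BelowWireOne (w : List ℕ) (j : ℕ) : Prop :=
  letterAt w j + 1 < wireCol w j 1

/-- node `t_j` lies strictly above the wire `ℓ_1`. -/
def AboveWireOne (w : List ℕ) (j : ℕ) : Prop :=
  wireCol w j 1 < letterAt w j

/-! ### Rigorous (Gleizer–Postnikov) paths

A path in `G(i, k)` is encoded by `k` together with the list of its switching
nodes, in order of travel.  Wires `ℓ_1, …, ℓ_k` are oriented upward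
(decreasing node index) and the remaining wires downward. -/

/-- the (1-based indices of the) nodes lying on wire `ℓ_r`, in order of increasing index. -/
def nodesOn (w : List ℕ) (r : ℕ) : List ℕ :=
  ((List.range w.length).map (· + 1)).filter (fun j => decide (NodeOnWire w j r))

/-- nodes on wire `ℓ_r` strictly between the nodes `t_a` and `t_b`. -/
def segList (w : List ℕ) (r a b : ℕ) : List ℕ :=
  (nodesOn w r).filter (fun j => decide (min a b < j ∧ j < max a b))

/-- nodes on wire `ℓ_r` strictly below the node `t_a`. -/
def tailList (w : List ℕ) (r a : ℕ) : List ℕ :=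
  (nodesOn w r).filter (fun j => decide (a < j))

/-- a forbidden fragment of `G(i, k)`: the path passes straight through node `t_j`
travelling along the wire `ℓ_r`, where the other wire `ℓ_b` crossing there has the same
orientation as `ℓ_r` and (`r < b` if both upward, `r > b` if both downward). -/
def Forbidden (w : List ℕ) (k j r : ℕ) : Prop :=
  (r ≤ k ∧ otherWire w j r ≤ k ∧ r < otherWire w j r) ∨
  (k < r ∧ k < otherWire w j r ∧ otherWire w j r < r)

/-- travelling in `G(i,k)`: currently on wire `ℓ_r` at node `t_a` (just switched there),
with future switching nodes `ms`; the travel is legal and ends at `L_{k+1}`. -/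
def TravelOK (w : List ℕ) (k : ℕ) : ℕ → ℕ → List ℕ → Prop
  | r, a, [] => r = k + 1 ∧ ∀ j ∈ tailList w r a, ¬ Forbidden w k j r
  | r, a, m :: ms =>
      ValidNode w m ∧ NodeOnWire w m r ∧
      (if r ≤ k then m < a else a < m) ∧
      (∀ j ∈ segList w r a m, ¬ Forbidden w k j r) ∧
      TravelOK w k (otherWire w m r) m ms

/-- all nodes visited after the switch at node `t_a` onto wire `ℓ_r`. -/
def visitTail (w : List ℕ) : ℕ → ℕ → List ℕ → List ℕ
  | r, a, [] => tailList w r a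
  | r, a, m :: ms => segList w r a m ++ m :: visitTail w (otherWire w m r) m ms

/-- the list of all nodes visited by the path (switching nodes and straight passes). -/
def visitList (w : List ℕ) (k : ℕ) : List ℕ → List ℕ
  | [] => []
  | m :: ms => tailList w k m ++ m :: visitTail w (otherWire w m k) m ms

/-- `(k, ms)` encodes a rigorous (Gleizer–Postnikov) path in `G(i, k)`:
it starts at `L_k` going up the wire `ℓ_k`, switches wires exactly at the nodes
listed in `ms`, respects the orientation, ends at `L_{k+1}`, contains no forbidden
fragment and passes through each node at most once. -/
def IsGPPath (n : ℕ) (w : List ℕ) (k : ℕ) (ms : List ℕ) : Prop :=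
  1 ≤ k ∧ k ≤ n ∧
  (match ms with
   | [] => False
   | m :: rest =>
       ValidNode w m ∧ NodeOnWire w m k ∧
       (∀ j ∈ tailList w k m, ¬ Forbidden w k j k) ∧
       TravelOK w k (otherWire w m k) m rest) ∧
  (visitList w k ms).Nodup

/-- the set `GP(i)` of all rigorous paths of `G(i)`. -/
def GP (n : ℕ) (w : List ℕ) : Set (ℕ × List ℕ) := {p | IsGPPath n w p.1 p.2}

/-- `|GP(i)|`, the number of rigorous paths. -/
def numGP (n : ℕ) (w : List ℕ) : ℕ := (GP n w).ncard

/-- the successive switches of a path: `(node, from-wire, to-wire)`. -/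
def pathSwitches (w : List ℕ) : ℕ → List ℕ → List (ℕ × ℕ × ℕ)
  | _, [] => []
  | r, m :: ms => (m, r, otherWire w m r) :: pathSwitches w (otherWire w m r) ms

/-- the wire-expression of a path: the successive wires travelled. -/
def wireSeq (w : List ℕ) : ℕ → List ℕ → List ℕ
  | r, [] => [r]
  | r, m :: ms => r :: wireSeq w (otherWire w m r) ms

/-- the peaks of a path: switching nodes where the path switches from an
upward wire to a downward wire. -/
def peaks (w : List ℕ) (k : ℕ) (ms : List ℕ) : List ℕ :=
  ((pathSwitches w k ms).filter (fun e => decide (e.2.1 ≤ k ∧ k < e.2.2))).map (·.1)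

/-! ### String cone, `λ`-cone, string polytope -/

/-- `N = n(n+1)/2`, the number of nodes. -/
abbrev Dim (n : ℕ) : ℕ := n * (n + 1) / 2

/-- the coefficient `a_j` of `t_j` in the string inequality of the path `(k, ms)`:
`+1` if the path switches at `t_j` from `ℓ_r` to `ℓ_s` with `r < s`,
`-1` if it switches with `r > s`, and `0` otherwise. -/
def coeff (w : List ℕ) (k : ℕ) (ms : List ℕ) (j : ℕ) : ℝ :=
  ((pathSwitches w k ms).map (fun e =>
    if e.1 = j then (if e.2.1 < e.2.2 then (1 : ℝ) else -1) else 0)).sum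

/-- the (primitive inward normal) coefficient vector of the string inequality of a path. -/
def normalVec (n : ℕ) (w : List ℕ) (p : ℕ × List ℕ) : Fin (Dim n) → ℝ :=
  fun j => coeff w p.1 p.2 ((j : ℕ) + 1)

/-- the left-hand side `∑ a_j t_j` of the string inequality of the path `p`. -/
def stringIneq (n : ℕ) (w : List ℕ) (p : ℕ × List ℕ) (t : Fin (Dim n) → ℝ) : ℝ :=
  ∑ j : Fin (Dim n), normalVec n w p j * t j

/-- the string cone `C_i ⊆ ℝ^N`. -/
def stringCone (n : ℕ) (w : List ℕ) : Set (Fin (Dim n) → ℝ) :=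
  {t | ∀ p ∈ GP n w, 0 ≤ stringIneq n w p t}

/-- the polyhedron cut out by all string inequalities except the one of `p₀`. -/
def stringConeExcept (n : ℕ) (w : List ℕ) (p₀ : ℕ × List ℕ) : Set (Fin (Dim n) → ℝ) :=
  {t | ∀ p ∈ GP n w, p ≠ p₀ → 0 ≤ stringIneq n w p t}

/-- the coefficient `a_k` in the `λ`-inequality of node `t_j`:
`1` if `t_k` is one column left or right of `t_j`, `-2` if in the same column. -/
def lamCoeff (w : List ℕ) (j k : ℕ) : ℝ :=
  if letterAt w k = letterAt w j then -2
  else if letterAt w k = letterAt w j + 1 ∨ letterAt w k + 1 = letterAt w j then 1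
  else 0

/-- the `λ`-inequality of node `t_{j+1}`:
`t_j ≤ λ_{i_j} + ∑_{k > j} a_k t_k`. -/
def LamIneq (n : ℕ) (w : List ℕ) (lam : ℕ → ℤ) (j : Fin (Dim n)) (t : Fin (Dim n) → ℝ) : Prop :=
  t j ≤ (lam (letterAt w ((j : ℕ) + 1)) : ℝ) +
    ∑ k : Fin (Dim n),
      (if (j : ℕ) < (k : ℕ) then lamCoeff w ((j : ℕ) + 1) ((k : ℕ) + 1) else 0) * t k

/-- the `λ`-cone `C_i^λ ⊆ ℝ^N`. -/
def lamCone (n : ℕ) (w : List ℕ) (lam : ℕ → ℤ) : Set (Fin (Dim n) → ℝ) :=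
  {t | ∀ j, LamIneq n w lam j t}

/-- the polyhedron cut out by all `λ`-inequalities except the one of `j₀`. -/
def lamConeExcept (n : ℕ) (w : List ℕ) (lam : ℕ → ℤ) (j₀ : Fin (Dim n)) :
    Set (Fin (Dim n) → ℝ) :=
  {t | ∀ j, j ≠ j₀ → LamIneq n w lam j t}

/-- the string polytope `Δ_i(λ) = C_i ∩ C_i^λ`. -/
def stringPolytope (n : ℕ) (w : List ℕ) (lam : ℕ → ℤ) : Set (Fin (Dim n) → ℝ) :=
  stringCone n w ∩ lamCone n w lam

/-- `λ = λ_1 ϖ_1 + ⋯ + λ_n ϖ_n` is a dominant integral weight: all `λ_j ≥ 0`. -/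
def Dominant (n : ℕ) (lam : ℕ → ℤ) : Prop := ∀ j, 1 ≤ j → j ≤ n → 0 ≤ lam j

/-- `λ` is a regular dominant integral weight: all `λ_j > 0`. -/
def RegularDominant (n : ℕ) (lam : ℕ → ℤ) : Prop := ∀ j, 1 ≤ j → j ≤ n → 0 < lam j

/-! ### Unimodular equivalence, Gelfand–Cetlin polytope, facets -/

/-- `P` and `Q` are unimodularly equivalent: `Q = M(P) + v` with `M ∈ GL(m, ℤ)`, `v ∈ ℤ^m`. -/
def UnimodEquiv {m : ℕ} (P Q : Set (Fin m → ℝ)) : Prop :=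
  ∃ (M : Matrix (Fin m) (Fin m) ℤ) (v : Fin m → ℤ), IsUnit M.det ∧
    Q = (fun x i => (∑ j, (M i j : ℝ) * x j) + (v i : ℝ)) '' P

/-- the entry `x_{k,j}` (`1 ≤ j ≤ k ≤ n+1`) of a Gelfand–Cetlin pattern, where the
top row is `x_{n+1,j} = λ_j + ⋯ + λ_n` and `x_{n+1,n+1} = 0`; the pair `(k, j)` is
encoded as the coordinate `k(k-1)/2 + (j-1)` of `ℝ^N`. -/
def gcX (n : ℕ) (lam : ℕ → ℤ) (x : Fin (Dim n) → ℝ) (k j : ℕ) : ℝ :=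
  if k = n + 1 then (if j ≤ n then ∑ t ∈ Finset.Icc j n, (lam t : ℝ) else 0)
  else if h : k * (k - 1) / 2 + (j - 1) < Dim n then x ⟨k * (k - 1) / 2 + (j - 1), h⟩ else 0

/-- the Gelfand–Cetlin polytope `GC(λ) ⊆ ℝ^N`. -/
def GCPolytope (n : ℕ) (lam : ℕ → ℤ) : Set (Fin (Dim n) → ℝ) :=
  {x | ∀ k j, 1 ≤ k → k ≤ n → 1 ≤ j → j ≤ k →
      gcX n lam x k j ≤ gcX n lam x (k + 1) j ∧
      gcX n lam x (k + 1) (j + 1) ≤ gcX n lam x k j}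

/-- a face of a convex set: a convex extreme subset. -/
def IsFaceSet {m : ℕ} (S F : Set (Fin m → ℝ)) : Prop := IsExtreme ℝ S F ∧ Convex ℝ F

/-- a facet: a maximal proper face. -/
def IsFacet {m : ℕ} (S F : Set (Fin m → ℝ)) : Prop :=
  IsFaceSet S F ∧ F ≠ S ∧ ∀ G, IsFaceSet S G → G ≠ S → F ⊆ G → F = G

/-- the number of facets. -/
def numFacets {m : ℕ} (S : Set (Fin m → ℝ)) : ℕ := {F | IsFacet S F}.ncard

/-- combinatorial equivalence: an inclusion-preserving bijection between face lattices. -/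
def CombEquiv {m : ℕ} (S T : Set (Fin m → ℝ)) : Prop :=
  ∃ e : {F // IsFaceSet S F} ≃ {F // IsFaceSet T F},
    ∀ F G : {F // IsFaceSet S F}, F.1 ⊆ G.1 ↔ (e F).1 ⊆ (e G).1

/-! ### Indices, contractions and extensions -/

/-- the `D`-index `ind_D(i) = |i_D^+|` for a decomposition `i ∼ i_D^- D_n i_D^+`
(independent of the decomposition). -/
def indD (n : ℕ) (w : List ℕ) : ℕ :=
  sInf {s | ∃ u v : List ℕ, v.length = s ∧ TwoMoveEquiv w (u ++ descWord n ++ v)}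

/-- the `A`-index `ind_A(i) = |i_A^+|` for a decomposition `i ∼ i_A^- A_n i_A^+`. -/
def indA (n : ℕ) (w : List ℕ) : ℕ :=
  sInf {s | ∃ u v : List ℕ, v.length = s ∧ TwoMoveEquiv w (u ++ ascWord n ++ v)}

/-- `w'` is a `D`-contraction `C_D(w) = i_D^- (i_D^+ - 1)` of `w ∈ Σ_{n+1}`. -/
def IsContractionD (n : ℕ) (w w' : List ℕ) : Prop :=
  ∃ u v : List ℕ, TwoMoveEquiv w (u ++ descWord n ++ v) ∧ w' = u ++ v.map (· - 1)

/-- `w'` is an `A`-contraction `C_A(w) = (i_A^- - 1) i_A^+` of `w ∈ Σ_{n+1}`. -/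
def IsContractionA (n : ℕ) (w w' : List ℕ) : Prop :=
  ∃ u v : List ℕ, TwoMoveEquiv w (u ++ ascWord n ++ v) ∧ w' = u.map (· - 1) ++ v

/-- the `D`-extension `E_D(s) : Σ_{n+1} → Σ_{n+2}`,
`i = i^-(s) i^+(s) ↦ i^-(s) D_{n+1} (i^+(s) + 1)` where `|i^+(s)| = s`. -/
def extD (n : ℕ) (s : ℕ) (w : List ℕ) : List ℕ :=
  w.take (w.length - s) ++ descWord (n + 1) ++ (w.drop (w.length - s)).map (· + 1)

/-- the `A`-extension `E_A(s) : Σ_{n+1} → Σ_{n+2}`,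
`i = i^-(s) i^+(s) ↦ (i^-(s) + 1) A_{n+1} i^+(s)`. -/
def extA (n : ℕ) (s : ℕ) (w : List ℕ) : List ℕ :=
  (w.take (w.length - s)).map (· + 1) ++ ascWord (n + 1) ++ w.drop (w.length - s)

/-- there exists `(σ_1, …, σ_n) ∈ {A, D}^n` (here `true = D`, `false = A`) such that
`ind_{σ_k}(C_{σ_{k+1}} ∘ ⋯ ∘ C_{σ_n}(i)) = 0` for all `k = n, …, 1`. -/
def SimplicialWord (n : ℕ) (w : List ℕ) : Prop :=
  ∃ (σ : ℕ → Bool) (c : ℕ → List ℕ), c n = w ∧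
    ∀ k, 1 ≤ k → k ≤ n →
      (if σ k then IsContractionD k (c k) (c (k - 1)) ∧ indD k (c k) = 0
       else IsContractionA k (c k) (c (k - 1)) ∧ indA k (c k) = 0)


/-- the `D`-coindex `coind_D(i) = |i_D^-|`. -/
def coindD (n : ℕ) (w : List ℕ) : ℕ :=
  sInf {s | ∃ u v : List ℕ, u.length = s ∧ TwoMoveEquiv w (u ++ descWord n ++ v)}

/-- the `A`-coindex `coind_A(i) = |i_A^-|`. -/
def coindA (n : ℕ) (w : List ℕ) : ℕ :=
  sInf {s | ∃ u v : List ℕ, u.length = s ∧ TwoMoveEquiv w (u ++ ascWord n ++ v)}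

/-- the `a`-th (0-based) coordinate of a point of `ℝ^N`. -/
def entry (n : ℕ) (t : Fin (Dim n) → ℝ) (a : ℕ) : ℝ :=
  if h : a < Dim n then t ⟨a, h⟩ else 0

/-- the product of cones
`t_1 ≥ 0`, `t_2 ≥ t_3 ≥ 0`, …, `t_{N-n+1} ≥ ⋯ ≥ t_N ≥ 0` (in `ℝ^N`, 1-based:
for `k = 1, …, n` the chain `t_{k(k-1)/2+1} ≥ ⋯ ≥ t_{k(k-1)/2+k} ≥ 0`). -/
def chainCone (n : ℕ) : Set (Fin (Dim n) → ℝ) :=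
  {t | ∀ k j, 1 ≤ k → k ≤ n → 1 ≤ j → j ≤ k →
    (if j = k then 0 else entry n t (k * (k - 1) / 2 + j)) ≤
      entry n t (k * (k - 1) / 2 + (j - 1))}


/-! ### Words and permutations -/

theorem sTrans_apply (a x : ℕ) :
    sTrans a x = if x = a then a + 1 else if x = a + 1 then a else x := by
  unfold sTrans; rw [Equiv.swap_apply_def]

theorem sTrans_left (a : ℕ) : sTrans a a = a + 1 := by simp [sTrans_apply]

theorem sTrans_right (a : ℕ) : sTrans a (a + 1) = a := by simp [sTrans_apply]

theorem sTrans_ne {a x : ℕ} (h1 : x ≠ a) (h2 : x ≠ a + 1) : sTrans a x = x := by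
  simp [sTrans_apply, h1, h2]

theorem sTrans_up (a : ℕ) : sTrans a (a + 1 + 1) = a + 1 + 1 :=
  sTrans_ne (by omega) (by omega)

theorem sTrans_down (a : ℕ) : sTrans (a + 1) a = a :=
  sTrans_ne (by omega) (by omega)

theorem sTrans_sTrans (a x : ℕ) : sTrans a (sTrans a x) = x := by
  unfold sTrans; simp

theorem sTrans_mul_self (a : ℕ) : sTrans a * sTrans a = 1 := by
  unfold sTrans; simp

theorem wordProd_nil : wordProd [] = 1 := rfl

theorem wordProd_append (u v : List ℕ) : wordProd (u ++ v) = wordProd u * wordProd v := by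
  simp [wordProd]

theorem wordProd_cons (a : ℕ) (v : List ℕ) : wordProd (a :: v) = sTrans a * wordProd v := by
  simp [wordProd]

theorem wordProd_concat (u : List ℕ) (a : ℕ) : wordProd (u ++ [a]) = wordProd u * sTrans a := by
  simp [wordProd]

theorem sTrans_comm {a b : ℕ} (h : a + 1 < b ∨ b + 1 < a) :
    sTrans a * sTrans b = sTrans b * sTrans a := by
  ext x
  simp only [Equiv.Perm.mul_apply, sTrans_apply]
  split_ifs <;> omega

theorem sTrans_braid {a b : ℕ} (h : b = a + 1 ∨ a = b + 1) :
    sTrans a * (sTrans b * sTrans a) = sTrans b * (sTrans a * sTrans b) := by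
  wlog hb : b = a + 1 with H
  · exact (H h.symm (by omega)).symm
  subst hb
  ext x
  simp only [Equiv.Perm.mul_apply]
  by_cases h1 : x = a
  · subst h1; simp only [sTrans_left, sTrans_right, sTrans_up, sTrans_down]
  by_cases h2 : x = a + 1
  · subst h2; simp only [sTrans_left, sTrans_right, sTrans_up, sTrans_down]
  by_cases h3 : x = a + 1 + 1
  · subst h3; simp only [sTrans_left, sTrans_right, sTrans_up, sTrans_down]
  rw [sTrans_ne h1 h2, sTrans_ne h2 h3, sTrans_ne h1 h2, sTrans_ne h2 h3]

/-- the inversions of `σ` within `{1, …, n+1}`. -/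
def invSet (n : ℕ) (σ : Equiv.Perm ℕ) : Finset (ℕ × ℕ) :=
  ((Finset.Icc 1 (n + 1)) ×ˢ (Finset.Icc 1 (n + 1))).filter
    (fun p => p.1 < p.2 ∧ σ p.2 < σ p.1)

/-- the inversion number. -/
def invNum (n : ℕ) (σ : Equiv.Perm ℕ) : ℕ := (invSet n σ).card

theorem mem_invSet {n : ℕ} {σ : Equiv.Perm ℕ} {p : ℕ × ℕ} :
    p ∈ invSet n σ ↔ (1 ≤ p.1 ∧ p.1 ≤ n + 1) ∧ (1 ≤ p.2 ∧ p.2 ≤ n + 1) ∧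
      p.1 < p.2 ∧ σ p.2 < σ p.1 := by
  simp [invSet, and_assoc]

theorem sTrans_lt {a i j : ℕ} (hij : i < j) (h : ¬ (i = a ∧ j = a + 1)) :
    sTrans a i < sTrans a j := by
  simp only [sTrans_apply]
  split_ifs <;> omega

theorem sTrans_mem {n a i : ℕ} (ha : 1 ≤ a) (han : a ≤ n) (h1 : 1 ≤ i) (h2 : i ≤ n + 1) :
    1 ≤ sTrans a i ∧ sTrans a i ≤ n + 1 := by
  simp only [sTrans_apply]
  split_ifs <;> omega

theorem invNum_mul {n a : ℕ} (ha : 1 ≤ a) (han : a ≤ n) {σ : Equiv.Perm ℕ}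
    (h : σ a < σ (a + 1)) : invNum n (σ * sTrans a) = invNum n σ + 1 := by
  have hmem : (a, a + 1) ∈ invSet n (σ * sTrans a) := by
    rw [mem_invSet]
    refine ⟨by simp; omega, by simp; omega, by simp, ?_⟩
    simp [Equiv.Perm.mul_apply, sTrans_apply, h]
  unfold invNum
  rw [← Finset.card_erase_add_one hmem]
  congr 1
  refine Finset.card_nbij' (fun p => (sTrans a p.1, sTrans a p.2))
    (fun p => (sTrans a p.1, sTrans a p.2)) ?_ ?_ ?_ ?_
  · rintro ⟨i, j⟩ hp
    simp only [Finset.mem_coe, Finset.mem_erase, mem_invSet, Equiv.Perm.mul_apply, ne_eq,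
      Prod.mk.injEq] at hp ⊢
    obtain ⟨hne, hi, hj, hlt, hs⟩ := hp
    exact ⟨sTrans_mem ha han hi.1 hi.2, sTrans_mem ha han hj.1 hj.2, sTrans_lt hlt hne, hs⟩
  · rintro ⟨i, j⟩ hp
    simp only [Finset.mem_coe, Finset.mem_erase, mem_invSet, Equiv.Perm.mul_apply, ne_eq,
      Prod.mk.injEq] at hp ⊢
    obtain ⟨hi, hj, hlt, hs⟩ := hp
    have hne : ¬ (i = a ∧ j = a + 1) := by
      rintro ⟨rfl, rfl⟩; omega
    refine ⟨?_, sTrans_mem ha han hi.1 hi.2, sTrans_mem ha han hj.1 hj.2, sTrans_lt hlt hne, ?_⟩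
    · simp only [sTrans_apply]
      split_ifs <;> omega
    · simpa [sTrans_sTrans] using hs
  · rintro ⟨i, j⟩ _; simp [sTrans_sTrans]
  · rintro ⟨i, j⟩ _; simp [sTrans_sTrans]

theorem invNum_mul_desc {n a : ℕ} (ha : 1 ≤ a) (han : a ≤ n) {σ : Equiv.Perm ℕ}
    (h : σ (a + 1) < σ a) : invNum n σ = invNum n (σ * sTrans a) + 1 := by
  have := invNum_mul (n := n) (σ := σ * sTrans a) ha han
    (by simpa [Equiv.Perm.mul_apply, sTrans_apply] using h)
  rwa [mul_assoc, sTrans_mul_self, mul_one] at this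

theorem invNum_one (n : ℕ) : invNum n 1 = 0 := by
  unfold invNum
  rw [Finset.card_eq_zero, Finset.eq_empty_iff_forall_notMem]
  intro p hp
  rw [mem_invSet] at hp
  simp at hp; omega

/-- all crossings go in the increasing direction (the word is reduced). -/
def Good (w : List ℕ) : Prop :=
  ∀ u a v, w = u ++ a :: v → wordProd u a < wordProd u (a + 1)

theorem good_nil : Good [] := by
  intro u a v h; simp at h

theorem good_concat {w : List ℕ} {a : ℕ} :
    Good (w ++ [a]) ↔ Good w ∧ wordProd w a < wordProd w (a + 1) := by
  constructor
  · intro h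
    refine ⟨fun u b v huv => h u b (v ++ [a]) (by simp [huv]), h w a [] rfl⟩
  · rintro ⟨h1, h2⟩ u b v huv
    rcases List.eq_nil_or_concat v with rfl | ⟨v', c, rfl⟩
    · have := List.append_inj' huv rfl
      obtain ⟨rfl, hc⟩ := this
      simp at hc; subst hc; exact h2
    · have : w ++ [a] = (u ++ b :: v') ++ [c] := by rw [huv]; simp
      have := List.append_inj' this rfl
      exact h1 u b v' this.1

theorem good_left {u v : List ℕ} (h : Good (u ++ v)) : Good u := by
  intro x a y hxy
  exact h x a (y ++ v) (by simp [hxy])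

theorem invNum_le {n : ℕ} {w : List ℕ} (hw : ∀ a ∈ w, 1 ≤ a ∧ a ≤ n) :
    invNum n (wordProd w) ≤ w.length ∧
      (invNum n (wordProd w) = w.length ↔ Good w) := by
  induction w using List.reverseRecOn with
  | nil => simp [wordProd_nil, invNum_one, good_nil]
  | append_singleton w a ih =>
    have hw' : ∀ b ∈ w, 1 ≤ b ∧ b ≤ n := fun b hb => hw b (by simp [hb])
    obtain ⟨ha, han⟩ := hw a (by simp)
    obtain ⟨h1, h2⟩ := ih hw'
    rw [wordProd_concat, good_concat, List.length_append, List.length_singleton]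
    rcases lt_trichotomy (wordProd w a) (wordProd w (a + 1)) with h | h | h
    · rw [invNum_mul ha han h]
      refine ⟨by omega, ?_⟩
      rw [← h2]; constructor
      · intro h3; exact ⟨by omega, h⟩
      · intro h3; omega
    · exfalso; have := (wordProd w).injective h; omega
    · have := invNum_mul_desc ha han h
      refine ⟨by omega, ?_⟩
      constructor
      · intro h3; omega
      · intro h3; omega

theorem Good.invNum_eq {n : ℕ} {w : List ℕ} (h : Good w) (hw : ∀ a ∈ w, 1 ≤ a ∧ a ≤ n) :
    invNum n (wordProd w) = w.length := (invNum_le hw).2.2 h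

/-- `σ` fixes everything outside `{1, …, n+1}`. -/
def FixOut (n : ℕ) (σ : Equiv.Perm ℕ) : Prop := ∀ x, ¬ (1 ≤ x ∧ x ≤ n + 1) → σ x = x

theorem FixOut.mul {n : ℕ} {σ τ : Equiv.Perm ℕ} (h1 : FixOut n σ) (h2 : FixOut n τ) :
    FixOut n (σ * τ) := by
  intro x hx
  rw [Equiv.Perm.mul_apply, h2 x hx, h1 x hx]

theorem fixOut_sTrans {n a : ℕ} (ha : 1 ≤ a) (han : a ≤ n) : FixOut n (sTrans a) := by
  intro x hx
  rw [sTrans_apply]; split_ifs <;> omega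

theorem fixOut_word {n : ℕ} {w : List ℕ} (hw : ∀ a ∈ w, 1 ≤ a ∧ a ≤ n) :
    FixOut n (wordProd w) := by
  induction w with
  | nil => intro x _; rfl
  | cons a w ih =>
    rw [wordProd_cons]
    obtain ⟨ha, han⟩ := hw a (by simp)
    exact (fixOut_sTrans ha han).mul (ih (fun b hb => hw b (by simp [hb])))

theorem eq_one_of_no_descent {n : ℕ} {σ : Equiv.Perm ℕ} (hσ : FixOut n σ)
    (h : ∀ a, 1 ≤ a → a ≤ n → σ a < σ (a + 1)) : σ = 1 := by
  have hmaps : ∀ x, 1 ≤ x → x ≤ n + 1 → 1 ≤ σ x ∧ σ x ≤ n + 1 := by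
    intro x h1 h2
    by_contra hc
    have := hσ _ hc
    have := σ.injective this
    omega
  have hmono : StrictMono σ := by
    apply strictMono_nat_of_lt_succ
    intro a
    by_cases ha0 : a = 0
    · subst ha0
      have h0 := hσ 0 (by omega)
      have := hmaps 1 le_rfl (by omega)
      simp only [zero_add]; omega
    · by_cases han : a ≤ n
      · exact h a (by omega) han
      · have h2 := hσ (a + 1) (by omega)
        by_cases han' : a = n + 1
        · have := hmaps a (by omega) (by omega)
          omega
        · have := hσ a (by omega)
          omega
  let e : ℕ ≃o ℕ := hmono.orderIsoOfSurjective _ σ.surjective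
  have he : e = OrderIso.refl ℕ := Subsingleton.elim _ _
  ext x
  have : e x = x := by rw [he]; rfl
  simpa [e] using this

theorem exists_good {n : ℕ} (m : ℕ) : ∀ σ : Equiv.Perm ℕ, FixOut n σ → invNum n σ = m →
    ∃ w, Good w ∧ (∀ a ∈ w, 1 ≤ a ∧ a ≤ n) ∧ wordProd w = σ := by
  induction m with
  | zero =>
    intro σ hσ h0
    have : σ = 1 := by
      apply eq_one_of_no_descent hσ
      intro a ha han
      rcases lt_trichotomy (σ a) (σ (a + 1)) with h | h | h
      · exact h
      · have := σ.injective h; omega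
      · have := invNum_mul_desc ha han h; omega
    exact ⟨[], good_nil, by simp, by rw [this]; rfl⟩
  | succ m ih =>
    intro σ hσ hm
    by_cases hex : ∃ a, 1 ≤ a ∧ a ≤ n ∧ σ (a + 1) < σ a
    · obtain ⟨a, ha, han, hd⟩ := hex
      have h1 := invNum_mul_desc ha han hd
      obtain ⟨w, hw, hl, hp⟩ := ih (σ * sTrans a) (hσ.mul (fixOut_sTrans ha han)) (by omega)
      refine ⟨w ++ [a], ?_, ?_, ?_⟩
      · rw [good_concat]
        refine ⟨hw, ?_⟩
        rw [hp]
        simpa [Equiv.Perm.mul_apply, sTrans_apply] using hd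
      · intro b hb
        simp only [List.mem_append, List.mem_singleton] at hb
        rcases hb with hb | rfl
        · exact hl b hb
        · exact ⟨ha, han⟩
      · rw [wordProd_concat, hp, mul_assoc, sTrans_mul_self, mul_one]
    · exfalso
      have : σ = 1 := by
        apply eq_one_of_no_descent hσ
        intro a ha han
        rcases lt_trichotomy (σ a) (σ (a + 1)) with h | h | h
        · exact h
        · have := σ.injective h; omega
        · exact absurd ⟨a, ha, han, h⟩ hex
      rw [this, invNum_one] at hm
      omega

/-- a braid move. -/
def BraidStep (w w' : List ℕ) : Prop :=
  (∃ u v a b, (a + 1 < b ∨ b + 1 < a) ∧ w = u ++ [a, b] ++ v ∧ w' = u ++ [b, a] ++ v) ∨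
  (∃ u v a b, (b = a + 1 ∨ a = b + 1) ∧ w = u ++ [a, b, a] ++ v ∧ w' = u ++ [b, a, b] ++ v)

/-- braid equivalence. -/
def BraidEquiv : List ℕ → List ℕ → Prop := Relation.ReflTransGen BraidStep

theorem BraidStep.symm {w w' : List ℕ} (h : BraidStep w w') : BraidStep w' w := by
  rcases h with ⟨u, v, a, b, h, h1, h2⟩ | ⟨u, v, a, b, h, h1, h2⟩
  · exact Or.inl ⟨u, v, b, a, h.symm, h2, h1⟩
  · exact Or.inr ⟨u, v, b, a, h.symm, h2, h1⟩

theorem BraidEquiv.symm {w w' : List ℕ} (h : BraidEquiv w w') : BraidEquiv w' w := by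
  induction h with
  | refl => exact Relation.ReflTransGen.refl
  | tail _ hs ih => exact Relation.ReflTransGen.head hs.symm ih

theorem BraidEquiv.trans {w w' w'' : List ℕ} (h : BraidEquiv w w') (h' : BraidEquiv w' w'') :
    BraidEquiv w w'' := Relation.ReflTransGen.trans h h'

theorem BraidEquiv.concat {w w' : List ℕ} (h : BraidEquiv w w') (c : List ℕ) :
    BraidEquiv (w ++ c) (w' ++ c) := by
  refine Relation.ReflTransGen.lift (p := BraidStep) (fun x => x ++ c) ?_ _ _ h
  rintro x y (⟨u, v, a, b, h, h1, h2⟩ | ⟨u, v, a, b, h, h1, h2⟩)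
  · exact Or.inl ⟨u, v ++ c, a, b, h, by simp [h1], by simp [h2]⟩
  · exact Or.inr ⟨u, v ++ c, a, b, h, by simp [h1], by simp [h2]⟩

theorem good_concat_desc {w : List ℕ} {a : ℕ} (h : Good (w ++ [a])) :
    wordProd (w ++ [a]) (a + 1) < wordProd (w ++ [a]) a := by
  have := (good_concat.1 h).2
  rw [wordProd_concat]
  simpa [Equiv.Perm.mul_apply, sTrans_apply] using this

theorem good_concat_word {v : List ℕ} {σ : Equiv.Perm ℕ} {a : ℕ}
    (hv : Good v) (hp : wordProd v = σ * sTrans a) (hd : σ (a + 1) < σ a) :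
    Good (v ++ [a]) ∧ wordProd (v ++ [a]) = σ := by
  constructor
  · rw [good_concat]; refine ⟨hv, ?_⟩
    rw [hp]; simpa [Equiv.Perm.mul_apply, sTrans_apply] using hd
  · rw [wordProd_concat, hp, mul_assoc, sTrans_mul_self, mul_one]

theorem matsumoto {n : ℕ} (m : ℕ) : ∀ w w' : List ℕ, w.length = m → Good w → Good w' →
    (∀ a ∈ w, 1 ≤ a ∧ a ≤ n) → (∀ a ∈ w', 1 ≤ a ∧ a ≤ n) → wordProd w = wordProd w' →
    BraidEquiv w w' := by
  induction m with
  | zero =>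
    intro w w' hlen hg hg' hl hl' hp
    have h1 := hg.invNum_eq hl
    have h2 := hg'.invNum_eq hl'
    rw [← hp] at h2
    have hw : w = [] := List.length_eq_zero_iff.1 hlen
    have hw' : w' = [] := List.length_eq_zero_iff.1 (by omega)
    rw [hw, hw']; exact Relation.ReflTransGen.refl
  | succ m ih =>
    intro w w' hlen hg hg' hl hl' hp
    have h1 := hg.invNum_eq hl
    have h2 := hg'.invNum_eq hl'
    have hlen' : w'.length = m + 1 := by rw [← hp] at h2; omega
    rcases List.eq_nil_or_concat w with rfl | ⟨u, a, rfl⟩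
    · simp at hlen
    rcases List.eq_nil_or_concat w' with rfl | ⟨u', b, rfl⟩
    · simp at hlen'
    simp only [List.concat_eq_append] at *
    obtain ⟨ha, han⟩ := hl a (by simp)
    obtain ⟨hb, hbn⟩ := hl' b (by simp)
    have hul : ∀ c ∈ u, 1 ≤ c ∧ c ≤ n := fun c hc => hl c (by simp [hc])
    have hul' : ∀ c ∈ u', 1 ≤ c ∧ c ≤ n := fun c hc => hl' c (by simp [hc])
    have hda := good_concat_desc hg
    have hdb := good_concat_desc hg'
    set σ := wordProd (u ++ [a]) with hσ
    rw [← hp] at hdb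
    have hpu : wordProd u = σ * sTrans a := by
      rw [hσ, wordProd_concat, mul_assoc, sTrans_mul_self, mul_one]
    have hpu' : wordProd u' = σ * sTrans b := by
      rw [hp, wordProd_concat, mul_assoc, sTrans_mul_self, mul_one]
    have hulen : u.length = m := by simpa using hlen
    have hulen' : u'.length = m := by simpa using hlen'
    have hfo : FixOut n σ := fixOut_word hl
    by_cases hab : a = b
    · subst hab
      exact (ih u u' hulen (good_concat.1 hg).1 (good_concat.1 hg').1 hul hul'
        (by rw [hpu, hpu'])).concat [a]
    by_cases hfar : a + 1 < b ∨ b + 1 < a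
    · -- commuting letters
      have hfo2 : FixOut n (σ * sTrans a * sTrans b) :=
        (hfo.mul (fixOut_sTrans ha han)).mul (fixOut_sTrans hb hbn)
      obtain ⟨v, hv, hvl, hvp⟩ := exists_good _ _ hfo2 rfl
      have e1 := good_concat_word (a := b) hv (σ := σ * sTrans a) hvp (by
        simp only [Equiv.Perm.mul_apply, sTrans_apply]
        split_ifs <;> first | omega | exact hdb)
      have e2 := good_concat_word (a := a) hv (σ := σ * sTrans b)
        (by rw [hvp, mul_assoc, mul_assoc, sTrans_comm hfar]) (by
        simp only [Equiv.Perm.mul_apply, sTrans_apply]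
        split_ifs <;> first | omega | exact hda)
      have k1 : BraidEquiv u (v ++ [b]) := ih u _ hulen (good_concat.1 hg).1 e1.1 hul
        (by intro c hc; simp only [List.mem_append, List.mem_singleton] at hc
            rcases hc with hc | rfl
            · exact hvl c hc
            · exact ⟨hb, hbn⟩) (by rw [hpu, e1.2])
      have k2 : BraidEquiv u' (v ++ [a]) := ih u' _ hulen' (good_concat.1 hg').1 e2.1 hul'
        (by intro c hc; simp only [List.mem_append, List.mem_singleton] at hc
            rcases hc with hc | rfl
            · exact hvl c hc
            · exact ⟨ha, han⟩) (by rw [hpu', e2.2])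
      refine (k1.concat [a]).trans (BraidEquiv.trans ?_ (k2.concat [b]).symm)
      exact Relation.ReflTransGen.single (Or.inl ⟨v, [], b, a, hfar.symm, by simp, by simp⟩)
    · have hadj : b = a + 1 ∨ a = b + 1 := by omega
      have hfo2 : FixOut n (σ * sTrans a * sTrans b * sTrans a) :=
        ((hfo.mul (fixOut_sTrans ha han)).mul (fixOut_sTrans hb hbn)).mul (fixOut_sTrans ha han)
      obtain ⟨v, hv, hvl, hvp⟩ := exists_good _ _ hfo2 rfl
      have hvp' : wordProd v = σ * sTrans b * sTrans a * sTrans b := by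
        rw [hvp]; simp only [mul_assoc]; rw [sTrans_braid hadj]
      have e1 := good_concat_word (a := a) hv (σ := σ * sTrans a * sTrans b) hvp (by
        rcases hadj with rfl | rfl
        all_goals
          simp only [Equiv.Perm.mul_apply, sTrans_left, sTrans_right, sTrans_up, sTrans_down]
          first | exact hdb | exact hda)
      have e1' := good_concat_word (a := b) e1.1 (σ := σ * sTrans a) e1.2 (by
        rcases hadj with rfl | rfl
        all_goals
          simp only [Equiv.Perm.mul_apply, sTrans_left, sTrans_right, sTrans_up, sTrans_down]
          first | exact hdb.trans hda | exact hda.trans hdb)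
      have e2 := good_concat_word (a := b) hv (σ := σ * sTrans b * sTrans a) hvp' (by
        rcases hadj with rfl | rfl
        all_goals
          simp only [Equiv.Perm.mul_apply, sTrans_left, sTrans_right, sTrans_up, sTrans_down]
          first | exact hdb | exact hda)
      have e2' := good_concat_word (a := a) e2.1 (σ := σ * sTrans b) e2.2 (by
        rcases hadj with rfl | rfl
        all_goals
          simp only [Equiv.Perm.mul_apply, sTrans_left, sTrans_right, sTrans_up, sTrans_down]
          first | exact hdb.trans hda | exact hda.trans hdb)
      have k1 : BraidEquiv u (v ++ [a] ++ [b]) := ih u _ hulen (good_concat.1 hg).1 e1'.1 hul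
        (by intro c hc; simp only [List.mem_append, List.mem_singleton] at hc
            rcases hc with (hc | rfl) | rfl
            · exact hvl c hc
            · exact ⟨ha, han⟩
            · exact ⟨hb, hbn⟩) (by rw [hpu, e1'.2])
      have k2 : BraidEquiv u' (v ++ [b] ++ [a]) := ih u' _ hulen' (good_concat.1 hg').1 e2'.1 hul'
        (by intro c hc; simp only [List.mem_append, List.mem_singleton] at hc
            rcases hc with (hc | rfl) | rfl
            · exact hvl c hc
            · exact ⟨hb, hbn⟩
            · exact ⟨ha, han⟩) (by rw [hpu', e2'.2])
      refine (k1.concat [a]).trans (BraidEquiv.trans ?_ (k2.concat [b]).symm)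
      exact Relation.ReflTransGen.single (Or.inr ⟨v, [], a, b, hadj, by simp, by simp⟩)


/-! ### The base word `1, 21, 321, …` -/

theorem Dim_succ (n : ℕ) : Dim (n + 1) = Dim n + (n + 1) := by
  unfold Dim
  have : (n + 1) * (n + 1 + 1) = n * (n + 1) + (n + 1) * 2 := by ring
  rw [this, Nat.add_mul_div_right _ _ (by norm_num)]

/-- the first `i` letters of `(n+1, n, …, 1)`. -/
def descTake (n i : ℕ) : List ℕ := (List.range i).map (fun j => n + 1 - j)

/-- the base word. -/
def baseWord : ℕ → List ℕ
  | 0 => []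
  | n + 1 => baseWord n ++ descTake n (n + 1)

theorem baseWord_length (n : ℕ) : (baseWord n).length = Dim n := by
  induction n with
  | zero => rfl
  | succ n ih => rw [Dim_succ, ← ih]; simp [baseWord, descTake]

theorem baseWord_letters (n : ℕ) : ∀ a ∈ baseWord n, 1 ≤ a ∧ a ≤ n := by
  induction n with
  | zero => simp [baseWord]
  | succ n ih =>
    intro a ha
    simp only [baseWord, descTake, List.mem_append, List.mem_map, List.mem_range] at ha
    rcases ha with ha | ⟨j, hj, rfl⟩
    · have := ih a ha; omega
    · omega

theorem wordProd_descTake (n i : ℕ) (hi : i ≤ n + 1) (x : ℕ) :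
    wordProd (descTake n i) x =
      if x = n + 2 - i then n + 2 else if n + 2 - i < x ∧ x ≤ n + 2 then x - 1 else x := by
  induction i generalizing x with
  | zero =>
    simp only [descTake, List.range_zero, List.map_nil, wordProd_nil, Equiv.Perm.one_apply]
    split_ifs <;> omega
  | succ i ih =>
    have : descTake n (i + 1) = descTake n i ++ [n + 1 - i] := by
      simp [descTake, List.range_succ]
    rw [this, wordProd_concat, Equiv.Perm.mul_apply, ih (by omega), sTrans_apply]
    split_ifs <;> omega

theorem longestPerm_apply (n k : ℕ) :
    longestPerm n k = if 1 ≤ k ∧ k ≤ n + 1 then n + 2 - k else k := rfl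

theorem wordProd_baseWord (n : ℕ) : wordProd (baseWord n) = longestPerm n := by
  induction n with
  | zero =>
    ext x
    rw [longestPerm_apply]
    simp only [baseWord, wordProd_nil, Equiv.Perm.one_apply]
    split_ifs <;> omega
  | succ n ih =>
    ext x
    rw [baseWord, wordProd_append, ih, Equiv.Perm.mul_apply, wordProd_descTake _ _ le_rfl,
      longestPerm_apply, longestPerm_apply]
    split_ifs <;> omega

theorem wireX_def (w : List ℕ) (j : ℕ) :
    wireX w (j + 1) = wordProd (w.take j) (w.getD j 0) := rfl

theorem wireY_def (w : List ℕ) (j : ℕ) :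
    wireY w (j + 1) = wordProd (w.take j) (w.getD j 0 + 1) := rfl

theorem letterAt_def (w : List ℕ) (j : ℕ) : letterAt w (j + 1) = w.getD j 0 := rfl

theorem letterAt_append_left {u v : List ℕ} {j : ℕ} (h : j < u.length) :
    letterAt (u ++ v) (j + 1) = letterAt u (j + 1) := by
  rw [letterAt_def, letterAt_def, List.getD_append _ _ _ _ h]

theorem letterAt_append_right (u v : List ℕ) (i : ℕ) :
    letterAt (u ++ v) (u.length + i + 1) = letterAt v (i + 1) := by
  rw [letterAt_def, letterAt_def, List.getD_append_right _ _ _ _ (by omega)]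
  simp

theorem wireX_append_left {u v : List ℕ} {j : ℕ} (h : j < u.length) :
    wireX (u ++ v) (j + 1) = wireX u (j + 1) := by
  rw [wireX_def, wireX_def, List.getD_append _ _ _ _ h, List.take_append_of_le_length h.le]

theorem wireY_append_left {u v : List ℕ} {j : ℕ} (h : j < u.length) :
    wireY (u ++ v) (j + 1) = wireY u (j + 1) := by
  rw [wireY_def, wireY_def, List.getD_append _ _ _ _ h, List.take_append_of_le_length h.le]

theorem wireX_append_right (u v : List ℕ) (i : ℕ) :
    wireX (u ++ v) (u.length + i + 1) = wordProd u (wireX v (i + 1)) := by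
  rw [wireX_def, wireX_def, List.getD_append_right _ _ _ _ (by omega), List.take_length_add_append,
    wordProd_append, Equiv.Perm.mul_apply]
  simp

theorem wireY_append_right (u v : List ℕ) (i : ℕ) :
    wireY (u ++ v) (u.length + i + 1) = wordProd u (wireY v (i + 1)) := by
  rw [wireY_def, wireY_def, List.getD_append_right _ _ _ _ (by omega), List.take_length_add_append,
    wordProd_append, Equiv.Perm.mul_apply]
  simp

theorem descTake_take {n i m : ℕ} (h : i ≤ m) : (descTake n m).take i = descTake n i := by
  simp [descTake, ← List.map_take, List.take_range, h]

theorem descTake_getD {n i m : ℕ} (h : i < m) : (descTake n m).getD i 0 = n + 1 - i := by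
  simp [descTake, h]

theorem base_wireX {n i : ℕ} (h : i < n + 1) :
    wireX (baseWord (n + 1)) (Dim n + i + 1) = i + 1 := by
  rw [baseWord, ← baseWord_length n, wireX_append_right, wordProd_baseWord, wireX_def,
    descTake_take h.le, descTake_getD h, wordProd_descTake _ _ h.le, longestPerm_apply]
  split_ifs <;> omega

theorem base_wireY {n i : ℕ} (h : i < n + 1) :
    wireY (baseWord (n + 1)) (Dim n + i + 1) = n + 2 := by
  rw [baseWord, ← baseWord_length n, wireY_append_right, wordProd_baseWord, wireY_def,
    descTake_take h.le, descTake_getD h, wordProd_descTake _ _ h.le, longestPerm_apply]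
  split_ifs <;> omega

theorem base_wireX_left {n j : ℕ} (h : j < Dim n) :
    wireX (baseWord (n + 1)) (j + 1) = wireX (baseWord n) (j + 1) :=
  wireX_append_left (by rwa [baseWord_length])

theorem base_wireY_left {n j : ℕ} (h : j < Dim n) :
    wireY (baseWord (n + 1)) (j + 1) = wireY (baseWord n) (j + 1) :=
  wireY_append_left (by rwa [baseWord_length])

theorem base_letter {n i : ℕ} (h : i < n + 1) :
    letterAt (baseWord (n + 1)) (Dim n + i + 1) = n + 1 - i := by
  rw [baseWord, ← baseWord_length n, letterAt_append_right, letterAt_def, descTake_getD h]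

theorem base_letter_left {n j : ℕ} (h : j < Dim n) :
    letterAt (baseWord (n + 1)) (j + 1) = letterAt (baseWord n) (j + 1) :=
  letterAt_append_left (by rwa [baseWord_length])

theorem base_wires {n j : ℕ} (h : j < Dim n) :
    1 ≤ wireX (baseWord n) (j + 1) ∧ wireX (baseWord n) (j + 1) < wireY (baseWord n) (j + 1) ∧
      wireY (baseWord n) (j + 1) ≤ n + 1 := by
  induction n generalizing j with
  | zero => simp [Dim] at h
  | succ n ih =>
    by_cases hj : j < Dim n
    · rw [base_wireX_left hj, base_wireY_left hj]
      have := ih hj; omega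
    · obtain ⟨i, rfl⟩ := Nat.exists_eq_add_of_le (not_lt.1 hj)
      rw [Dim_succ] at h
      rw [base_wireX (by omega), base_wireY (by omega)]
      omega

theorem good_iff (w : List ℕ) :
    Good w ↔ ∀ j < w.length, wireX w (j + 1) < wireY w (j + 1) := by
  constructor
  · intro h j hj
    rw [wireX_def, wireY_def]
    refine h (w.take j) (w.getD j 0) (w.drop (j + 1)) ?_
    rw [List.getD_eq_getElem _ _ hj, List.cons_getElem_drop_succ, List.take_append_drop]
  · intro h u a v huv
    have := h u.length (by rw [huv]; simp)
    rw [wireX_def, wireY_def, huv] at this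
    simpa using this

theorem good_baseWord (n : ℕ) : Good (baseWord n) := by
  rw [good_iff]
  intro j hj
  rw [baseWord_length] at hj
  exact (base_wires hj).2.1

theorem invNum_longest (n : ℕ) : invNum n (longestPerm n) = Dim n := by
  rw [← wordProd_baseWord, (good_baseWord n).invNum_eq (baseWord_letters n), baseWord_length]

theorem IsReduced.good {n : ℕ} {w : List ℕ} (h : IsReduced n w) : Good w := by
  obtain ⟨h1, h2, h3⟩ := h
  rw [← (invNum_le h2).2, h3, invNum_longest, h1]

theorem IsReduced.base {n : ℕ} {w : List ℕ} (h : IsReduced n w) : BraidEquiv (baseWord n) w :=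
  matsumoto _ _ _ rfl (good_baseWord n) h.good (baseWord_letters n) h.2.1
    (by rw [wordProd_baseWord, h.2.2])

theorem isReduced_base (n : ℕ) : IsReduced n (baseWord n) :=
  ⟨baseWord_length n, baseWord_letters n, wordProd_baseWord n⟩

theorem BraidStep.isReduced {n : ℕ} {w w' : List ℕ} (h : BraidStep w w') (hw : IsReduced n w) :
    IsReduced n w' := by
  obtain ⟨h1, h2, h3⟩ := hw
  rcases h with ⟨u, v, a, b, h, rfl, rfl⟩ | ⟨u, v, a, b, h, rfl, rfl⟩
  · refine ⟨by simpa using h1, fun c hc => h2 c ?_, ?_⟩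
    · simp only [List.mem_append, List.mem_cons, List.not_mem_nil] at hc ⊢; tauto
    · rw [← h3]; simp only [wordProd_append, wordProd_cons, wordProd_nil, mul_one]
      rw [sTrans_comm h]
  · refine ⟨by simpa using h1, fun c hc => h2 c ?_, ?_⟩
    · simp only [List.mem_append, List.mem_cons, List.not_mem_nil] at hc ⊢; tauto
    · rw [← h3]; simp only [wordProd_append, wordProd_cons, wordProd_nil, mul_one]
      rw [sTrans_braid h]

/-- induction principle over all reduced words. -/
theorem reduced_induction {n : ℕ} {Q : List ℕ → Prop} (hbase : Q (baseWord n))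
    (hstep : ∀ w w', IsReduced n w → IsReduced n w' → BraidStep w w' → Q w → Q w')
    {w : List ℕ} (hw : IsReduced n w) : Q w := by
  have key : ∀ w', BraidEquiv (baseWord n) w' → IsReduced n w' ∧ Q w' := by
    intro w' h
    induction h with
    | refl => exact ⟨isReduced_base n, hbase⟩
    | tail _ hs ih => exact ⟨hs.isReduced ih.1, hstep _ _ ih.1 (hs.isReduced ih.1) hs ih.2⟩
  exact (key w hw.base).2


/-! ### Local constraints at a crossing -/

/-- potential constraints at a crossing of the wires `p < q`: `fp, fq` are the values
just above the crossing, `gp, gq` the values just below it. -/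
def stepR (k : ℕ) (t : ℝ) (p q : ℕ) (fp fq gp gq : ℝ) : Prop :=
  if q ≤ k then fq ≤ gq ∧ fq ≤ gp + t ∧ fp ≤ gq - t
  else if k < p then gp ≤ fp ∧ gq ≤ fp + t ∧ gp ≤ fq - t
  else fp ≤ gp ∧ gq ≤ fq ∧ gq ≤ gp + t ∧ fp ≤ fq - t

/-- time function constraints at a crossing of the wires `p < q`. -/
def tR (k : ℕ) (e : ℝ) (p q : ℕ) (fp fq gp gq : ℝ) : Prop :=
  if q ≤ k then (gq + e ≤ fq ∧ gp + e ≤ fq) ∧ (gq + e ≤ fp ∧ gp + e ≤ fp)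
  else if k < p then (fq + e ≤ gq ∧ fp + e ≤ gq) ∧ (fq + e ≤ gp ∧ fp + e ≤ gp)
  else (gp + e ≤ fp ∧ fq + e ≤ fp) ∧ (gp + e ≤ gq ∧ fq + e ≤ gq)

theorem stepR_up {k p q : ℕ} {t fp fq gp gq : ℝ} (h : q ≤ k) :
    stepR k t p q fp fq gp gq ↔ (fq ≤ gq ∧ fq ≤ gp + t ∧ fp ≤ gq - t) := by simp [stepR, h]

theorem stepR_down {k p q : ℕ} {t fp fq gp gq : ℝ} (hpq : p < q) (h : k < p) :
    stepR k t p q fp fq gp gq ↔ (gp ≤ fp ∧ gq ≤ fp + t ∧ gp ≤ fq - t) := by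
  have : ¬ q ≤ k := by omega
  simp [stepR, h, this]

theorem stepR_mix {k p q : ℕ} {t fp fq gp gq : ℝ} (hp : p ≤ k) (hq : k < q) :
    stepR k t p q fp fq gp gq ↔ (fp ≤ gp ∧ gq ≤ fq ∧ gq ≤ gp + t ∧ fp ≤ fq - t) := by
  have : ¬ q ≤ k := by omega
  have : ¬ k < p := by omega
  simp [stepR, *]

theorem tR_up {k p q : ℕ} {e fp fq gp gq : ℝ} (h : q ≤ k) :
    tR k e p q fp fq gp gq ↔ ((gq + e ≤ fq ∧ gp + e ≤ fq) ∧ (gq + e ≤ fp ∧ gp + e ≤ fp)) := by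
  simp [tR, h]

theorem tR_down {k p q : ℕ} {e fp fq gp gq : ℝ} (hpq : p < q) (h : k < p) :
    tR k e p q fp fq gp gq ↔ ((fq + e ≤ gq ∧ fp + e ≤ gq) ∧ (fq + e ≤ gp ∧ fp + e ≤ gp)) := by
  have : ¬ q ≤ k := by omega
  simp [tR, h, this]

theorem tR_mix {k p q : ℕ} {e fp fq gp gq : ℝ} (hp : p ≤ k) (hq : k < q) :
    tR k e p q fp fq gp gq ↔ ((gp + e ≤ fp ∧ fq + e ≤ fp) ∧ (gp + e ≤ gq ∧ fq + e ≤ gq)) := by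
  have : ¬ q ≤ k := by omega
  have : ¬ k < p := by omega
  simp [tR, *]

theorem trop_cases {x y z x' y' z' : ℝ} (h1 : x' = max z (y - x)) (h2 : y' = x + z)
    (h3 : z' = min x (y - z)) :
    (x + z ≤ y ∧ x' = y - x ∧ y' = x + z ∧ z' = x) ∨
      (y ≤ x + z ∧ x' = z ∧ y' = x + z ∧ z' = y - z) := by
  rcases le_total (x + z) y with h | h
  · left; refine ⟨h, ?_, h2, ?_⟩
    · rw [h1, max_eq_right (by linarith)]
    · rw [h3, min_eq_left (by linarith)]
  · right; refine ⟨h, ?_, h2, ?_⟩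
    · rw [h1, max_eq_left (by linarith)]
    · rw [h3, min_eq_right (by linarith)]

set_option maxHeartbeats 1000000 in
/-- the local moves on potentials, from `(a, a+1, a)` to `(a+1, a, a+1)`. -/
theorem local_fwd {k A B C : ℕ} (hAB : A < B) (hBC : B < C) {x y z x' y' z' : ℝ}
    (h1 : x' = max z (y - x)) (h2 : y' = x + z) (h3 : z' = min x (y - z))
    {fA fB fC bA bB gA cC gB gC : ℝ}
    (n1 : stepR k x A B fA fB bA bB) (n2 : stepR k y A C bA fC gA cC)
    (n3 : stepR k z B C bB cC gB gC) :
    ∃ a b c, stepR k x' B C fB fC b c ∧ stepR k y' A C fA c a gC ∧ stepR k z' A B a b gA gB := by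
  have hAC := hAB.trans hBC
  have hc := trop_cases h1 h2 h3
  clear h1 h2 h3
  by_cases hkC : C ≤ k
  · rw [stepR_up (by omega)] at n1 n2 n3
    refine ⟨gB - z', min gB (gA + z'), min gC (gB - z' + y'), ?_⟩
    rw [stepR_up (by omega), stepR_up (by omega), stepR_up (by omega)]
    rcases hc with ⟨h, q1, q2, q3⟩ | ⟨h, q1, q2, q3⟩ <;>
    · refine ⟨⟨le_min ?_ ?_, ?_, ?_⟩, ⟨min_le_left _ _, min_le_right _ _, ?_⟩,
        ⟨min_le_left _ _, min_le_right _ _, ?_⟩⟩ <;>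
        (try rcases min_cases gB (gA + _) with ⟨e, -⟩ | ⟨e, -⟩ <;> rw [e]) <;>
        (try rcases min_cases gC (_) with ⟨e, -⟩ | ⟨e, -⟩ <;> rw [e]) <;> linarith
  by_cases hkB : B ≤ k
  · rw [stepR_up (by omega)] at n1
    rw [stepR_mix (by omega) (by omega)] at n2 n3
    refine ⟨gB - z', min gB (gA + z'), min fC (min gB (gA + z') + x'), ?_⟩
    rw [stepR_mix (by omega) (by omega), stepR_mix (by omega) (by omega), stepR_up (by omega)]
    rcases hc with ⟨h, q1, q2, q3⟩ | ⟨h, q1, q2, q3⟩ <;>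
    rcases min_cases gB (gA + _) with ⟨e, e'⟩ | ⟨e, e'⟩ <;> rw [e] <;>
    rcases min_cases fC _ with ⟨e2, e2'⟩ | ⟨e2, e2'⟩ <;> rw [e2] <;>
    refine ⟨⟨?_, ?_, ?_, ?_⟩, ⟨?_, ?_, ?_, ?_⟩, ?_, ?_, ?_⟩ <;> linarith
  by_cases hkA : A ≤ k
  · rw [stepR_down (by omega) (by omega)] at n3
    rw [stepR_mix (by omega) (by omega)] at n1 n2
    refine ⟨min gA (min fB (fC - x') - z'), min fB (fC - x'), fB + x', ?_⟩
    rw [stepR_down (by omega) (by omega), stepR_mix (by omega) (by omega),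
      stepR_mix (by omega) (by omega)]
    rcases hc with ⟨h, q1, q2, q3⟩ | ⟨h, q1, q2, q3⟩ <;>
    rcases min_cases fB (fC - _) with ⟨e, e'⟩ | ⟨e, e'⟩ <;> rw [e] <;>
    rcases min_cases gA _ with ⟨e2, e2'⟩ | ⟨e2, e2'⟩ <;> rw [e2] <;>
    refine ⟨⟨?_, ?_, ?_⟩, ⟨?_, ?_, ?_, ?_⟩, ?_, ?_, ?_, ?_⟩ <;> linarith
  · rw [stepR_down (by omega) (by omega)] at n1 n2 n3
    refine ⟨min fA (fB + x' - y'), min fB (fC - x'), fB + x', ?_⟩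
    rw [stepR_down (by omega) (by omega), stepR_down (by omega) (by omega),
      stepR_down (by omega) (by omega)]
    rcases hc with ⟨h, q1, q2, q3⟩ | ⟨h, q1, q2, q3⟩ <;>
    rcases min_cases fB (fC - _) with ⟨e, e'⟩ | ⟨e, e'⟩ <;> rw [e] <;>
    rcases min_cases fA _ with ⟨e2, e2'⟩ | ⟨e2, e2'⟩ <;> rw [e2] <;>
    refine ⟨⟨?_, ?_, ?_⟩, ⟨?_, ?_, ?_⟩, ?_, ?_, ?_⟩ <;> linarith

set_option maxHeartbeats 1000000 in
/-- the local moves on potentials, from `(a+1, a, a+1)` to `(a, a+1, a)`. -/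
theorem local_bwd {k A B C : ℕ} (hAB : A < B) (hBC : B < C) {x y z x' y' z' : ℝ}
    (h1 : x' = max z (y - x)) (h2 : y' = x + z) (h3 : z' = min x (y - z))
    {fA fB fC a b c gA gB gC : ℝ}
    (n1 : stepR k x' B C fB fC b c) (n2 : stepR k y' A C fA c a gC)
    (n3 : stepR k z' A B a b gA gB) :
    ∃ bA bB cC, stepR k x A B fA fB bA bB ∧ stepR k y A C bA fC gA cC ∧
      stepR k z B C bB cC gB gC := by
  have hAC := hAB.trans hBC
  have hc := trop_cases h1 h2 h3
  clear h1 h2 h3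
  by_cases hkC : C ≤ k
  · rw [stepR_up (by omega)] at n1 n2 n3
    refine ⟨min gC (gB + z) - y, gC - z, min gC (gB + z), ?_⟩
    rw [stepR_up (by omega), stepR_up (by omega), stepR_up (by omega)]
    rcases hc with ⟨h, q1, q2, q3⟩ | ⟨h, q1, q2, q3⟩ <;>
    rcases min_cases gC (gB + z) with ⟨e, e'⟩ | ⟨e, e'⟩ <;> rw [e] <;>
    refine ⟨⟨?_, ?_, ?_⟩, ⟨?_, ?_, ?_⟩, ?_, ?_, ?_⟩ <;> linarith
  by_cases hkB : B ≤ k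
  · rw [stepR_up (by omega)] at n3
    rw [stepR_mix (by omega) (by omega)] at n1 n2
    refine ⟨min gA (fC - y), min gB (min fC (gA + y) - z), min fC (gA + y), ?_⟩
    rw [stepR_up (by omega), stepR_mix (by omega) (by omega), stepR_mix (by omega) (by omega)]
    rcases hc with ⟨h, q1, q2, q3⟩ | ⟨h, q1, q2, q3⟩ <;>
    rcases min_cases fC (gA + y) with ⟨e, e'⟩ | ⟨e, e'⟩ <;> rw [e] <;>
    rcases min_cases gB _ with ⟨e2, e2'⟩ | ⟨e2, e2'⟩ <;> rw [e2] <;>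
    rcases min_cases gA (fC - y) with ⟨e3, e3'⟩ | ⟨e3, e3'⟩ <;> rw [e3] <;>
    refine ⟨⟨?_, ?_, ?_⟩, ⟨?_, ?_, ?_, ?_⟩, ?_, ?_, ?_, ?_⟩ <;> linarith
  by_cases hkA : A ≤ k
  · rw [stepR_down (by omega) (by omega)] at n1
    rw [stepR_mix (by omega) (by omega)] at n3 n2
    refine ⟨min gA (fC - y), min fB (min gA (fC - y) + x), min fC (gA + y), ?_⟩
    rw [stepR_mix (by omega) (by omega), stepR_mix (by omega) (by omega),
      stepR_down (by omega) (by omega)]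
    rcases hc with ⟨h, q1, q2, q3⟩ | ⟨h, q1, q2, q3⟩ <;>
    rcases min_cases gA (fC - y) with ⟨e3, e3'⟩ | ⟨e3, e3'⟩ <;> rw [e3] <;>
    rcases min_cases fC (gA + y) with ⟨e, e'⟩ | ⟨e, e'⟩ <;> rw [e] <;>
    rcases min_cases fB _ with ⟨e2, e2'⟩ | ⟨e2, e2'⟩ <;> rw [e2] <;>
    refine ⟨⟨?_, ?_, ?_, ?_⟩, ⟨?_, ?_, ?_, ?_⟩, ?_, ?_, ?_⟩ <;> linarith
  · rw [stepR_down (by omega) (by omega)] at n1 n2 n3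
    refine ⟨min fA (fB - x), fA + x, min fA (fB - x) + y, ?_⟩
    rw [stepR_down (by omega) (by omega), stepR_down (by omega) (by omega),
      stepR_down (by omega) (by omega)]
    rcases hc with ⟨h, q1, q2, q3⟩ | ⟨h, q1, q2, q3⟩ <;>
    rcases min_cases fA (fB - x) with ⟨e, e'⟩ | ⟨e, e'⟩ <;> rw [e] <;>
    refine ⟨⟨?_, ?_, ?_⟩, ⟨?_, ?_, ?_⟩, ?_, ?_, ?_⟩ <;> linarith

theorem max3 (a b c : ℝ) : ∃ M, a ≤ M ∧ b ≤ M ∧ c ≤ M ∧ (M = a ∨ M = b ∨ M = c) := by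
  rcases le_total a b with h | h <;> rcases le_total b c with h' | h' <;>
    rcases le_total a c with h'' | h'' <;>
    first
    | exact ⟨a, by linarith, by linarith, by linarith, by simp⟩
    | exact ⟨b, by linarith, by linarith, by linarith, by simp⟩
    | exact ⟨c, by linarith, by linarith, by linarith, by simp⟩

/-- the local moves on time functions. -/
theorem local_time_fwd {k A B C : ℕ} (hAB : A < B) (hBC : B < C)
    {fA fB fC bA bB gA cC gB gC : ℝ}
    (n1 : tR k 3 A B fA fB bA bB) (n2 : tR k 3 A C bA fC gA cC)
    (n3 : tR k 3 B C bB cC gB gC) :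
    ∃ a b c, tR k 1 B C fB fC b c ∧ tR k 1 A C fA c a gC ∧ tR k 1 A B a b gA gB := by
  have hAC := hAB.trans hBC
  by_cases hkC : C ≤ k
  · rw [tR_up (by omega)] at n1 n2 n3
    obtain ⟨M, m1, m2, m3, hM⟩ := max3 gA gB gC
    refine ⟨M + 1, M + 1, M + 2, ?_⟩
    rw [tR_up (by omega), tR_up (by omega), tR_up (by omega)]
    refine ⟨⟨⟨?_, ?_⟩, ?_, ?_⟩, ⟨⟨?_, ?_⟩, ?_, ?_⟩, ⟨?_, ?_⟩, ?_, ?_⟩ <;>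
    rcases hM with hM | hM | hM <;> linarith
  by_cases hkB : B ≤ k
  · rw [tR_up (by omega)] at n1
    rw [tR_mix (by omega) (by omega)] at n2 n3
    obtain ⟨M, m1, m2, m3, hM⟩ := max3 gA gB fC
    refine ⟨M + 1, M + 1, M + 2, ?_⟩
    rw [tR_mix (by omega) (by omega), tR_mix (by omega) (by omega), tR_up (by omega)]
    refine ⟨⟨⟨?_, ?_⟩, ?_, ?_⟩, ⟨⟨?_, ?_⟩, ?_, ?_⟩, ⟨?_, ?_⟩, ?_, ?_⟩ <;>
    rcases hM with hM | hM | hM <;> linarith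
  by_cases hkA : A ≤ k
  · rw [tR_down (by omega) (by omega)] at n3
    rw [tR_mix (by omega) (by omega)] at n1 n2
    obtain ⟨M, m1, m2, m3, hM⟩ := max3 gA fB fC
    refine ⟨M + 2, M + 1, M + 1, ?_⟩
    rw [tR_down (by omega) (by omega), tR_mix (by omega) (by omega), tR_mix (by omega) (by omega)]
    refine ⟨⟨⟨?_, ?_⟩, ?_, ?_⟩, ⟨⟨?_, ?_⟩, ?_, ?_⟩, ⟨?_, ?_⟩, ?_, ?_⟩ <;>
    rcases hM with hM | hM | hM <;> linarith
  · rw [tR_down (by omega) (by omega)] at n1 n2 n3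
    obtain ⟨M, m1, m2, m3, hM⟩ := max3 fA fB fC
    refine ⟨M + 2, M + 1, M + 1, ?_⟩
    rw [tR_down (by omega) (by omega), tR_down (by omega) (by omega),
      tR_down (by omega) (by omega)]
    refine ⟨⟨⟨?_, ?_⟩, ?_, ?_⟩, ⟨⟨?_, ?_⟩, ?_, ?_⟩, ⟨?_, ?_⟩, ?_, ?_⟩ <;>
    rcases hM with hM | hM | hM <;> linarith

theorem local_time_bwd {k A B C : ℕ} (hAB : A < B) (hBC : B < C)
    {fA fB fC a b c gA gB gC : ℝ}
    (n1 : tR k 3 B C fB fC b c) (n2 : tR k 3 A C fA c a gC)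
    (n3 : tR k 3 A B a b gA gB) :
    ∃ bA bB cC, tR k 1 A B fA fB bA bB ∧ tR k 1 A C bA fC gA cC ∧
      tR k 1 B C bB cC gB gC := by
  have hAC := hAB.trans hBC
  by_cases hkC : C ≤ k
  · rw [tR_up (by omega)] at n1 n2 n3
    obtain ⟨M, m1, m2, m3, hM⟩ := max3 gA gB gC
    refine ⟨M + 2, M + 1, M + 1, ?_⟩
    rw [tR_up (by omega), tR_up (by omega), tR_up (by omega)]
    refine ⟨⟨⟨?_, ?_⟩, ?_, ?_⟩, ⟨⟨?_, ?_⟩, ?_, ?_⟩, ⟨?_, ?_⟩, ?_, ?_⟩ <;>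
    rcases hM with hM | hM | hM <;> linarith
  by_cases hkB : B ≤ k
  · rw [tR_up (by omega)] at n3
    rw [tR_mix (by omega) (by omega)] at n2 n1
    obtain ⟨M, m1, m2, m3, hM⟩ := max3 gA gB fC
    refine ⟨M + 1, M + 2, M + 1, ?_⟩
    rw [tR_up (by omega), tR_mix (by omega) (by omega), tR_mix (by omega) (by omega)]
    refine ⟨⟨⟨?_, ?_⟩, ?_, ?_⟩, ⟨⟨?_, ?_⟩, ?_, ?_⟩, ⟨?_, ?_⟩, ?_, ?_⟩ <;>
    rcases hM with hM | hM | hM <;> linarith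
  by_cases hkA : A ≤ k
  · rw [tR_down (by omega) (by omega)] at n1
    rw [tR_mix (by omega) (by omega)] at n3 n2
    obtain ⟨M, m1, m2, m3, hM⟩ := max3 gA fB fC
    refine ⟨M + 1, M + 2, M + 1, ?_⟩
    rw [tR_mix (by omega) (by omega), tR_mix (by omega) (by omega), tR_down (by omega) (by omega)]
    refine ⟨⟨⟨?_, ?_⟩, ?_, ?_⟩, ⟨⟨?_, ?_⟩, ?_, ?_⟩, ⟨?_, ?_⟩, ?_, ?_⟩ <;>
    rcases hM with hM | hM | hM <;> linarith
  · rw [tR_down (by omega) (by omega)] at n1 n2 n3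
    obtain ⟨M, m1, m2, m3, hM⟩ := max3 fA fB fC
    refine ⟨M + 1, M + 1, M + 2, ?_⟩
    rw [tR_down (by omega) (by omega), tR_down (by omega) (by omega),
      tR_down (by omega) (by omega)]
    refine ⟨⟨⟨?_, ?_⟩, ?_, ?_⟩, ⟨⟨?_, ?_⟩, ?_, ?_⟩, ⟨?_, ?_⟩, ?_, ?_⟩ <;>
    rcases hM with hM | hM | hM <;> linarith


/-- compatibility of edge values `Φ` (above) and `Ψ` (below) at a crossing of `p` and `q`. -/
def Node (S : ℕ → ℕ → ℝ → ℝ → ℝ → ℝ → Prop) (p q : ℕ) (Φ Ψ : ℕ → ℝ) : Prop :=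
  (∀ r, r ≠ p → r ≠ q → Φ r = Ψ r) ∧ S p q (Φ p) (Φ q) (Ψ p) (Ψ q)

/-- edge values of a wiring diagram satisfying local constraints at every node. -/
def Dia (w : List ℕ) (S : ℕ → ℕ → ℕ → ℝ → ℝ → ℝ → ℝ → Prop) (φ : ℕ → ℕ → ℝ) : Prop :=
  ∀ j < w.length, Node (S j) (wireX w (j + 1)) (wireY w (j + 1)) (φ j) (φ (j + 1))

theorem node_three_fwd {S1 S2 S3 S1' S2' S3' : ℕ → ℕ → ℝ → ℝ → ℝ → ℝ → Prop} {A B C : ℕ}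
    (hAB : A < B) (hBC : B < C) {Φ0 Φ1 Φ2 Φ3 : ℕ → ℝ}
    (hloc : ∀ fA fB fC bA bB gA cC gB gC, S1 A B fA fB bA bB → S2 A C bA fC gA cC →
      S3 B C bB cC gB gC → ∃ a b c, S1' B C fB fC b c ∧ S2' A C fA c a gC ∧ S3' A B a b gA gB)
    (n1 : Node S1 A B Φ0 Φ1) (n2 : Node S2 A C Φ1 Φ2) (n3 : Node S3 B C Φ2 Φ3) :
    ∃ P Q, Node S1' B C Φ0 P ∧ Node S2' A C P Q ∧ Node S3' A B Q Φ3 := by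
  obtain ⟨e1, n1⟩ := n1
  obtain ⟨e2, n2⟩ := n2
  obtain ⟨e3, n3⟩ := n3
  have hAC := hAB.trans hBC
  rw [← e1 C (by omega) (by omega), e3 A (by omega) (by omega)] at n2
  rw [← e2 B (by omega) (by omega)] at n3
  obtain ⟨a, b, c, m1, m2, m3⟩ := hloc _ _ _ _ _ _ _ _ _ n1 n2 n3
  refine ⟨Function.update (Function.update Φ0 B b) C c,
    Function.update (Function.update Φ3 B b) A a, ⟨?_, ?_⟩, ⟨?_, ?_⟩, ⟨?_, ?_⟩⟩
  · intro r h1 h2; simp [Function.update_apply, h1, h2]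
  · simpa [Function.update_apply, hBC.ne, hBC.ne'] using m1
  · intro r h1 h2
    by_cases hr : r = B
    · subst hr; simp [Function.update_apply, h1, h2]
    · simp only [Function.update_apply, h1, h2, hr, if_false]
      rw [e1 r h1 hr, e2 r h1 h2, e3 r hr h2]
  · simpa [Function.update_apply, hBC.ne, hBC.ne', hAC.ne, hAC.ne', hAB.ne, hAB.ne'] using m2
  · intro r h1 h2; simp [Function.update_apply, h1, h2]
  · simpa [Function.update_apply, hAB.ne, hAB.ne'] using m3

theorem node_three_bwd {S1 S2 S3 S1' S2' S3' : ℕ → ℕ → ℝ → ℝ → ℝ → ℝ → Prop} {A B C : ℕ}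
    (hAB : A < B) (hBC : B < C) {Φ0 Φ1 Φ2 Φ3 : ℕ → ℝ}
    (hloc : ∀ fA fB fC a b c gA gB gC, S1 B C fB fC b c → S2 A C fA c a gC → S3 A B a b gA gB →
      ∃ bA bB cC, S1' A B fA fB bA bB ∧ S2' A C bA fC gA cC ∧ S3' B C bB cC gB gC)
    (n1 : Node S1 B C Φ0 Φ1) (n2 : Node S2 A C Φ1 Φ2) (n3 : Node S3 A B Φ2 Φ3) :
    ∃ P Q, Node S1' A B Φ0 P ∧ Node S2' A C P Q ∧ Node S3' B C Q Φ3 := by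
  obtain ⟨e1, n1⟩ := n1
  obtain ⟨e2, n2⟩ := n2
  obtain ⟨e3, n3⟩ := n3
  have hAC := hAB.trans hBC
  rw [← e1 A (by omega) (by omega), e3 C (by omega) (by omega)] at n2
  rw [← e2 B (by omega) (by omega)] at n3
  obtain ⟨a, b, c, m1, m2, m3⟩ := hloc _ _ _ _ _ _ _ _ _ n1 n2 n3
  refine ⟨Function.update (Function.update Φ0 B b) A a,
    Function.update (Function.update Φ3 B b) C c, ⟨?_, ?_⟩, ⟨?_, ?_⟩, ⟨?_, ?_⟩⟩
  · intro r h1 h2; simp [Function.update_apply, h1, h2]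
  · simpa [Function.update_apply, hAB.ne, hAB.ne'] using m1
  · intro r h1 h2
    by_cases hr : r = B
    · subst hr; simp [Function.update_apply, h1, h2]
    · simp only [Function.update_apply, h1, h2, hr, if_false]
      rw [e1 r hr h2, e2 r h1 h2, e3 r h1 hr]
  · simpa [Function.update_apply, hBC.ne, hBC.ne', hAC.ne, hAC.ne', hAB.ne, hAB.ne'] using m2
  · intro r h1 h2; simp [Function.update_apply, h1, h2]
  · simpa [Function.update_apply, hBC.ne, hBC.ne'] using m3

theorem node_two {S1 S2 S1' S2' : ℕ → ℕ → ℝ → ℝ → ℝ → ℝ → Prop} {p q r s : ℕ}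
    (h1 : p ≠ r) (h2 : p ≠ s) (h3 : q ≠ r) (h4 : q ≠ s) {Φ0 Φ1 Φ2 : ℕ → ℝ}
    (l1 : ∀ f f' g g', S1 p q f f' g g' → S2' p q f f' g g')
    (l2 : ∀ f f' g g', S2 r s f f' g g' → S1' r s f f' g g')
    (n1 : Node S1 p q Φ0 Φ1) (n2 : Node S2 r s Φ1 Φ2) :
    ∃ P, Node S1' r s Φ0 P ∧ Node S2' p q P Φ2 := by
  obtain ⟨e1, n1⟩ := n1
  obtain ⟨e2, n2⟩ := n2
  refine ⟨fun i => if i = p ∨ i = q then Φ0 i else Φ2 i, ⟨?_, ?_⟩, ⟨?_, ?_⟩⟩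
  · intro i g1 g2
    by_cases hi : i = p ∨ i = q
    · simp [hi]
    · simp only [hi, if_false]
      push Not at hi
      rw [e1 i hi.1 hi.2, e2 i g1 g2]
  · have := l2 _ _ _ _ n2
    rw [← e1 r h1.symm h3.symm, ← e1 s h2.symm h4.symm] at this
    simpa [h1, h2, h3, h4, h1.symm, h2.symm, h3.symm, h4.symm] using this
  · intro i g1 g2; simp [g1, g2]
  · have := l1 _ _ _ _ n1
    rw [e2 p h1 h2, e2 q h3 h4] at this
    simpa using this

theorem splice_three {w w' : List ℕ} {S S' : ℕ → ℕ → ℕ → ℝ → ℝ → ℝ → ℝ → Prop} {φ : ℕ → ℕ → ℝ}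
    {m : ℕ} (hlen : w'.length = w.length)
    (hX : ∀ j < w.length, (j < m ∨ m + 3 ≤ j) →
      wireX w' (j + 1) = wireX w (j + 1) ∧ wireY w' (j + 1) = wireY w (j + 1))
    (hS : ∀ j, (j < m ∨ m + 3 ≤ j) → ∀ p q f f' g g', S j p q f f' g g' → S' j p q f f' g g')
    (h : Dia w S φ)
    (hn : ∃ P Q, Node (S' m) (wireX w' (m + 1)) (wireY w' (m + 1)) (φ m) P ∧
      Node (S' (m + 1)) (wireX w' (m + 1 + 1)) (wireY w' (m + 1 + 1)) P Q ∧
      Node (S' (m + 2)) (wireX w' (m + 2 + 1)) (wireY w' (m + 2 + 1)) Q (φ (m + 3))) :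
    ∃ φ', Dia w' S' φ' ∧ ∀ j, (j ≤ m ∨ m + 3 ≤ j) → φ' j = φ j := by
  obtain ⟨P, Q, n1, n2, n3⟩ := hn
  refine ⟨fun j => if j = m + 1 then P else if j = m + 2 then Q else φ j, ?_, ?_⟩
  · intro j hj
    rw [hlen] at hj
    by_cases h0 : j < m ∨ m + 3 ≤ j
    · obtain ⟨a1, a2⟩ := hX j hj h0
      obtain ⟨b1, b2⟩ := h j hj
      have q1 : j ≠ m + 1 := by omega
      have q2 : j ≠ m + 2 := by omega
      have q3 : j + 1 ≠ m + 1 := by omega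
      have q4 : j + 1 ≠ m + 2 := by omega
      simp only [q1, q2, q3, q4, if_false]
      rw [a1, a2]
      exact ⟨b1, hS j h0 _ _ _ _ _ _ b2⟩
    · have : j = m ∨ j = m + 1 ∨ j = m + 2 := by omega
      rcases this with rfl | rfl | rfl
      · simpa using n1
      · simpa using n2
      · simpa using n3
  · intro j hj
    have q1 : j ≠ m + 1 := by omega
    have q2 : j ≠ m + 2 := by omega
    simp [q1, q2]

theorem splice_two {w w' : List ℕ} {S S' : ℕ → ℕ → ℕ → ℝ → ℝ → ℝ → ℝ → Prop} {φ : ℕ → ℕ → ℝ}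
    {m : ℕ} (hlen : w'.length = w.length)
    (hX : ∀ j < w.length, (j < m ∨ m + 2 ≤ j) →
      wireX w' (j + 1) = wireX w (j + 1) ∧ wireY w' (j + 1) = wireY w (j + 1))
    (hS : ∀ j, (j < m ∨ m + 2 ≤ j) → ∀ p q f f' g g', S j p q f f' g g' → S' j p q f f' g g')
    (h : Dia w S φ)
    (hn : ∃ P, Node (S' m) (wireX w' (m + 1)) (wireY w' (m + 1)) (φ m) P ∧
      Node (S' (m + 1)) (wireX w' (m + 1 + 1)) (wireY w' (m + 1 + 1)) P (φ (m + 2))) :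
    ∃ φ', Dia w' S' φ' ∧ ∀ j, (j ≤ m ∨ m + 2 ≤ j) → φ' j = φ j := by
  obtain ⟨P, n1, n2⟩ := hn
  refine ⟨fun j => if j = m + 1 then P else φ j, ?_, ?_⟩
  · intro j hj
    rw [hlen] at hj
    by_cases h0 : j < m ∨ m + 2 ≤ j
    · obtain ⟨a1, a2⟩ := hX j hj h0
      obtain ⟨b1, b2⟩ := h j hj
      have q1 : j ≠ m + 1 := by omega
      have q3 : j + 1 ≠ m + 1 := by omega
      simp only [q1, q3, if_false]
      rw [a1, a2]
      exact ⟨b1, hS j h0 _ _ _ _ _ _ b2⟩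
    · have : j = m ∨ j = m + 1 := by omega
      rcases this with rfl | rfl
      · simpa using n1
      · simpa using n2
  · intro j hj
    have q1 : j ≠ m + 1 := by omega
    simp [q1]

/-! wires of `u ++ mid ++ v` -/

theorem wire_mid {u mid v : List ℕ} {i : ℕ} (h : i < mid.length) :
    wireX (u ++ mid ++ v) (u.length + i + 1) = wordProd u (wireX mid (i + 1)) ∧
    wireY (u ++ mid ++ v) (u.length + i + 1) = wordProd u (wireY mid (i + 1)) ∧
    letterAt (u ++ mid ++ v) (u.length + i + 1) = letterAt mid (i + 1) := by
  rw [List.append_assoc, wireX_append_right, wireY_append_right, wireX_append_left h,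
    wireY_append_left h, letterAt_append_right, letterAt_append_left h]
  exact ⟨rfl, rfl, rfl⟩

theorem wire_out {u mid mid' v : List ℕ} (hl : mid'.length = mid.length)
    (hp : wordProd mid' = wordProd mid) {j : ℕ}
    (hj : j < u.length ∨ u.length + mid.length ≤ j) :
    wireX (u ++ mid' ++ v) (j + 1) = wireX (u ++ mid ++ v) (j + 1) ∧
    wireY (u ++ mid' ++ v) (j + 1) = wireY (u ++ mid ++ v) (j + 1) ∧
    letterAt (u ++ mid' ++ v) (j + 1) = letterAt (u ++ mid ++ v) (j + 1) := by
  rcases hj with hj | hj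
  · rw [List.append_assoc, List.append_assoc]
    simp only [wireX_append_left hj, wireY_append_left hj, letterAt_append_left hj, and_self]
  · obtain ⟨i, rfl⟩ := Nat.exists_eq_add_of_le hj
    have e1 : u.length + mid.length = (u ++ mid).length := by simp
    have e2 : u.length + mid.length = (u ++ mid').length := by simp [hl]
    refine ⟨?_, ?_, ?_⟩
    · conv_lhs => rw [e2]
      conv_rhs => rw [e1]
      rw [wireX_append_right, wireX_append_right, wordProd_append, wordProd_append, hp]
    · conv_lhs => rw [e2]
      conv_rhs => rw [e1]
      rw [wireY_append_right, wireY_append_right, wordProd_append, wordProd_append, hp]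
    · conv_lhs => rw [e2]
      conv_rhs => rw [e1]
      rw [letterAt_append_right, letterAt_append_right]

/-- the wires crossing in a 3-move `(a, a+1, a) → (a+1, a, a+1)`. -/
theorem three_wires {u v : List ℕ} {a : ℕ} {A B C : ℕ} (hA : wordProd u a = A)
    (hB : wordProd u (a + 1) = B) (hC : wordProd u (a + 1 + 1) = C) :
    (wireX (u ++ [a, a + 1, a] ++ v) (u.length + 1) = A ∧
      wireY (u ++ [a, a + 1, a] ++ v) (u.length + 1) = B ∧
      wireX (u ++ [a, a + 1, a] ++ v) (u.length + 1 + 1) = A ∧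
      wireY (u ++ [a, a + 1, a] ++ v) (u.length + 1 + 1) = C ∧
      wireX (u ++ [a, a + 1, a] ++ v) (u.length + 2 + 1) = B ∧
      wireY (u ++ [a, a + 1, a] ++ v) (u.length + 2 + 1) = C) ∧
    (wireX (u ++ [a + 1, a, a + 1] ++ v) (u.length + 1) = B ∧
      wireY (u ++ [a + 1, a, a + 1] ++ v) (u.length + 1) = C ∧
      wireX (u ++ [a + 1, a, a + 1] ++ v) (u.length + 1 + 1) = A ∧
      wireY (u ++ [a + 1, a, a + 1] ++ v) (u.length + 1 + 1) = C ∧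
      wireX (u ++ [a + 1, a, a + 1] ++ v) (u.length + 2 + 1) = A ∧
      wireY (u ++ [a + 1, a, a + 1] ++ v) (u.length + 2 + 1) = B) := by
  have h0 := @wire_mid u [a, a + 1, a] v 0 (by simp)
  have h1 := @wire_mid u [a, a + 1, a] v 1 (by simp)
  have h2 := @wire_mid u [a, a + 1, a] v 2 (by simp)
  have k0 := @wire_mid u [a + 1, a, a + 1] v 0 (by simp)
  have k1 := @wire_mid u [a + 1, a, a + 1] v 1 (by simp)
  have k2 := @wire_mid u [a + 1, a, a + 1] v 2 (by simp)
  rw [Nat.add_zero] at h0 k0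
  subst hA hB hC
  refine ⟨⟨h0.1.trans ?_, h0.2.1.trans ?_, h1.1.trans ?_, h1.2.1.trans ?_, h2.1.trans ?_,
    h2.2.1.trans ?_⟩, k0.1.trans ?_, k0.2.1.trans ?_, k1.1.trans ?_, k1.2.1.trans ?_,
    k2.1.trans ?_, k2.2.1.trans ?_⟩ <;>
  simp [wireX_def, wireY_def, wordProd_cons, wordProd_nil, sTrans_left, sTrans_right, sTrans_up,
    sTrans_down]

/-- the wires crossing in a 2-move. -/
theorem two_wires {u v : List ℕ} {a b : ℕ} (h : a + 1 < b ∨ b + 1 < a) :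
    wireX (u ++ [a, b] ++ v) (u.length + 1) = wordProd u a ∧
      wireY (u ++ [a, b] ++ v) (u.length + 1) = wordProd u (a + 1) ∧
      wireX (u ++ [a, b] ++ v) (u.length + 1 + 1) = wordProd u b ∧
      wireY (u ++ [a, b] ++ v) (u.length + 1 + 1) = wordProd u (b + 1) := by
  have h0 := @wire_mid u [a, b] v 0 (by simp)
  have h1 := @wire_mid u [a, b] v 1 (by simp)
  rw [Nat.add_zero] at h0
  refine ⟨h0.1.trans ?_, h0.2.1.trans ?_, h1.1.trans ?_, h1.2.1.trans ?_⟩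
  · simp [wireX_def, wordProd_nil]
  · simp [wireY_def, wordProd_nil]
  · have h1 : b ≠ a := by omega
    have h2 : b ≠ a + 1 := by omega
    simp [wireX_def, wordProd_cons, wordProd_nil, sTrans_apply, h1, h2]
  · have h1 : b + 1 ≠ a := by omega
    have h2 : b ≠ a := by omega
    simp [wireY_def, wordProd_cons, wordProd_nil, sTrans_apply, h1, h2]

theorem three_prod (a : ℕ) : wordProd [a + 1, a, a + 1] = wordProd [a, a + 1, a] := by
  simp only [wordProd_cons, wordProd_nil, mul_one]
  exact (sTrans_braid (Or.inl rfl)).symm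

theorem two_prod {a b : ℕ} (h : a + 1 < b ∨ b + 1 < a) : wordProd [b, a] = wordProd [a, b] := by
  simp only [wordProd_cons, wordProd_nil, mul_one]
  exact (sTrans_comm h).symm

theorem good_three {u v : List ℕ} {a : ℕ} (h : Good (u ++ [a, a + 1, a] ++ v)) :
    wordProd u a < wordProd u (a + 1) ∧ wordProd u (a + 1) < wordProd u (a + 1 + 1) := by
  have h1 := h u a ([a + 1, a] ++ v) (by simp)
  have h2 := h (u ++ [a, a + 1]) a v (by simp)
  refine ⟨h1, ?_⟩
  simpa [wordProd_append, wordProd_cons, wordProd_nil, sTrans_left, sTrans_right, sTrans_up,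
    sTrans_down] using h2

theorem good_three' {u v : List ℕ} {a : ℕ} (h : Good (u ++ [a + 1, a, a + 1] ++ v)) :
    wordProd u a < wordProd u (a + 1) ∧ wordProd u (a + 1) < wordProd u (a + 1 + 1) := by
  have h1 := h u (a + 1) ([a, a + 1] ++ v) (by simp)
  have h2 := h (u ++ [a + 1, a]) (a + 1) v (by simp)
  refine ⟨?_, h1⟩
  simpa [wordProd_append, wordProd_cons, wordProd_nil, sTrans_left, sTrans_right, sTrans_up,
    sTrans_down] using h2

theorem dia_three_fwd {u v : List ℕ} {a : ℕ} (hg : Good (u ++ [a, a + 1, a] ++ v))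
    {S S' : ℕ → ℕ → ℕ → ℝ → ℝ → ℝ → ℝ → Prop} {φ : ℕ → ℕ → ℝ}
    (hS : ∀ j, (j < u.length ∨ u.length + 3 ≤ j) →
      ∀ p q f f' g g', S j p q f f' g g' → S' j p q f f' g g')
    (hloc : ∀ A B C, A < B → B < C → ∀ fA fB fC bA bB gA cC gB gC,
      S u.length A B fA fB bA bB → S (u.length + 1) A C bA fC gA cC →
      S (u.length + 2) B C bB cC gB gC →
      ∃ a b c, S' u.length B C fB fC b c ∧ S' (u.length + 1) A C fA c a gC ∧
        S' (u.length + 2) A B a b gA gB)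
    (h : Dia (u ++ [a, a + 1, a] ++ v) S φ) :
    ∃ φ', Dia (u ++ [a + 1, a, a + 1] ++ v) S' φ' ∧
      ∀ j, (j ≤ u.length ∨ u.length + 3 ≤ j) → φ' j = φ j := by
  obtain ⟨hAB, hBC⟩ := good_three hg
  obtain ⟨⟨w1, w2, w3, w4, w5, w6⟩, w1', w2', w3', w4', w5', w6'⟩ :=
    three_wires (u := u) (v := v) (a := a) rfl rfl rfl
  refine splice_three (by simp) ?_ hS h ?_
  · intro j _ hj
    have := wire_out (u := u) (v := v) (mid := [a, a + 1, a]) (mid' := [a + 1, a, a + 1])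
      (by simp) (three_prod a) (j := j) (by simpa using hj)
    exact ⟨this.1, this.2.1⟩
  · have n1 := h u.length (by simp)
    have n2 := h (u.length + 1) (by simp)
    have n3 := h (u.length + 2) (by simp)
    rw [w1, w2] at n1
    rw [w3, w4] at n2
    rw [w5, w6] at n3
    rw [w1', w2', w3', w4', w5', w6']
    exact node_three_fwd hAB hBC (hloc _ _ _ hAB hBC) n1 n2 n3

theorem dia_three_bwd {u v : List ℕ} {a : ℕ} (hg : Good (u ++ [a + 1, a, a + 1] ++ v))
    {S S' : ℕ → ℕ → ℕ → ℝ → ℝ → ℝ → ℝ → Prop} {φ : ℕ → ℕ → ℝ}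
    (hS : ∀ j, (j < u.length ∨ u.length + 3 ≤ j) →
      ∀ p q f f' g g', S j p q f f' g g' → S' j p q f f' g g')
    (hloc : ∀ A B C, A < B → B < C → ∀ fA fB fC a b c gA gB gC,
      S u.length B C fB fC b c → S (u.length + 1) A C fA c a gC →
      S (u.length + 2) A B a b gA gB →
      ∃ bA bB cC, S' u.length A B fA fB bA bB ∧ S' (u.length + 1) A C bA fC gA cC ∧
        S' (u.length + 2) B C bB cC gB gC)
    (h : Dia (u ++ [a + 1, a, a + 1] ++ v) S φ) :
    ∃ φ', Dia (u ++ [a, a + 1, a] ++ v) S' φ' ∧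
      ∀ j, (j ≤ u.length ∨ u.length + 3 ≤ j) → φ' j = φ j := by
  obtain ⟨hAB, hBC⟩ := good_three' hg
  obtain ⟨⟨w1, w2, w3, w4, w5, w6⟩, w1', w2', w3', w4', w5', w6'⟩ :=
    three_wires (u := u) (v := v) (a := a) rfl rfl rfl
  refine splice_three (by simp) ?_ hS h ?_
  · intro j _ hj
    have := wire_out (u := u) (v := v) (mid' := [a, a + 1, a]) (mid := [a + 1, a, a + 1])
      (by simp) (three_prod a).symm (j := j) (by simpa using hj)
    exact ⟨this.1, this.2.1⟩
  · have n1 := h u.length (by simp)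
    have n2 := h (u.length + 1) (by simp)
    have n3 := h (u.length + 2) (by simp)
    rw [w1', w2'] at n1
    rw [w3', w4'] at n2
    rw [w5', w6'] at n3
    rw [w1, w2, w3, w4, w5, w6]
    exact node_three_bwd hAB hBC (hloc _ _ _ hAB hBC) n1 n2 n3

theorem dia_two {u v : List ℕ} {a b : ℕ} (hab : a + 1 < b ∨ b + 1 < a)
    {S S' : ℕ → ℕ → ℕ → ℝ → ℝ → ℝ → ℝ → Prop} {φ : ℕ → ℕ → ℝ}
    (hS : ∀ j, (j < u.length ∨ u.length + 2 ≤ j) →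
      ∀ p q f f' g g', S j p q f f' g g' → S' j p q f f' g g')
    (hS1 : ∀ p q f f' g g', S u.length p q f f' g g' → S' (u.length + 1) p q f f' g g')
    (hS2 : ∀ p q f f' g g', S (u.length + 1) p q f f' g g' → S' u.length p q f f' g g')
    (h : Dia (u ++ [a, b] ++ v) S φ) :
    ∃ φ', Dia (u ++ [b, a] ++ v) S' φ' ∧
      ∀ j, (j ≤ u.length ∨ u.length + 2 ≤ j) → φ' j = φ j := by
  obtain ⟨w1, w2, w3, w4⟩ := two_wires (u := u) (v := v) hab
  obtain ⟨w1', w2', w3', w4'⟩ := two_wires (u := u) (v := v) hab.symm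
  refine splice_two (by simp) ?_ hS h ?_
  · intro j _ hj
    have := wire_out (u := u) (v := v) (mid' := [b, a]) (mid := [a, b])
      (by simp) (two_prod hab) (j := j) (by simpa using hj)
    exact ⟨this.1, this.2.1⟩
  · have n1 := h u.length (by simp)
    have n2 := h (u.length + 1) (by simp)
    rw [w1, w2] at n1
    rw [w3, w4] at n2
    rw [w1', w2', w3', w4']
    refine node_two ?_ ?_ ?_ ?_ (hS1 _ _) (hS2 _ _) n1 n2 <;>
    · intro hh
      have := (wordProd u).injective hh
      omega

/-- potentials of `G(i, k)`. -/
def Pot (w : List ℕ) (k : ℕ) (t : ℕ → ℝ) (φ : ℕ → ℕ → ℝ) : Prop :=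
  Dia w (fun j => stepR k (t j)) φ

/-- time functions of `G(i, k)`. -/
def Tau (w : List ℕ) (k : ℕ) (e : ℝ) (τ : ℕ → ℕ → ℝ) : Prop := Dia w (fun _ => tR k e) τ

/-- the points admitting a potential whose value does not drop from `L_k` to `L_{k+1}`. -/
def PCone (w : List ℕ) (k : ℕ) (t : ℕ → ℝ) : Prop :=
  ∃ φ, Pot w k t φ ∧ φ w.length k ≤ φ w.length (k + 1)

theorem tR_mono {k p q : ℕ} {e e' f f' g g' : ℝ} (he : e' ≤ e) (h : tR k e p q f f' g g') :
    tR k e' p q f f' g g' := by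
  unfold tR at *
  split_ifs at * <;> exact ⟨⟨by linarith, by linarith⟩, by linarith, by linarith⟩

theorem Tau.scale {w : List ℕ} {k : ℕ} {τ : ℕ → ℕ → ℝ} (h : Tau w k 1 τ) {c : ℝ} (hc : 0 ≤ c) :
    Tau w k c (fun j r => c * τ j r) := by
  intro j hj
  obtain ⟨h1, h2⟩ := h j hj
  refine ⟨fun r a b => by simp only []; rw [h1 r a b], ?_⟩
  simp only [tR] at h2 ⊢
  split_ifs at * <;> exact ⟨⟨by nlinarith, by nlinarith⟩, by nlinarith, by nlinarith⟩

theorem Tau.step {w w' : List ℕ} {k : ℕ} (hg : Good w) (hs : BraidStep w w')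
    (h : ∃ τ, Tau w k 1 τ) : ∃ τ, Tau w' k 1 τ := by
  obtain ⟨τ, hτ⟩ := h
  rcases hs with ⟨u, v, a, b, hab, rfl, rfl⟩ | ⟨u, v, a, b, hab, rfl, rfl⟩
  · obtain ⟨φ, h1, -⟩ := dia_two hab (S' := fun _ => tR k 1) (by intros; assumption)
      (by intros; assumption) (by intros; assumption) hτ
    exact ⟨φ, h1⟩
  · have h3 := hτ.scale (c := 3) (by norm_num)
    rcases hab with rfl | rfl
    · obtain ⟨φ, h1, -⟩ := dia_three_fwd hg (S' := fun _ => tR k 1)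
        (by intro j _ p q f f' g g' hh; exact tR_mono (by norm_num) hh)
        (by intro A B C hA hB fA fB fC bA bB gA cC gB gC n1 n2 n3
            exact local_time_fwd hA hB n1 n2 n3) h3
      exact ⟨φ, h1⟩
    · obtain ⟨φ, h1, -⟩ := dia_three_bwd hg (S' := fun _ => tR k 1)
        (by intro j _ p q f f' g g' hh; exact tR_mono (by norm_num) hh)
        (by intro A B C hA hB fA fB fC bA bB gA cC gB gC n1 n2 n3
            exact local_time_bwd hA hB n1 n2 n3) h3
      exact ⟨φ, h1⟩

theorem PCone.two {u v : List ℕ} {a b k : ℕ} (hab : a + 1 < b ∨ b + 1 < a) {t t' : ℕ → ℝ}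
    (ht : ∀ j, (j < u.length ∨ u.length + 2 ≤ j) → t' j = t j)
    (h0 : t' u.length = t (u.length + 1)) (h1 : t' (u.length + 1) = t u.length)
    (h : PCone (u ++ [a, b] ++ v) k t) : PCone (u ++ [b, a] ++ v) k t' := by
  obtain ⟨φ, hφ, he⟩ := h
  obtain ⟨ψ, p1, p2⟩ := dia_two hab (S' := fun j => stepR k (t' j))
    (by intro j hj p q f f' g g' hh; rw [ht j hj]; exact hh)
    (by intro p q f f' g g' hh; rw [h1]; exact hh)
    (by intro p q f f' g g' hh; rw [h0]; exact hh) hφ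
  refine ⟨ψ, p1, ?_⟩
  rw [p2 _ (by simp)]
  simpa using he

theorem PCone.three_fwd {u v : List ℕ} {a k : ℕ} (hg : Good (u ++ [a, a + 1, a] ++ v))
    {t t' : ℕ → ℝ}
    (ht : ∀ j, (j < u.length ∨ u.length + 3 ≤ j) → t' j = t j)
    (h0 : t' u.length = max (t (u.length + 2)) (t (u.length + 1) - t u.length))
    (h1 : t' (u.length + 1) = t u.length + t (u.length + 2))
    (h2 : t' (u.length + 2) = min (t u.length) (t (u.length + 1) - t (u.length + 2)))
    (h : PCone (u ++ [a, a + 1, a] ++ v) k t) : PCone (u ++ [a + 1, a, a + 1] ++ v) k t' := by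
  obtain ⟨φ, hφ, he⟩ := h
  obtain ⟨ψ, p1, p2⟩ := dia_three_fwd hg (S' := fun j => stepR k (t' j))
    (by intro j hj p q f f' g g' hh; rw [ht j hj]; exact hh)
    (by intro A B C hA hB fA fB fC bA bB gA cC gB gC n1 n2 n3
        exact local_fwd hA hB h0 h1 h2 n1 n2 n3) hφ
  refine ⟨ψ, p1, ?_⟩
  rw [p2 _ (by simp)]
  simpa using he

theorem PCone.three_bwd {u v : List ℕ} {a k : ℕ} (hg : Good (u ++ [a + 1, a, a + 1] ++ v))
    {t t' : ℕ → ℝ}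
    (ht : ∀ j, (j < u.length ∨ u.length + 3 ≤ j) → t' j = t j)
    (h0 : t' u.length = max (t (u.length + 2)) (t (u.length + 1) - t u.length))
    (h1 : t' (u.length + 1) = t u.length + t (u.length + 2))
    (h2 : t' (u.length + 2) = min (t u.length) (t (u.length + 1) - t (u.length + 2)))
    (h : PCone (u ++ [a + 1, a, a + 1] ++ v) k t') : PCone (u ++ [a, a + 1, a] ++ v) k t := by
  obtain ⟨φ, hφ, he⟩ := h
  obtain ⟨ψ, p1, p2⟩ := dia_three_bwd hg (S' := fun j => stepR k (t j))
    (by intro j hj p q f f' g g' hh; rw [← ht j hj]; exact hh)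
    (by intro A B C hA hB fA fB fC bA bB gA cC gB gC n1 n2 n3
        exact local_bwd hA hB h0 h1 h2 n1 n2 n3) hφ
  refine ⟨ψ, p1, ?_⟩
  rw [p2 _ (by simp)]
  simpa using he


/-! ### Paths and potentials -/

/-- level of the edge of wire `r` entering node `j + 1`. -/
def inn (k r j : ℕ) : ℕ := if r ≤ k then j + 1 else j

/-- level of the edge of wire `r` leaving node `j + 1`. -/
def out (k r j : ℕ) : ℕ := if r ≤ k then j else j + 1

/-- the node argument of `TravelOK` for an edge of wire `r` at level `l`. -/
def arg (k r l : ℕ) : ℕ := if r ≤ k then l + 1 else l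

theorem arg_out (k r j : ℕ) : arg k r (out k r j) = j + 1 := by
  unfold arg out; split_ifs <;> rfl

theorem inn_inj {k r j j' : ℕ} (h : inn k r j = inn k r j') : j = j' := by
  unfold inn at h; split_ifs at h <;> omega

/-- legal continuations from the edge of wire `r` at level `l`. -/
inductive PT (w : List ℕ) (k : ℕ) : ℕ → ℕ → List ℕ → Prop
  | halt : PT w k w.length (k + 1) []
  | pass {j r ms} : j < w.length → ¬ NodeOnWire w (j + 1) r → PT w k (out k r j) r ms →
      PT w k (inn k r j) r ms
  | straight {j r ms} : j < w.length → NodeOnWire w (j + 1) r → ¬ Forbidden w k (j + 1) r →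
      PT w k (out k r j) r ms → PT w k (inn k r j) r ms
  | switch {j r ms} : j < w.length → NodeOnWire w (j + 1) r →
      PT w k (out k (otherWire w (j + 1) r) j) (otherWire w (j + 1) r) ms →
      PT w k (inn k r j) r ((j + 1) :: ms)

theorem mem_nodesOn {w : List ℕ} {r j : ℕ} :
    j ∈ nodesOn w r ↔ (1 ≤ j ∧ j ≤ w.length) ∧ NodeOnWire w j r := by
  simp only [nodesOn, List.mem_filter, List.mem_map, List.mem_range, decide_eq_true_eq]
  constructor
  · rintro ⟨⟨a, h, rfl⟩, h2⟩
    exact ⟨by omega, h2⟩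
  · rintro ⟨h, h2⟩
    exact ⟨⟨j - 1, by omega, by omega⟩, h2⟩

theorem mem_segList {w : List ℕ} {r a b j : ℕ} :
    j ∈ segList w r a b ↔ j ∈ nodesOn w r ∧ min a b < j ∧ j < max a b := by
  simp [segList]

theorem mem_tailList {w : List ℕ} {r a j : ℕ} :
    j ∈ tailList w r a ↔ j ∈ nodesOn w r ∧ a < j := by
  simp [tailList]

theorem travel_ext {w : List ℕ} {k r j : ℕ} {ms : List ℕ}
    (hn : NodeOnWire w (j + 1) r → ¬ Forbidden w k (j + 1) r)
    (h : TravelOK w k r (j + 1) ms) : TravelOK w k r (arg k r (inn k r j)) ms := by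
  cases ms with
  | nil =>
    obtain ⟨h1, h2⟩ := h
    subst h1
    refine ⟨rfl, ?_⟩
    have : arg k (k + 1) (inn k (k + 1) j) = j := by simp [arg, inn]
    rw [this]
    intro i hi
    rw [mem_tailList] at hi
    by_cases h3 : i = j + 1
    · subst h3
      exact hn (mem_nodesOn.1 hi.1).2
    · exact h2 i (mem_tailList.2 ⟨hi.1, by omega⟩)
  | cons m ms =>
    obtain ⟨h1, h2, h3, h4, h5⟩ := h
    refine ⟨h1, h2, ?_, ?_, h5⟩
    · unfold arg inn
      split_ifs at h3 ⊢ <;> omega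
    · intro i hi
      rw [mem_segList] at hi
      by_cases h6 : i = j + 1
      · subst h6
        exact hn (mem_nodesOn.1 hi.1).2
      · refine h4 i (mem_segList.2 ⟨hi.1, ?_⟩)
        unfold arg inn at hi
        split_ifs at hi h3 <;> omega

theorem PT.travel {w : List ℕ} {k l r : ℕ} {ms : List ℕ} (h : PT w k l r ms) :
    TravelOK w k r (arg k r l) ms := by
  induction h with
  | halt =>
    refine ⟨rfl, ?_⟩
    have : arg k (k + 1) w.length = w.length := by simp [arg]
    rw [this]
    intro i hi
    rw [mem_tailList, mem_nodesOn] at hi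
    omega
  | pass h1 h2 _ ih =>
    rw [arg_out] at ih
    exact travel_ext (fun h => absurd h h2) ih
  | straight h1 h2 h3 _ ih =>
    rw [arg_out] at ih
    exact travel_ext (fun _ => h3) ih
  | @switch j r ms h1 h2 _ ih =>
    rw [arg_out] at ih
    refine ⟨⟨by omega, by omega⟩, h2, ?_, ?_, ih⟩
    · unfold arg inn
      split_ifs <;> omega
    · intro i hi
      rw [mem_segList] at hi
      unfold arg inn at hi
      split_ifs at hi <;> omega

theorem PT.move {w : List ℕ} {k r j : ℕ} {ms : List ℕ} (hj : j < w.length)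
    (hn : NodeOnWire w (j + 1) r → ¬ Forbidden w k (j + 1) r)
    (h : PT w k (out k r j) r ms) : PT w k (inn k r j) r ms := by
  by_cases h1 : NodeOnWire w (j + 1) r
  · exact PT.straight hj h1 (hn h1) h
  · exact PT.pass hj h1 h

/-- moving along an upward wire. -/
theorem PT.up {w : List ℕ} {k r : ℕ} {ms : List ℕ} (hr : r ≤ k) (l : ℕ)
    (h : PT w k l r ms) (d : ℕ) (hd : l + d ≤ w.length)
    (hf : ∀ i, l < i → i ≤ l + d → NodeOnWire w i r → ¬ Forbidden w k i r) :
    PT w k (l + d) r ms := by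
  induction d with
  | zero => exact h
  | succ d ih =>
    have := PT.move (w := w) (k := k) (r := r) (j := l + d) (ms := ms) (by omega)
      (hf _ (by omega) (by omega))
    simp only [inn, out, hr, if_true] at this
    exact this (ih (by omega) (fun i h1 h2 => hf i h1 (by omega)))

/-- moving along a downward wire. -/
theorem PT.down {w : List ℕ} {k r : ℕ} {ms : List ℕ} (hr : ¬ r ≤ k) (l d : ℕ)
    (h : PT w k (l + d) r ms) (hd : l + d ≤ w.length)
    (hf : ∀ i, l < i → i ≤ l + d → NodeOnWire w i r → ¬ Forbidden w k i r) :
    PT w k l r ms := by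
  induction d generalizing l with
  | zero => exact h
  | succ d ih =>
    have := PT.move (w := w) (k := k) (r := r) (j := l) (ms := ms) (by omega)
      (hf _ (by omega) (by omega))
    simp only [inn, out, hr, if_false] at this
    refine this (ih (l + 1) ?_ (by omega) (fun i h1 h2 => hf i (by omega) (by omega)))
    rwa [add_assoc, add_comm 1 d]

theorem PT.of_travel {w : List ℕ} {k : ℕ} {ms : List ℕ} : ∀ {r l : ℕ}, l ≤ w.length →
    TravelOK w k r (arg k r l) ms → PT w k l r ms := by
  induction ms with
  | nil =>
    rintro r l hl ⟨h1, h2⟩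
    subst h1
    obtain ⟨d, hd⟩ := Nat.exists_eq_add_of_le hl
    have ha : arg k (k + 1) l = l := by simp [arg]
    rw [ha] at h2
    refine PT.down (by omega) l d ?_ hd.ge ?_
    · rw [← hd]; exact PT.halt
    · intro i h3 h4 h5
      exact h2 i (mem_tailList.2 ⟨mem_nodesOn.2 ⟨by omega, h5⟩, h3⟩)
  | cons m ms ih =>
    rintro r l hl ⟨h1, h2, h3, h4, h5⟩
    obtain ⟨h1, h1'⟩ := h1
    obtain ⟨j, rfl⟩ : ∃ j, m = j + 1 := ⟨m - 1, by omega⟩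
    have hp : PT w k (inn k r j) r ((j + 1) :: ms) := by
      refine PT.switch (by omega) h2 (ih ?_ ?_)
      · unfold out; split_ifs <;> omega
      · rwa [arg_out]
    by_cases hr : r ≤ k
    · simp only [arg, inn, hr, if_true] at hp h3 h4
      obtain ⟨d, hd⟩ := Nat.exists_eq_add_of_le (show j + 1 ≤ l by omega)
      subst hd
      refine PT.up hr _ hp d hl ?_
      intro i h6 h7 h8
      exact h4 i (mem_segList.2 ⟨mem_nodesOn.2 ⟨by omega, h8⟩, by omega⟩)
    · simp only [arg, inn, hr, if_false] at hp h3 h4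
      obtain ⟨d, hd⟩ := Nat.exists_eq_add_of_le (show l ≤ j by omega)
      subst hd
      refine PT.down hr _ d hp (by omega) ?_
      intro i h6 h7 h8
      exact h4 i (mem_segList.2 ⟨mem_nodesOn.2 ⟨by omega, h8⟩, by omega⟩)

theorem PT.pass_inv {w : List ℕ} {k r j : ℕ} {ms : List ℕ} (hj : j < w.length)
    (hn : ¬ NodeOnWire w (j + 1) r) (h : PT w k (inn k r j) r ms) :
    PT w k (out k r j) r ms := by
  generalize hl : inn k r j = l at h
  cases h with
  | halt => simp [inn] at hl; omega
  | pass h1 h2 h3 => rw [inn_inj hl]; exact h3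
  | straight h1 h2 h3 => rw [inn_inj hl] at hn; exact absurd h2 hn
  | switch h1 h2 h3 => rw [inn_inj hl] at hn; exact absurd h2 hn

/-! weights -/

/-- weight of a switch. -/
def sw (t : ℕ → ℝ) (m r s : ℕ) : ℝ := if r < s then t (m - 1) else - t (m - 1)

/-- weight of a path. -/
def wt (w : List ℕ) (t : ℕ → ℝ) : ℕ → List ℕ → ℝ
  | _, [] => 0
  | r, m :: ms => sw t m r (otherWire w m r) + wt w t (otherWire w m r) ms

theorem onWire_iff {w : List ℕ} {j r : ℕ} :
    NodeOnWire w j r ↔ r = wireX w j ∨ r = wireY w j := by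
  unfold NodeOnWire; constructor <;> (rintro (h | h) <;> simp [h])

theorem otherX {w : List ℕ} {j : ℕ} : otherWire w j (wireX w j) = wireY w j := by
  simp [otherWire]

theorem otherY {w : List ℕ} {j : ℕ} (h : wireX w j < wireY w j) :
    otherWire w j (wireY w j) = wireX w j := by
  simp [otherWire, h.ne]

theorem pot_iff {w : List ℕ} (hg : Good w) {k : ℕ} {t : ℕ → ℝ} {φ : ℕ → ℕ → ℝ} :
    Pot w k t φ ↔ ∀ j < w.length, ∀ r,
      (¬ NodeOnWire w (j + 1) r → φ (out k r j) r = φ (inn k r j) r) ∧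
      (NodeOnWire w (j + 1) r → ¬ Forbidden w k (j + 1) r → φ (out k r j) r ≤ φ (inn k r j) r) ∧
      (NodeOnWire w (j + 1) r →
        φ (out k (otherWire w (j + 1) r) j) (otherWire w (j + 1) r) ≤
          φ (inn k r j) r + sw t (j + 1) r (otherWire w (j + 1) r)) := by
  refine forall₂_congr fun j hj => ?_
  have hpq := (good_iff w).1 hg j hj
  have o1 := otherX (w := w) (j := j + 1)
  have o2 := otherY hpq
  set p := wireX w (j + 1) with hp
  set q := wireY w (j + 1) with hq
  have hqp := hpq.not_gt
  have key : Node (stepR k (t j)) p q (φ j) (φ (j + 1)) ↔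
      (∀ r, r ≠ p → r ≠ q → φ (out k r j) r = φ (inn k r j) r) ∧
      ((¬ Forbidden w k (j + 1) p → φ (out k p j) p ≤ φ (inn k p j) p) ∧
      φ (out k q j) q ≤ φ (inn k p j) p + t j) ∧
      ((¬ Forbidden w k (j + 1) q → φ (out k q j) q ≤ φ (inn k q j) q) ∧
      φ (out k p j) p ≤ φ (inn k q j) q - t j) := by
    unfold Node Forbidden
    rw [o1, o2]
    refine and_congr ?_ ?_
    · refine forall₃_congr fun r _ _ => ?_
      unfold out inn
      split_ifs
      · exact Iff.rfl
      · exact eq_comm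
    · by_cases h1 : q ≤ k
      · have h2 : p ≤ k := by omega
        rw [stepR_up h1]
        simp only [out, inn, h1, h2, if_true, hpq, hqp, hqp, true_and, and_true, not_true, not_lt.2,
          and_false, or_false, false_and, not_false_eq_true, forall_true_left, IsEmpty.forall_iff]
        tauto
      · by_cases h2 : p ≤ k
        · rw [stepR_mix h2 (by omega)]
          have h3 : ¬ k < p := by omega
          simp only [out, inn, h1, h2, if_true, if_false, hpq, hqp, h3, true_and, and_true,
            not_true, not_lt.2, and_false, or_false, false_and, not_false_eq_true,
            forall_true_left, IsEmpty.forall_iff]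
          tauto
        · rw [stepR_down hpq (by omega)]
          have h3 : k < p := by omega
          have h4 : k < q := by omega
          simp only [out, inn, h1, h2, if_true, if_false, hpq, hqp, h3, h4, true_and, and_true,
            not_true, not_lt.2, and_false, or_false, false_and, false_or, not_false_eq_true,
            forall_true_left, IsEmpty.forall_iff]
          tauto
  rw [key]
  simp only [onWire_iff, ← hp, ← hq]
  constructor
  · rintro ⟨h1, ⟨h2, h3⟩, h4, h5⟩ r
    refine ⟨fun h => h1 r (fun e => h (Or.inl e)) (fun e => h (Or.inr e)), ?_, ?_⟩
    · rintro (rfl | rfl)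
      · exact h2
      · exact h4
    · rintro (rfl | rfl)
      · rw [o1]; simpa [sw, hpq] using h3
      · rw [o2]; simpa [sw, hqp, ← sub_eq_add_neg] using h5
  · intro h
    refine ⟨fun r h1 h2 => (h r).1 (by tauto), ⟨(h p).2.1 (Or.inl rfl), ?_⟩,
      (h q).2.1 (Or.inr rfl), ?_⟩
    · have := (h p).2.2 (Or.inl rfl)
      rw [o1] at this; simpa [sw, hpq] using this
    · have := (h q).2.2 (Or.inr rfl)
      rw [o2] at this; simpa [sw, hqp, ← sub_eq_add_neg] using this

theorem PT.descend {w : List ℕ} (hg : Good w) {k : ℕ} {t : ℕ → ℝ} {φ : ℕ → ℕ → ℝ}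
    (hφ : Pot w k t φ) {l r : ℕ} {ms : List ℕ} (h : PT w k l r ms) :
    φ w.length (k + 1) ≤ φ l r + wt w t r ms := by
  rw [pot_iff hg] at hφ
  induction h with
  | halt => simp [wt]
  | pass h1 h2 _ ih =>
    have := (hφ _ h1 _).1 h2
    rwa [← this]
  | straight h1 h2 h3 _ ih =>
    have := (hφ _ h1 _).2.1 h2 h3
    linarith
  | switch h1 h2 _ ih =>
    have := (hφ _ h1 _).2.2 h2
    rw [wt]
    linarith

theorem exists_pot {w : List ℕ} {k : ℕ} {τ : ℕ → ℕ → ℝ} (hτ : Tau w k 1 τ)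
    (t : ℕ → ℝ) {M : ℝ} (hM : ∀ j < w.length, |t j| ≤ M) (hM0 : 0 ≤ M) :
    Pot w k t (fun l r => - (M * τ l r)) := by
  intro j hj
  obtain ⟨h1, h2⟩ := hτ j hj
  have ht := abs_le.1 (hM j hj)
  refine ⟨fun r a b => by simp only []; rw [h1 r a b], ?_⟩
  simp only [tR] at h2
  simp only [stepR]
  split_ifs at *
  · refine ⟨?_, ?_, ?_⟩ <;> nlinarith
  · refine ⟨?_, ?_, ?_⟩ <;> nlinarith
  · refine ⟨?_, ?_, ?_, ?_⟩ <;> nlinarith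

/-- if all path weights are nonnegative then there is a potential. -/
theorem pcone_of_paths {w : List ℕ} (hg : Good w) {k : ℕ} {t : ℕ → ℝ} {φ0 : ℕ → ℕ → ℝ}
    (hφ : Pot w k t φ0) (h : ∀ ms, PT w k w.length k ms → 0 ≤ wt w t k ms) : PCone w k t := by
  set K := φ0 w.length k with hK
  let S : ℕ → ℕ → Set ℝ := fun l r => {x | x = K - φ0 l r ∨ ∃ ms, PT w k l r ms ∧ x = wt w t r ms}
  have hne : ∀ l r, (S l r).Nonempty := fun l r => ⟨_, Or.inl rfl⟩
  have hbd : ∀ l r, BddBelow (S l r) := by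
    intro l r
    refine ⟨min (K - φ0 l r) (φ0 w.length (k + 1) - φ0 l r), ?_⟩
    rintro x (rfl | ⟨ms, h1, rfl⟩)
    · exact min_le_left _ _
    · refine (min_le_right _ _).trans ?_
      have := h1.descend hg hφ
      linarith
  have hpot := (pot_iff hg).1 hφ
  refine ⟨fun l r => - sInf (S l r), ?_, ?_⟩
  · rw [pot_iff hg]
    intro j hj r
    obtain ⟨p1, p2, p3⟩ := hpot j hj r
    refine ⟨?_, ?_, ?_⟩
    · intro hn
      have : S (out k r j) r = S (inn k r j) r := by
        ext x
        simp only [S, Set.mem_setOf_eq, p1 hn]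
        refine or_congr Iff.rfl (exists_congr fun ms => and_congr ⟨?_, ?_⟩ Iff.rfl)
        · exact PT.pass hj hn
        · exact PT.pass_inv hj hn
      simp only [this]
    · intro hn hf
      have p2 := p2 hn hf
      apply neg_le_neg
      refine le_csInf (hne _ _) ?_
      rintro x (rfl | ⟨ms, h1, rfl⟩)
      · refine (csInf_le (hbd _ _) (Or.inl rfl)).trans ?_
        linarith
      · exact csInf_le (hbd _ _) (Or.inr ⟨ms, PT.straight hj hn hf h1, rfl⟩)
    · intro hn
      have p3 := p3 hn
      suffices hh : sInf (S (inn k r j) r) - sw t (j + 1) r (otherWire w (j + 1) r) ≤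
          sInf (S (out k (otherWire w (j + 1) r) j) (otherWire w (j + 1) r)) by linarith
      refine le_csInf (hne _ _) ?_
      rintro x (rfl | ⟨ms, h1, rfl⟩)
      · have := csInf_le (hbd (inn k r j) r) (Or.inl rfl)
        linarith
      · have := csInf_le (hbd (inn k r j) r) (Or.inr ⟨_, PT.switch hj hn h1, rfl⟩)
        rw [wt] at this
        linarith
  · have h1 : sInf (S w.length (k + 1)) ≤ 0 :=
      csInf_le (hbd _ _) (Or.inr ⟨[], PT.halt, by simp [wt]⟩)
    have h2 : 0 ≤ sInf (S w.length k) := by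
      refine le_csInf (hne _ _) ?_
      rintro x (rfl | ⟨ms, h1, rfl⟩)
      · simp [hK]
      · exact h ms h1
    simp only
    linarith


/-! ### Rigorous paths and the string cone -/

theorem Tau.node {w : List ℕ} (hg : Good w) {k : ℕ} {τ : ℕ → ℕ → ℝ} (hτ : Tau w k 1 τ)
    {j : ℕ} (hj : j < w.length) {r s : ℕ} (hr : NodeOnWire w (j + 1) r)
    (hs : NodeOnWire w (j + 1) s) : τ (inn k r j) r + 1 ≤ τ (out k s j) s := by
  obtain ⟨-, h2⟩ := hτ j hj
  have hpq := (good_iff w).1 hg j hj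
  rw [onWire_iff] at hr hs
  set p := wireX w (j + 1)
  set q := wireY w (j + 1)
  simp only [tR] at h2
  simp only [inn, out]
  split_ifs at h2
  · rcases hr with rfl | rfl <;> rcases hs with rfl | rfl <;> split_ifs <;>
      first | omega | linarith
  · rcases hr with rfl | rfl <;> rcases hs with rfl | rfl <;> split_ifs <;>
      first | omega | linarith
  · rcases hr with rfl | rfl <;> rcases hs with rfl | rfl <;> split_ifs <;>
      first | omega | linarith

theorem Tau.wire {w : List ℕ} (hg : Good w) {k : ℕ} {τ : ℕ → ℕ → ℝ} (hτ : Tau w k 1 τ)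
    {j : ℕ} (hj : j < w.length) (r : ℕ) : τ (inn k r j) r ≤ τ (out k r j) r := by
  by_cases h : NodeOnWire w (j + 1) r
  · linarith [hτ.node hg hj h h]
  · rw [onWire_iff, not_or] at h
    have := (hτ j hj).1 r h.1 h.2
    simp only [inn, out]
    split_ifs
    · exact this.ge
    · exact this.le

theorem Tau.anti {w : List ℕ} (hg : Good w) {k : ℕ} {τ : ℕ → ℕ → ℝ} (hτ : Tau w k 1 τ)
    {r : ℕ} (hr : r ≤ k) {a : ℕ} (d : ℕ) (h : a + d ≤ w.length) : τ (a + d) r ≤ τ a r := by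
  induction d with
  | zero => exact le_rfl
  | succ d ih =>
    have := hτ.wire hg (j := a + d) (by omega) r
    simp only [inn, out, hr, if_true] at this
    exact this.trans (ih (by omega))

theorem Tau.mono {w : List ℕ} (hg : Good w) {k : ℕ} {τ : ℕ → ℕ → ℝ} (hτ : Tau w k 1 τ)
    {r : ℕ} (hr : ¬ r ≤ k) {a : ℕ} (d : ℕ) (h : a + d ≤ w.length) : τ a r ≤ τ (a + d) r := by
  induction d with
  | zero => exact le_rfl
  | succ d ih =>
    have := hτ.wire hg (j := a + d) (by omega) r
    simp only [inn, out, hr, if_false] at this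
    exact (ih (by omega)).trans this

/-- the time at which node `x` is passed. -/
def nodeTime (w : List ℕ) (k : ℕ) (τ : ℕ → ℕ → ℝ) (x : ℕ) : ℝ :=
  max (τ (inn k (wireX w x) (x - 1)) (wireX w x)) (τ (inn k (wireY w x) (x - 1)) (wireY w x))

theorem nodeTime_ge {w : List ℕ} {k : ℕ} {τ : ℕ → ℕ → ℝ} {x r : ℕ} (h : NodeOnWire w x r) :
    τ (inn k r (x - 1)) r ≤ nodeTime w k τ x := by
  rw [onWire_iff] at h
  rcases h with rfl | rfl
  · exact le_max_left _ _
  · exact le_max_right _ _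

theorem nodeTime_lt {w : List ℕ} (hg : Good w) {k : ℕ} {τ : ℕ → ℕ → ℝ} (hτ : Tau w k 1 τ)
    {x r : ℕ} (h1 : 1 ≤ x) (h2 : x ≤ w.length) (h : NodeOnWire w x r) :
    nodeTime w k τ x < τ (out k r (x - 1)) r := by
  obtain ⟨j, rfl⟩ : ∃ j, x = j + 1 := ⟨x - 1, by omega⟩
  simp only [nodeTime, Nat.add_sub_cancel]
  apply max_lt
  · linarith [hτ.node hg (j := j) (by omega) (Or.inl rfl) h]
  · linarith [hτ.node hg (j := j) (by omega) (Or.inr rfl) h]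

theorem other_on {w : List ℕ} {x r : ℕ} : NodeOnWire w x (otherWire w x r) := by
  unfold NodeOnWire otherWire
  split_ifs <;> simp

theorem nodup_nodesOn (w : List ℕ) (r : ℕ) : (nodesOn w r).Nodup := by
  unfold nodesOn
  refine List.Nodup.filter _ (List.Nodup.map ?_ List.nodup_range)
  intro a b h
  simpa using h

theorem visit_nodup {w : List ℕ} (hg : Good w) {k : ℕ} {τ : ℕ → ℕ → ℝ} (hτ : Tau w k 1 τ)
    {ms : List ℕ} : ∀ {r l : ℕ}, l ≤ w.length → TravelOK w k r (arg k r l) ms →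
    (visitTail w r (arg k r l) ms).Nodup ∧
      ∀ x ∈ visitTail w r (arg k r l) ms, τ l r ≤ nodeTime w k τ x := by
  induction ms with
  | nil =>
    rintro r l hl ⟨rfl, -⟩
    simp only [visitTail]
    refine ⟨(nodup_nodesOn _ _).filter _, ?_⟩
    intro x hx
    rw [mem_tailList, mem_nodesOn] at hx
    have hk : ¬ (k + 1 ≤ k) := by omega
    simp only [arg, hk, if_false] at hx
    have h1 := nodeTime_ge (k := k) (τ := τ) hx.1.2
    simp only [inn, hk, if_false] at h1
    have h2 := hτ.mono hg hk (a := l) (x - 1 - l) (by omega)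
    rw [show l + (x - 1 - l) = x - 1 by omega] at h2
    linarith
  | cons m ms ih =>
    rintro r l hl ⟨⟨h1, h1'⟩, h2, h3, h4, h5⟩
    simp only [visitTail]
    have e : arg k (otherWire w m r) (out k (otherWire w m r) (m - 1)) = m := by
      rw [arg_out]; omega
    have ih' := ih (r := otherWire w m r) (l := out k (otherWire w m r) (m - 1))
      (by unfold out; split_ifs <;> omega) (by rwa [e])
    rw [e] at ih'
    obtain ⟨i1, i2⟩ := ih'
    have h6 := nodeTime_lt hg hτ h1 h1' (other_on (w := w) (x := m) (r := r))
    have i3 : ∀ x ∈ visitTail w (otherWire w m r) m ms, nodeTime w k τ m < nodeTime w k τ x :=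
      fun x hx => h6.trans_le (i2 x hx)
    have i4 : τ l r ≤ nodeTime w k τ m ∧ ∀ x ∈ segList w r (arg k r l) m,
        τ l r ≤ nodeTime w k τ x ∧ nodeTime w k τ x < nodeTime w k τ m := by
      have h7 := nodeTime_ge (k := k) (τ := τ) h2
      by_cases hr : r ≤ k
      · simp only [arg, inn, hr, if_true] at h3 h7 ⊢
        rw [Nat.sub_add_cancel h1] at h7
        constructor
        · have := hτ.anti hg hr (a := m) (l - m) (by omega)
          rw [show m + (l - m) = l by omega] at this
          linarith
        · intro x hx
          rw [mem_segList, mem_nodesOn] at hx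
          obtain ⟨⟨x1, x2⟩, x3⟩ := hx
          have x4 := nodeTime_ge (k := k) (τ := τ) x2
          have x5 := nodeTime_lt hg hτ x1.1 x1.2 x2
          simp only [inn, out, hr, if_true] at x4 x5
          rw [Nat.sub_add_cancel x1.1] at x4
          have y1 := hτ.anti hg hr (a := x) (l - x) (by omega)
          have y2 := hτ.anti hg hr (a := m) (x - 1 - m) (by omega)
          rw [show x + (l - x) = l by omega] at y1
          rw [show m + (x - 1 - m) = x - 1 by omega] at y2
          constructor <;> linarith
      · simp only [arg, inn, hr, if_false] at h3 h7 ⊢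
        constructor
        · have := hτ.mono hg hr (a := l) (m - 1 - l) (by omega)
          rw [show l + (m - 1 - l) = m - 1 by omega] at this
          linarith
        · intro x hx
          rw [mem_segList, mem_nodesOn] at hx
          obtain ⟨⟨x1, x2⟩, x3⟩ := hx
          have x4 := nodeTime_ge (k := k) (τ := τ) x2
          have x5 := nodeTime_lt hg hτ x1.1 x1.2 x2
          simp only [inn, out, hr, if_false] at x4 x5
          rw [Nat.sub_add_cancel x1.1] at x5
          have y1 := hτ.mono hg hr (a := l) (x - 1 - l) (by omega)
          have y2 := hτ.mono hg hr (a := x) (m - 1 - x) (by omega)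
          rw [show l + (x - 1 - l) = x - 1 by omega] at y1
          rw [show x + (m - 1 - x) = m - 1 by omega] at y2
          constructor <;> linarith
    constructor
    · rw [List.nodup_append']
      refine ⟨(nodup_nodesOn _ _).filter _, ?_, ?_⟩
      · rw [List.nodup_cons]
        exact ⟨fun h => lt_irrefl _ (i3 _ h), i1⟩
      · intro x hx hx'
        have y := (i4.2 x hx).2
        rcases List.mem_cons.1 hx' with rfl | h
        · exact lt_irrefl _ y
        · exact lt_asymm y (i3 _ h)
    · intro x hx
      rcases List.mem_append.1 hx with h | h
      · exact (i4.2 x h).1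
      · rcases List.mem_cons.1 h with rfl | h
        · exact i4.1
        · exact i4.1.trans (i3 _ h).le

theorem seg_eq_tail {w : List ℕ} {k m : ℕ} (hm : m ≤ w.length) :
    segList w k (w.length + 1) m = tailList w k m := by
  unfold segList tailList
  apply List.filter_congr
  intro x hx
  rw [mem_nodesOn] at hx
  rw [decide_eq_decide]
  omega

theorem isGP_iff {n : ℕ} {w : List ℕ} (hg : Good w) {k : ℕ} {τ : ℕ → ℕ → ℝ}
    (hτ : Tau w k 1 τ) {ms : List ℕ} :
    IsGPPath n w k ms ↔ 1 ≤ k ∧ k ≤ n ∧ PT w k w.length k ms := by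
  have ha : arg k k w.length = w.length + 1 := by simp [arg]
  unfold IsGPPath
  refine and_congr_right fun h1 => and_congr_right fun h2 => ?_
  cases ms with
  | nil =>
    simp only [false_and, false_iff]
    intro h
    have := h.travel
    simp only [TravelOK] at this
    omega
  | cons m ms =>
    simp only [visitList]
    constructor
    · rintro ⟨⟨h3, h4, h5, h6⟩, -⟩
      refine PT.of_travel le_rfl ?_
      rw [ha]
      refine ⟨h3, h4, ?_, ?_, h6⟩
      · rw [if_pos le_rfl]; have := h3.2; omega
      · rwa [seg_eq_tail h3.2]
    · intro h
      have h' := h.travel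
      have hv := (visit_nodup hg hτ le_rfl h').1
      rw [ha] at h' hv
      obtain ⟨h3, h4, h5, h6, h7⟩ := h'
      simp only [visitTail] at hv
      rw [seg_eq_tail h3.2] at h6 hv
      exact ⟨⟨h3, h4, h6, h7⟩, hv⟩

theorem PT.valid {w : List ℕ} {k l r : ℕ} {ms : List ℕ} (h : PT w k l r ms) :
    ∀ m ∈ ms, ValidNode w m := by
  induction h with
  | halt => simp
  | pass _ _ _ ih => exact ih
  | straight _ _ _ _ ih => exact ih
  | switch h1 _ _ ih =>
    intro m hm
    rcases List.mem_cons.1 hm with rfl | h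
    · exact ⟨by omega, by omega⟩
    · exact ih m h

theorem coeff_sum {n : ℕ} {w : List ℕ} (hw : w.length = Dim n) (t : Fin (Dim n) → ℝ)
    {ms : List ℕ} : ∀ {r : ℕ}, (∀ m ∈ ms, ValidNode w m) →
    ∑ j : Fin (Dim n), coeff w r ms ((j : ℕ) + 1) * t j = wt w (entry n t) r ms := by
  induction ms with
  | nil => intro r _; simp [coeff, pathSwitches, wt]
  | cons m ms ih =>
    intro r hv
    have ih' := ih (r := otherWire w m r) (fun x hx => hv x (List.mem_cons_of_mem _ hx))
    have hm := hv m List.mem_cons_self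
    obtain ⟨hm1, hm2⟩ := hm
    have e : ∀ j, coeff w r (m :: ms) j =
        (if m = j then (if r < otherWire w m r then (1 : ℝ) else -1) else 0) +
          coeff w (otherWire w m r) ms j := by
      intro j
      simp [coeff, pathSwitches]
    simp only [e, add_mul, Finset.sum_add_distrib, ih', wt]
    congr 1
    have hlt : m - 1 < Dim n := by omega
    rw [Finset.sum_eq_single ⟨m - 1, hlt⟩]
    · have : m = m - 1 + 1 := by omega
      simp only [sw, entry, hlt, dif_pos, ← this, if_true]
      split_ifs <;> simp
    · intro b _ hb
      have : m ≠ (b : ℕ) + 1 := by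
        intro h
        apply hb
        ext
        simp [h]
      simp [this]
    · simp

theorem mem_stringCone_iff {n : ℕ} {w : List ℕ} (hw : IsReduced n w)
    (hτ : ∀ k, 1 ≤ k → k ≤ n → ∃ τ, Tau w k 1 τ) (t : Fin (Dim n) → ℝ) :
    t ∈ stringCone n w ↔ ∀ k, 1 ≤ k → k ≤ n → PCone w k (entry n t) := by
  have hg := hw.good
  have hl : w.length = Dim n := hw.1
  constructor
  · intro h k h1 h2
    obtain ⟨τ, hτ⟩ := hτ k h1 h2
    have hM : ∀ j < w.length, |entry n t j| ≤ ∑ i ∈ Finset.range w.length, |entry n t i| := by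
      intro j hj
      exact Finset.single_le_sum (f := fun i => |entry n t i|) (fun i _ => abs_nonneg _)
        (Finset.mem_range.2 hj)
    refine pcone_of_paths hg (exists_pot hτ _ hM (Finset.sum_nonneg fun i _ => abs_nonneg _)) ?_
    intro ms hms
    have := h (k, ms) ((isGP_iff hg hτ).2 ⟨h1, h2, hms⟩)
    unfold stringIneq normalVec at this
    rwa [coeff_sum hl t hms.valid] at this
  · rintro h ⟨k, ms⟩ hp
    have hp' : IsGPPath n w k ms := hp
    obtain ⟨τ, hτ⟩ := hτ k hp'.1 hp'.2.1
    rw [isGP_iff hg hτ] at hp'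
    obtain ⟨h1, h2, hms⟩ := hp'
    obtain ⟨φ, hφ, hφ'⟩ := h k h1 h2
    have := hms.descend hg hφ
    unfold stringIneq normalVec
    rw [coeff_sum hl t hms.valid]
    linarith


/-! ### The base word -/

theorem base_ext {n : ℕ} {S : ℕ → ℕ → ℕ → ℝ → ℝ → ℝ → ℝ → Prop} {φ0 : ℕ → ℕ → ℝ}
    (hφ : Dia (baseWord n) S φ0) (η Ψ : ℕ → ℝ)
    (h : ∀ i < n + 1, S (Dim n + i) (i + 1) (n + 2) (φ0 (Dim n) (i + 1)) (η i) (Ψ (i + 1))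
      (η (i + 1))) :
    ∃ φ, Dia (baseWord (n + 1)) S φ ∧ (∀ r, 1 ≤ r → r ≤ n + 1 → φ (Dim (n + 1)) r = Ψ r) ∧
      φ (Dim (n + 1)) (n + 2) = η (n + 1) := by
  have hD := Dim_succ n
  refine ⟨fun l r => if r = n + 2 then η (l - Dim n) else
    if 1 ≤ r ∧ Dim n + r ≤ l then Ψ r else φ0 (min l (Dim n)) r, ?_, ?_, ?_⟩
  · intro j hj
    rw [baseWord_length, hD] at hj
    by_cases hj' : j < Dim n
    · have hw := base_wires hj'
      have hd := hφ j (by rwa [baseWord_length])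
      rw [base_wireX_left hj', base_wireY_left hj']
      set p := wireX (baseWord n) (j + 1)
      set q := wireY (baseWord n) (j + 1)
      obtain ⟨d1, d2⟩ := hd
      have e1 : min j (Dim n) = j := by omega
      have e2 : min (j + 1) (Dim n) = j + 1 := by omega
      have e3 : j - Dim n = 0 := by omega
      have e4 : j + 1 - Dim n = 0 := by omega
      have e5 : ∀ r, ¬ (1 ≤ r ∧ Dim n + r ≤ j) := by intro r; omega
      have e6 : ∀ r, ¬ (1 ≤ r ∧ Dim n + r ≤ j + 1) := by intro r; omega
      have e7 : p ≠ n + 2 := by omega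
      have e8 : q ≠ n + 2 := by omega
      refine ⟨fun r hp hq => ?_, ?_⟩
      · simp only [e1, e2, e3, e4, e5, e6, if_false, d1 r hp hq]
      · simp only [e1, e2, e5, e6, if_false, e7, e8]
        exact d2
    · obtain ⟨i, rfl⟩ : ∃ i, j = Dim n + i := ⟨j - Dim n, by omega⟩
      have hi : i < n + 1 := by omega
      rw [base_wireX hi, base_wireY hi]
      have e1 : min (Dim n + i) (Dim n) = Dim n := by omega
      have e2 : min (Dim n + i + 1) (Dim n) = Dim n := by omega
      have e3 : Dim n + i - Dim n = i := by omega
      have e4 : Dim n + i + 1 - Dim n = i + 1 := by omega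
      refine ⟨fun r hp hq => ?_, ?_⟩
      · simp only [hq, if_false, e1, e2]
        have : (1 ≤ r ∧ Dim n + r ≤ Dim n + i) ↔ (1 ≤ r ∧ Dim n + r ≤ Dim n + i + 1) := by omega
        simp only [this]
      · have e5 : ¬ (i + 1 = n + 2) := by omega
        have e6 : ¬ (1 ≤ i + 1 ∧ Dim n + (i + 1) ≤ Dim n + i) := by omega
        have e7 : (1 ≤ i + 1 ∧ Dim n + (i + 1) ≤ Dim n + i + 1) := by omega
        simp only [e5, e6, if_pos e7, if_false, if_true, e1, e3, e4]
        exact h i hi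
  · intro r h1 h2
    have e5 : ¬ (r = n + 2) := by omega
    have e7 : (1 ≤ r ∧ Dim n + r ≤ Dim (n + 1)) := by omega
    simp only [e5, if_pos e7, if_false]
  · simp only [if_true]
    congr 1; omega

theorem base_restrict {n : ℕ} {S : ℕ → ℕ → ℕ → ℝ → ℝ → ℝ → ℝ → Prop} {φ : ℕ → ℕ → ℝ}
    (h : Dia (baseWord (n + 1)) S φ) : Dia (baseWord n) S φ ∧
    ∀ i < n + 1, S (Dim n + i) (i + 1) (n + 2) (φ (Dim n) (i + 1)) (φ (Dim n + i) (n + 2))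
      (φ (Dim (n + 1)) (i + 1)) (φ (Dim n + (i + 1)) (n + 2)) := by
  have hD := Dim_succ n
  have hl : (baseWord (n + 1)).length = Dim n + (n + 1) := by rw [baseWord_length, hD]
  refine ⟨?_, ?_⟩
  · intro j hj
    rw [baseWord_length] at hj
    have := h j (by omega)
    rwa [base_wireX_left hj, base_wireY_left hj] at this
  · have key : ∀ i < n + 1, Node (S (Dim n + i)) (i + 1) (n + 2) (φ (Dim n + i))
        (φ (Dim n + (i + 1))) := by
      intro i hi
      have := h (Dim n + i) (by omega)
      rwa [base_wireX hi, base_wireY hi] at this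
    intro i hi
    have a : ∀ d ≤ i, φ (Dim n + d) (i + 1) = φ (Dim n) (i + 1) := by
      intro d hd
      induction d with
      | zero => rfl
      | succ d ih => rw [← ih (by omega), (key d (by omega)).1 (i + 1) (by omega) (by omega)]
    have b : ∀ d, i + 1 + d ≤ n + 1 →
        φ (Dim n + (i + 1 + d)) (i + 1) = φ (Dim n + (i + 1)) (i + 1) := by
      intro d hd
      induction d with
      | zero => rfl
      | succ d ih =>
        rw [← ih (by omega), (key (i + 1 + d) (by omega)).1 (i + 1) (by omega) (by omega)]
        rfl
    have b' := b (n - i) (by omega)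
    rw [show i + 1 + (n - i) = n + 1 by omega, ← hD] at b'
    have := (key i hi).2
    rwa [a i le_rfl, ← b'] at this

theorem abs_le_bound (f : ℕ → ℝ) {m r : ℕ} (h : r < m) :
    |f r| ≤ ∑ i ∈ Finset.range m, |f i| :=
  Finset.single_le_sum (f := fun i => |f i|) (fun i _ => abs_nonneg _) (Finset.mem_range.2 h)

theorem base_tau (n k : ℕ) : ∃ τ, Tau (baseWord n) k 1 τ := by
  induction n with
  | zero => exact ⟨fun _ _ => 0, fun j hj => by simp [baseWord] at hj⟩
  | succ n ih =>
    obtain ⟨τ, hτ⟩ := ih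
    set H := ∑ r ∈ Finset.range (n + 2), |τ (Dim n) r| with hH
    have hb : ∀ r < n + 2, -H ≤ τ (Dim n) r ∧ τ (Dim n) r ≤ H :=
      fun r hr => abs_le.1 (abs_le_bound (τ (Dim n)) hr)
    obtain ⟨φ, hφ, -⟩ := base_ext hτ
      (fun i => if n + 2 ≤ k then -H - i else if i ≤ k then -H - (n + 2) + i else H + i)
      (fun j => if n + 2 ≤ k then -H - j else if j ≤ k then -H - (n + 2) else H + j) (by
        intro i hi
        obtain ⟨b1, b2⟩ := hb (i + 1) (by omega)
        have hi' : (i : ℝ) ≤ n := by exact_mod_cast (by omega : i ≤ n)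
        have hi0 : (0 : ℝ) ≤ i := Nat.cast_nonneg _
        by_cases h1 : n + 2 ≤ k
        · rw [tR_up h1]
          simp only [if_pos h1]
          push_cast
          refine ⟨⟨?_, ?_⟩, ?_, ?_⟩ <;> linarith
        · by_cases h2 : i + 1 ≤ k
          · rw [tR_mix h2 (by omega)]
            have h3 : i ≤ k := by omega
            simp only [h1, h2, h3, if_true, if_false]
            push_cast
            refine ⟨⟨?_, ?_⟩, ?_, ?_⟩ <;> linarith
          · rw [tR_down (by omega) (by omega)]
            simp only [h1, h2, if_false]
            push_cast
            have hle : (if i ≤ k then -H - (n + 2) + i else H + i) ≤ H + i := by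
              split_ifs
              · linarith
              · exact le_rfl
            refine ⟨⟨?_, ?_⟩, ?_, ?_⟩ <;> linarith)
    exact ⟨φ, hφ⟩

theorem base_pcone_lt {n k : ℕ} (h1 : 1 ≤ k) (hk : k ≤ n) (t : ℕ → ℝ) :
    PCone (baseWord (n + 1)) k t ↔
      PCone (baseWord n) k t ∧ t (Dim n + k) ≤ t (Dim n + (k - 1)) := by
  obtain ⟨c, rfl⟩ : ∃ c, k = c + 1 := ⟨k - 1, by omega⟩
  simp only [Nat.add_sub_cancel]
  unfold PCone
  simp only [baseWord_length]
  constructor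
  · rintro ⟨φ, hφ, hle⟩
    obtain ⟨r1, r2⟩ := base_restrict hφ
    have n1 := r2 c (by omega)
    have n2 := r2 (c + 1) (by omega)
    rw [stepR_mix le_rfl (by omega)] at n1
    rw [stepR_down (by omega) (by omega)] at n2
    exact ⟨⟨φ, r1, by linarith⟩, by linarith⟩
  · rintro ⟨⟨φ, hφ, hle⟩, hs⟩
    set H := (∑ r ∈ Finset.range (n + 2), |φ (Dim n) r|) +
      ∑ i ∈ Finset.range (n + 1), |t (Dim n + i)| with hH
    have hb : ∀ i < n + 1, |φ (Dim n) (i + 1)| + |t (Dim n + i)| ≤ H := fun i hi =>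
      add_le_add (abs_le_bound (φ (Dim n)) (by omega)) (abs_le_bound (fun i => t (Dim n + i)) hi)
    obtain ⟨ψ, hψ, hψ1, hψ2⟩ := base_ext hφ
      (fun i => if i < c + 1 then H else if i = c + 1 then φ (Dim n) (c + 1) + t (Dim n + c)
        else -H)
      (fun j => if j < c + 1 then 2 * H else if j = c + 1 then φ (Dim n) (c + 1) else
        if j = c + 2 then min (φ (Dim n) (c + 2))
          (φ (Dim n) (c + 1) + t (Dim n + c) - t (Dim n + (c + 1))) else - (2 * H)) (by
        intro i hi
        have b := hb i hi
        have a1 := neg_abs_le (φ (Dim n) (i + 1))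
        have a2 := le_abs_self (φ (Dim n) (i + 1))
        have a3 := neg_abs_le (t (Dim n + i))
        have a4 := le_abs_self (t (Dim n + i))
        rcases lt_trichotomy i c with h | h | h
        · rw [stepR_mix (by omega) (by omega)]
          have e1 : i < c + 1 := by omega
          have e2 : i + 1 < c + 1 := by omega
          simp only [e1, e2, if_true]
          refine ⟨?_, ?_, ?_, ?_⟩ <;> linarith
        · subst h
          rw [stepR_mix (by omega) (by omega)]
          simp only [lt_irrefl, Nat.lt_succ_self, if_true, if_false]
          refine ⟨?_, ?_, ?_, ?_⟩ <;> linarith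
        · rw [stepR_down (by omega) (by omega)]
          by_cases h' : i = c + 1
          · subst h'
            have e1 : ¬ (c + 1 + 1 < c + 1) := by omega
            have e2 : ¬ (c + 1 + 1 = c + 1) := by omega
            simp only [e1, e2, lt_irrefl, if_true, if_false]
            refine ⟨min_le_left _ _, ?_, min_le_right _ _⟩
            linarith
          · have e1 : ¬ (i < c + 1) := by omega
            have e2 : ¬ (i + 1 < c + 1) := by omega
            have e3 : ¬ (i + 1 = c + 1) := by omega
            have e4 : ¬ (i + 1 = c + 2) := by omega
            simp only [e1, e2, e3, e4, h', if_false]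
            refine ⟨?_, ?_, ?_⟩ <;> linarith)
    refine ⟨ψ, hψ, ?_⟩
    rw [hψ1 _ (by omega) (by omega), hψ1 _ (by omega) (by omega)]
    have e1 : ¬ (c + 1 + 1 < c + 1) := by omega
    have e2 : ¬ (c + 1 + 1 = c + 1) := by omega
    simp only [e1, e2, lt_irrefl, if_true, if_false]
    exact le_min hle (by linarith)

theorem base_pcone_eq {n : ℕ} (t : ℕ → ℝ) :
    PCone (baseWord (n + 1)) (n + 1) t ↔ 0 ≤ t (Dim n + n) := by
  unfold PCone
  simp only [baseWord_length]
  constructor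
  · rintro ⟨φ, hφ, hle⟩
    obtain ⟨r1, r2⟩ := base_restrict hφ
    have n1 := r2 n (by omega)
    rw [stepR_mix le_rfl (by omega), ← Dim_succ] at n1
    rw [show n + 1 + 1 = n + 2 from rfl] at hle
    linarith
  · intro hs
    obtain ⟨τ, hτ⟩ := base_tau n (n + 1)
    have hφ := exists_pot hτ t (M := ∑ i ∈ Finset.range (baseWord n).length, |t i|)
      (fun j hj => abs_le_bound t hj) (Finset.sum_nonneg fun i _ => abs_nonneg _)
    set φ : ℕ → ℕ → ℝ := fun l r => -((∑ i ∈ Finset.range (baseWord n).length, |t i|) * τ l r)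
    set H := (∑ r ∈ Finset.range (n + 2), |φ (Dim n) r|) +
      ∑ i ∈ Finset.range (n + 1), |t (Dim n + i)| with hH
    have hb : ∀ i < n + 1, |φ (Dim n) (i + 1)| + |t (Dim n + i)| ≤ H := fun i hi =>
      add_le_add (abs_le_bound (φ (Dim n)) (by omega)) (abs_le_bound (fun i => t (Dim n + i)) hi)
    obtain ⟨ψ, hψ, hψ1, hψ2⟩ := base_ext hφ
      (fun i => if i < n + 1 then H else φ (Dim n) (n + 1) + t (Dim n + n))
      (fun j => if j < n + 1 then 2 * H else φ (Dim n) (n + 1)) (by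
        intro i hi
        have b := hb i hi
        have a1 := neg_abs_le (φ (Dim n) (i + 1))
        have a2 := le_abs_self (φ (Dim n) (i + 1))
        have a3 := neg_abs_le (t (Dim n + i))
        have a4 := le_abs_self (t (Dim n + i))
        rw [stepR_mix (by omega) (by omega)]
        by_cases h : i < n
        · have e1 : i < n + 1 := by omega
          have e2 : i + 1 < n + 1 := by omega
          simp only [e1, e2, if_true]
          refine ⟨?_, ?_, ?_, ?_⟩ <;> linarith
        · have h : i = n := by omega
          subst h
          simp only [lt_irrefl, Nat.lt_succ_self, if_true, if_false]
          refine ⟨?_, ?_, ?_, ?_⟩ <;> linarith)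
    refine ⟨ψ, hψ, ?_⟩
    rw [hψ1 _ (by omega) (by omega), hψ2]
    simp only [lt_irrefl, if_false]
    linarith

/-- the chain cone for functions on `ℕ`. -/
def Chain (n : ℕ) (t : ℕ → ℝ) : Prop :=
  ∀ m < n, ∀ i ≤ m, (if i = m then 0 else t (Dim m + (i + 1))) ≤ t (Dim m + i)

theorem base_chain (n : ℕ) (t : ℕ → ℝ) :
    (∀ k, 1 ≤ k → k ≤ n → PCone (baseWord n) k t) ↔ Chain n t := by
  induction n with
  | zero =>
    constructor
    · intro _ m hm; omega
    · intro _ k h1 h2; omega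
  | succ n ih =>
    have hc : Chain (n + 1) t ↔ Chain n t ∧
        ∀ i ≤ n, (if i = n then 0 else t (Dim n + (i + 1))) ≤ t (Dim n + i) := by
      constructor
      · intro h
        exact ⟨fun m hm => h m (by omega), h n (by omega)⟩
      · rintro ⟨h1, h2⟩ m hm
        rcases Nat.lt_succ_iff_lt_or_eq.1 hm with h | rfl
        · exact h1 m h
        · exact h2
    rw [hc, ← ih]
    constructor
    · intro h
      refine ⟨fun k h1 h2 => ((base_pcone_lt h1 h2 t).1 (h k h1 (by omega))).1, ?_⟩
      intro i hi
      split_ifs with h'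
      · subst h'
        exact (base_pcone_eq t).1 (h _ (by omega) le_rfl)
      · have h2 : i + 1 ≤ n := by omega
        exact ((base_pcone_lt (by omega) h2 t).1 (h (i + 1) (by omega) (by omega))).2
    · rintro ⟨h1, h2⟩ k hk1 hk2
      by_cases h' : k = n + 1
      · subst h'
        have := h2 n le_rfl
        rw [if_pos rfl] at this
        exact (base_pcone_eq t).2 this
      · have hk : k ≤ n := by omega
        rw [base_pcone_lt hk1 hk t]
        refine ⟨h1 k hk1 hk, ?_⟩
        have := h2 (k - 1) (by omega)
        rwa [if_neg (by omega), Nat.sub_add_cancel hk1] at this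

theorem reduced_tau {n : ℕ} {w : List ℕ} (hw : IsReduced n w) (k : ℕ) : ∃ τ, Tau w k 1 τ :=
  reduced_induction (Q := fun w => ∃ τ, Tau w k 1 τ) (base_tau n k)
    (fun _ _ h1 _ hs h => Tau.step h1.good hs h) hw

theorem mem_stringCone {n : ℕ} {w : List ℕ} (hw : IsReduced n w) (t : Fin (Dim n) → ℝ) :
    t ∈ stringCone n w ↔ ∀ k, 1 ≤ k → k ≤ n → PCone w k (entry n t) :=
  mem_stringCone_iff hw (fun k _ _ => reduced_tau hw k) t

theorem mem_stringCone_base {n : ℕ} (t : Fin (Dim n) → ℝ) :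
    t ∈ stringCone n (baseWord n) ↔ Chain n (entry n t) := by
  rw [mem_stringCone (isReduced_base n), base_chain]


/-! ### The lambda cone -/

/-- coefficient of a node in column `l` in the inequality of a node in column `c`. -/
def cf (l c : ℕ) : ℝ := if l = c then -2 else if l = c + 1 ∨ l + 1 = c then 1 else 0

/-- the sum over all nodes from index `j` on. -/
def tailS (w : List ℕ) (N c j : ℕ) (e : ℕ → ℝ) : ℝ :=
  ∑ k ∈ Finset.Ico j N, cf (letterAt w (k + 1)) c * e k

/-- one lambda inequality. -/
def LamP (w : List ℕ) (N : ℕ) (lam : ℕ → ℤ) (e : ℕ → ℝ) (j : ℕ) : Prop :=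
  e j ≤ lam (letterAt w (j + 1)) + tailS w N (letterAt w (j + 1)) (j + 1) e

theorem entry_coe {n : ℕ} (t : Fin (Dim n) → ℝ) (j : Fin (Dim n)) : entry n t j = t j := by
  simp [entry]

theorem mem_lamCone {n : ℕ} {w : List ℕ} {lam : ℕ → ℤ} {t : Fin (Dim n) → ℝ} :
    t ∈ lamCone n w lam ↔ ∀ j < Dim n, LamP w (Dim n) lam (entry n t) j := by
  have key : ∀ j : Fin (Dim n), LamIneq n w lam j t ↔ LamP w (Dim n) lam (entry n t) j := by
    intro j
    unfold LamIneq LamP tailS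
    have : ∑ k : Fin (Dim n),
        (if (j : ℕ) < (k : ℕ) then lamCoeff w ((j : ℕ) + 1) ((k : ℕ) + 1) else 0) * t k =
        ∑ k ∈ Finset.range (Dim n),
          (if (j : ℕ) < k then lamCoeff w ((j : ℕ) + 1) (k + 1) else 0) * entry n t k := by
      rw [Finset.sum_range]
      simp only [entry_coe]
    rw [this, entry_coe]
    have h2 : Finset.Ico ((j : ℕ) + 1) (Dim n) =
        (Finset.range (Dim n)).filter (fun k => (j : ℕ) < k) := by
      ext k
      simp only [Finset.mem_Ico, Finset.mem_filter, Finset.mem_range]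
      omega
    rw [h2, Finset.sum_filter]
    have h3 : ∀ k, (if (j : ℕ) < k then lamCoeff w ((j : ℕ) + 1) (k + 1) else 0) * entry n t k =
        if (j : ℕ) < k then cf (letterAt w (k + 1)) (letterAt w ((j : ℕ) + 1)) * entry n t k
          else 0 := by
      intro k
      split_ifs
      · rfl
      · simp
    simp only [h3]
  constructor
  · intro h j hj
    exact (key ⟨j, hj⟩).1 (h ⟨j, hj⟩)
  · intro h j
    exact (key j).2 (h j j.2)

theorem tailS_succ {w : List ℕ} {N c j : ℕ} {e : ℕ → ℝ} (h : j < N) :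
    tailS w N c j e = cf (letterAt w (j + 1)) c * e j + tailS w N c (j + 1) e :=
  Finset.sum_eq_sum_Ico_succ_bot h _

theorem tailS_congr {w w' : List ℕ} {N c j : ℕ} {e e' : ℕ → ℝ}
    (h : ∀ k, j ≤ k → letterAt w' (k + 1) = letterAt w (k + 1) ∧ e' k = e k) :
    tailS w' N c j e' = tailS w N c j e := by
  refine Finset.sum_congr rfl fun k hk => ?_
  rw [Finset.mem_Ico] at hk
  rw [(h k hk.1).1, (h k hk.1).2]

theorem tailS_congr' {w w' : List ℕ} {N c j m : ℕ} {e e' : ℕ → ℝ} (hj : j ≤ m) (hm : m ≤ N)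
    (h : ∀ k < m, letterAt w' (k + 1) = letterAt w (k + 1) ∧ e' k = e k)
    (h2 : tailS w' N c m e' = tailS w N c m e) :
    tailS w' N c j e' = tailS w N c j e := by
  unfold tailS at *
  rw [← Finset.sum_Ico_consecutive _ hj hm, ← Finset.sum_Ico_consecutive _ hj hm, h2]
  congr 1
  refine Finset.sum_congr rfl fun k hk => ?_
  rw [Finset.mem_Ico] at hk
  rw [(h k hk.2).1, (h k hk.2).2]

theorem cf_self (a : ℕ) : cf a a = -2 := by simp [cf]
theorem cf_right (a : ℕ) : cf (a + 1) a = 1 := by simp [cf]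
theorem cf_left (a : ℕ) : cf a (a + 1) = 1 := by simp [cf]
theorem cf_far {a b : ℕ} (h : a + 1 < b ∨ b + 1 < a) : cf a b = 0 := by
  unfold cf
  rw [if_neg (by omega), if_neg (by omega)]

theorem lam_three {u v : List ℕ} {a N : ℕ} {lam : ℕ → ℤ} {t t' : ℕ → ℝ}
    (hN : u.length + 3 ≤ N)
    (ht : ∀ j, (j < u.length ∨ u.length + 3 ≤ j) → t' j = t j)
    (h0 : t' u.length = max (t (u.length + 2)) (t (u.length + 1) - t u.length))
    (h1 : t' (u.length + 1) = t u.length + t (u.length + 2))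
    (h2 : t' (u.length + 2) = min (t u.length) (t (u.length + 1) - t (u.length + 2))) :
    (∀ j < N, LamP (u ++ [a, a + 1, a] ++ v) N lam t j) ↔
    (∀ j < N, LamP (u ++ [a + 1, a, a + 1] ++ v) N lam t' j) := by
  have hout := fun j hj => (wire_out (u := u) (v := v) (mid := [a, a + 1, a])
    (mid' := [a + 1, a, a + 1]) rfl (three_prod a) (j := j) hj).2.2
  simp only [List.length_cons, List.length_nil] at hout
  have a0 : letterAt (u ++ [a, a + 1, a] ++ v) (u.length + 0 + 1) = a :=
    (wire_mid (u := u) (v := v) (mid := [a, a + 1, a]) (i := 0) (by simp)).2.2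
  have a1 : letterAt (u ++ [a, a + 1, a] ++ v) (u.length + 1 + 1) = a + 1 :=
    (wire_mid (u := u) (v := v) (mid := [a, a + 1, a]) (i := 1) (by simp)).2.2
  have a2 : letterAt (u ++ [a, a + 1, a] ++ v) (u.length + 2 + 1) = a :=
    (wire_mid (u := u) (v := v) (mid := [a, a + 1, a]) (i := 2) (by simp)).2.2
  have b0 : letterAt (u ++ [a + 1, a, a + 1] ++ v) (u.length + 0 + 1) = a + 1 :=
    (wire_mid (u := u) (v := v) (mid := [a + 1, a, a + 1]) (i := 0) (by simp)).2.2
  have b1 : letterAt (u ++ [a + 1, a, a + 1] ++ v) (u.length + 1 + 1) = a :=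
    (wire_mid (u := u) (v := v) (mid := [a + 1, a, a + 1]) (i := 1) (by simp)).2.2
  have b2 : letterAt (u ++ [a + 1, a, a + 1] ++ v) (u.length + 2 + 1) = a + 1 :=
    (wire_mid (u := u) (v := v) (mid := [a + 1, a, a + 1]) (i := 2) (by simp)).2.2
  generalize hw : u ++ [a, a + 1, a] ++ v = w at *
  generalize hw' : u ++ [a + 1, a, a + 1] ++ v = w' at *
  generalize u.length = m at *
  simp only [add_zero] at a0 b0
  have T3 : ∀ c j, m + 3 ≤ j → tailS w' N c j t' = tailS w N c j t := fun c j hj =>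
    tailS_congr fun k hk => ⟨hout k (by omega), ht k (by omega)⟩
  have eT : ∀ c, tailS w N c m t = cf a c * t m + (cf (a + 1) c * t (m + 1) +
      (cf a c * t (m + 2) + tailS w N c (m + 3) t)) := by
    intro c
    rw [tailS_succ (by omega), tailS_succ (by omega), tailS_succ (by omega), a0, a1, a2]
  have eT' : ∀ c, tailS w' N c m t' = cf (a + 1) c * t' m + (cf a c * t' (m + 1) +
      (cf (a + 1) c * t' (m + 2) + tailS w' N c (m + 3) t')) := by
    intro c
    rw [tailS_succ (by omega), tailS_succ (by omega), tailS_succ (by omega), b0, b1, b2]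
  have hsum : t' m + t' (m + 2) = t (m + 1) := by
    rw [h0, h2]
    rcases le_total (t (m + 2)) (t (m + 1) - t m) with h | h
    · rw [max_eq_right h, min_eq_left (by linarith)]; ring
    · rw [max_eq_left h, min_eq_right (by linarith)]; ring
  have T0 : ∀ c, tailS w' N c m t' = tailS w N c m t := by
    intro c
    rw [eT, eT', T3 c _ le_rfl, ← hsum, h1]
    ring
  have T0' : ∀ c j, j ≤ m → tailS w' N c j t' = tailS w N c j t := fun c j hj =>
    tailS_congr' hj (by omega) (fun k hk => ⟨hout k (by omega), ht k (by omega)⟩) (T0 c)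
  have split : ∀ P : ℕ → Prop, (∀ j < N, P j) ↔ (∀ j < N, (j < m ∨ m + 3 ≤ j) → P j) ∧
      P (m + 2) ∧ P (m + 1) ∧ P m := by
    intro P
    constructor
    · intro h
      exact ⟨fun j hj _ => h j hj, h _ (by omega), h _ (by omega), h _ (by omega)⟩
    · rintro ⟨h1, h2, h3, h4⟩ j hj
      by_cases h : j < m ∨ m + 3 ≤ j
      · exact h1 j hj h
      · have : j = m ∨ j = m + 1 ∨ j = m + 2 := by omega
        rcases this with rfl | rfl | rfl <;> assumption
  rw [split, split (LamP w' N lam t')]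
  refine and_congr ?_ ?_
  · refine forall₃_congr fun j hj hj' => ?_
    unfold LamP
    rw [ht j hj', hout j hj']
    rcases hj' with h | h
    · rw [T0' _ _ (by omega)]
    · rw [T3 _ _ (by omega)]
  · have s1 : ∀ c, tailS w N c (m + 1 + 1) t = cf a c * t (m + 2) + tailS w N c (m + 3) t := by
      intro c
      rw [tailS_succ (by omega), a2]
    have s0 : ∀ c, tailS w N c (m + 1) t = cf (a + 1) c * t (m + 1) +
        (cf a c * t (m + 2) + tailS w N c (m + 3) t) := by
      intro c
      rw [tailS_succ (by omega), s1, a1]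
    have s1' : ∀ c, tailS w' N c (m + 1 + 1) t' =
        cf (a + 1) c * t' (m + 2) + tailS w' N c (m + 3) t' := by
      intro c
      rw [tailS_succ (by omega), b2]
    have s0' : ∀ c, tailS w' N c (m + 1) t' = cf a c * t' (m + 1) +
        (cf (a + 1) c * t' (m + 2) + tailS w' N c (m + 3) t') := by
      intro c
      rw [tailS_succ (by omega), s1', b1]
    unfold LamP
    rw [a0, a1, a2, b0, b1, b2, s1, s0, s1', s0']
    rw [show m + 2 + 1 = m + 3 from rfl, T3 _ _ le_rfl, T3 _ _ le_rfl]
    simp only [cf_self, cf_left, cf_right]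
    generalize tailS w N a (m + 3) t = X
    generalize tailS w N (a + 1) (m + 3) t = Y
    rcases le_total (t (m + 2)) (t (m + 1) - t m) with h | h
    · rw [max_eq_right h] at h0
      rw [min_eq_left (by linarith)] at h2
      rw [h0, h1, h2]
      constructor
      · rintro ⟨p, q, r⟩
        refine ⟨?_, ?_, ?_⟩ <;> linarith
      · rintro ⟨p, q, r⟩
        refine ⟨?_, ?_, ?_⟩ <;> linarith
    · rw [max_eq_left h] at h0
      rw [min_eq_right (by linarith)] at h2
      rw [h0, h1, h2]
      constructor
      · rintro ⟨p, q, r⟩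
        refine ⟨?_, ?_, ?_⟩ <;> linarith
      · rintro ⟨p, q, r⟩
        refine ⟨?_, ?_, ?_⟩ <;> linarith

theorem lam_two {u v : List ℕ} {a b N : ℕ} (hab : a + 1 < b ∨ b + 1 < a) {lam : ℕ → ℤ}
    {t t' : ℕ → ℝ} (hN : u.length + 2 ≤ N)
    (ht : ∀ j, (j < u.length ∨ u.length + 2 ≤ j) → t' j = t j)
    (h0 : t' u.length = t (u.length + 1))
    (h1 : t' (u.length + 1) = t u.length) :
    (∀ j < N, LamP (u ++ [a, b] ++ v) N lam t j) ↔
    (∀ j < N, LamP (u ++ [b, a] ++ v) N lam t' j) := by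
  have hout := fun j hj => (wire_out (u := u) (v := v) (mid := [a, b])
    (mid' := [b, a]) rfl (two_prod hab) (j := j) hj).2.2
  simp only [List.length_cons, List.length_nil] at hout
  have a0 : letterAt (u ++ [a, b] ++ v) (u.length + 0 + 1) = a :=
    (wire_mid (u := u) (v := v) (mid := [a, b]) (i := 0) (by simp)).2.2
  have a1 : letterAt (u ++ [a, b] ++ v) (u.length + 1 + 1) = b :=
    (wire_mid (u := u) (v := v) (mid := [a, b]) (i := 1) (by simp)).2.2
  have b0 : letterAt (u ++ [b, a] ++ v) (u.length + 0 + 1) = b :=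
    (wire_mid (u := u) (v := v) (mid := [b, a]) (i := 0) (by simp)).2.2
  have b1 : letterAt (u ++ [b, a] ++ v) (u.length + 1 + 1) = a :=
    (wire_mid (u := u) (v := v) (mid := [b, a]) (i := 1) (by simp)).2.2
  generalize hw : u ++ [a, b] ++ v = w at *
  generalize hw' : u ++ [b, a] ++ v = w' at *
  generalize u.length = m at *
  simp only [add_zero] at a0 b0
  have T3 : ∀ c j, m + 2 ≤ j → tailS w' N c j t' = tailS w N c j t := fun c j hj =>
    tailS_congr fun k hk => ⟨hout k (by omega), ht k (by omega)⟩
  have s0 : ∀ c, tailS w N c (m + 1) t = cf b c * t (m + 1) + tailS w N c (m + 2) t := by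
    intro c
    rw [tailS_succ (by omega), a1]
  have s0' : ∀ c, tailS w' N c (m + 1) t' = cf a c * t' (m + 1) + tailS w' N c (m + 2) t' := by
    intro c
    rw [tailS_succ (by omega), b1]
  have T0 : ∀ c, tailS w' N c m t' = tailS w N c m t := by
    intro c
    rw [tailS_succ (by omega), tailS_succ (w := w) (by omega), s0, s0', T3 c _ le_rfl, h0, h1,
      a0, b0]
    ring
  have T0' : ∀ c j, j ≤ m → tailS w' N c j t' = tailS w N c j t := fun c j hj =>
    tailS_congr' hj (by omega) (fun k hk => ⟨hout k (by omega), ht k (by omega)⟩) (T0 c)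
  have split : ∀ P : ℕ → Prop, (∀ j < N, P j) ↔ (∀ j < N, (j < m ∨ m + 2 ≤ j) → P j) ∧
      P (m + 1) ∧ P m := by
    intro P
    constructor
    · intro h
      exact ⟨fun j hj _ => h j hj, h _ (by omega), h _ (by omega)⟩
    · rintro ⟨h1, h3, h4⟩ j hj
      by_cases h : j < m ∨ m + 2 ≤ j
      · exact h1 j hj h
      · have : j = m ∨ j = m + 1 := by omega
        rcases this with rfl | rfl <;> assumption
  rw [split, split (LamP w' N lam t')]
  refine and_congr ?_ ?_
  · refine forall₃_congr fun j hj hj' => ?_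
    unfold LamP
    rw [ht j hj', hout j hj']
    rcases hj' with h | h
    · rw [T0' _ _ (by omega)]
    · rw [T3 _ _ (by omega)]
  · unfold LamP
    rw [a0, a1, b0, b1, s0, s0']
    rw [show m + 1 + 1 = m + 2 from rfl, T3 _ _ le_rfl, T3 _ _ le_rfl, cf_far hab,
      cf_far (a := b) (b := a) (by omega), h0, h1]
    simp only [zero_mul, zero_add]
    exact and_comm


/-! ### Unimodular maps preserve volume -/

/-- vectors with integer coordinates. -/
def IntVec {N : ℕ} (x : Fin N → ℝ) : Prop := ∀ i, ∃ z : ℤ, x i = z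

theorem unimod_det {N : ℕ} (L : (Fin N → ℝ) →ₗ[ℝ] (Fin N → ℝ))
    (hL : ∀ x, IntVec x → IntVec (L x)) (hs : ∀ y, IntVec y → ∃ x, IntVec x ∧ L x = y) :
    |LinearMap.det L| = 1 := by
  have hsingle : ∀ j : Fin N, IntVec (Pi.single j (1 : ℝ)) := by
    intro j i
    by_cases h : i = j
    · exact ⟨1, by simp [h]⟩
    · exact ⟨0, by simp [h]⟩
  have h1 : ∀ i j, ∃ z : ℤ, L (Pi.single j 1) i = z := fun i j => hL _ (hsingle j) i
  choose M hM using h1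
  choose g hg1 hg2 using fun j => hs _ (hsingle j)
  choose K hK using hg1
  have e1 : LinearMap.toMatrix' L = (Matrix.of M).map (Int.castRingHom ℝ) := by
    ext i j
    simp [LinearMap.toMatrix'_apply, hM, Pi.single_apply, ← Pi.single_apply]
  have hdet : LinearMap.det L = ((Matrix.of M).det : ℝ) := by
    rw [← LinearMap.det_toMatrix', e1, ← RingHom.mapMatrix_apply, ← RingHom.map_det]
    simp
  have hmul : (Matrix.of M) * (Matrix.of (fun i j => K j i)) = 1 := by
    have : ((Matrix.of M).map (Int.castRingHom ℝ)) *
        ((Matrix.of (fun i j => K j i)).map (Int.castRingHom ℝ)) = 1 := by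
      rw [← e1]
      ext i j
      have := congrFun (hg2 j) i
      rw [← LinearMap.toMatrix'_mulVec] at this
      rw [Matrix.mul_apply, Matrix.one_apply]
      simp only [Matrix.mulVec, dotProduct] at this
      simp only [Matrix.map_apply, Matrix.of_apply, eq_intCast, ← hK]
      rw [this, Pi.single_apply]
    rw [← Matrix.map_mul] at this
    ext i j
    have h := congrFun (congrFun this i) j
    rw [Matrix.map_apply, Matrix.one_apply] at h
    rw [Matrix.one_apply]
    have : ((((Matrix.of M) * (Matrix.of (fun i j => K j i))) i j : ℤ) : ℝ) =
      ((if i = j then 1 else 0 : ℤ) : ℝ) := by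
      push_cast
      exact h
    exact_mod_cast this
  have hu : IsUnit (Matrix.of M).det := by
    have := congrArg Matrix.det hmul
    rw [Matrix.det_mul, Matrix.det_one] at this
    exact IsUnit.of_mul_eq_one _ this
  rw [hdet]
  rcases Int.isUnit_iff.1 hu with h | h <;> simp [h]

theorem unimod_vol {N : ℕ} (L : (Fin N → ℝ) →ₗ[ℝ] (Fin N → ℝ))
    (hL : ∀ x, IntVec x → IntVec (L x)) (hs : ∀ y, IntVec y → ∃ x, IntVec x ∧ L x = y)
    (S : Set (Fin N → ℝ)) : MeasureTheory.volume (L ⁻¹' S) = MeasureTheory.volume S := by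
  have h := unimod_det L hL hs
  have h0 : LinearMap.det L ≠ 0 := by
    intro h'
    rw [h'] at h
    simp at h
  rw [MeasureTheory.Measure.addHaar_preimage_linearMap _ h0, abs_inv, h]
  simp

theorem IntVec.sub' {N : ℕ} {x : Fin N → ℝ} (h : IntVec x) (i j : Fin N) :
    ∃ z : ℤ, x i - x j = z := by
  obtain ⟨a, ha⟩ := h i
  obtain ⟨b, hb⟩ := h j
  exact ⟨a - b, by rw [ha, hb]; push_cast; rfl⟩

theorem IntVec.add' {N : ℕ} {x : Fin N → ℝ} (h : IntVec x) (i j : Fin N) :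
    ∃ z : ℤ, x i + x j = z := by
  obtain ⟨a, ha⟩ := h i
  obtain ⟨b, hb⟩ := h j
  exact ⟨a + b, by rw [ha, hb]; push_cast; rfl⟩

/-- linear map changing three coordinates. -/
def map3 {N : ℕ} (a b c : Fin N) (f g h : (Fin N → ℝ) →ₗ[ℝ] ℝ) :
    (Fin N → ℝ) →ₗ[ℝ] (Fin N → ℝ) :=
  LinearMap.pi fun j => if j = a then f else if j = b then g else if j = c then h
    else LinearMap.proj j

theorem map3_apply {N : ℕ} (a b c : Fin N) (f g h : (Fin N → ℝ) →ₗ[ℝ] ℝ) (t : Fin N → ℝ)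
    (j : Fin N) : map3 a b c f g h t j =
      if j = a then f t else if j = b then g t else if j = c then h t else t j := by
  unfold map3
  rw [LinearMap.pi_apply]
  split_ifs <;> rfl

/-- shorthand for the coordinate functional. -/
def pj {N : ℕ} (j : Fin N) : (Fin N → ℝ) →ₗ[ℝ] ℝ := LinearMap.proj j

theorem pj_apply {N : ℕ} (j : Fin N) (t : Fin N → ℝ) : pj j t = t j := rfl

theorem map3_int {N : ℕ} {a b c : Fin N} {f g h : (Fin N → ℝ) →ₗ[ℝ] ℝ}
    (hf : ∀ x, IntVec x → ∃ z : ℤ, f x = z) (hg : ∀ x, IntVec x → ∃ z : ℤ, g x = z)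
    (hh : ∀ x, IntVec x → ∃ z : ℤ, h x = z) : ∀ x, IntVec x → IntVec (map3 a b c f g h x) := by
  intro x hx j
  rw [map3_apply]
  split_ifs
  · exact hf x hx
  · exact hg x hx
  · exact hh x hx
  · exact hx j

/-- volume invariance under the piecewise linear exchange. -/
theorem exchange_vol {N : ℕ} {a b c : Fin N} (hab : a ≠ b) (hac : a ≠ c) (hbc : b ≠ c)
    (S S' : Set (Fin N → ℝ))
    (h : ∀ t t' : Fin N → ℝ, (∀ j, j ≠ a → j ≠ b → j ≠ c → t' j = t j) →
      t' a = max (t c) (t b - t a) → t' b = t a + t c → t' c = min (t a) (t b - t c) →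
      (t ∈ S ↔ t' ∈ S')) : MeasureTheory.volume S = MeasureTheory.volume S' := by
  set L1 := map3 a b c (pj b - pj a) (pj a + pj c) (pj a) with hL1
  set L2 := map3 a b c (pj c) (pj a + pj c) (pj b - pj c) with hL2
  have i1 : ∀ x, IntVec x → IntVec (L1 x) :=
    map3_int (fun x hx => hx.sub' b a) (fun x hx => hx.add' a c) (fun x hx => hx a)
  have i2 : ∀ x, IntVec x → IntVec (L2 x) :=
    map3_int (fun x hx => hx c) (fun x hx => hx.add' a c) (fun x hx => hx.sub' b c)
  have s1 : ∀ y, IntVec y → ∃ x, IntVec x ∧ L1 x = y := by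
    intro y hy
    refine ⟨map3 a b c (pj c) (pj a + pj c) (pj b - pj c) y, i2 y hy, ?_⟩
    ext j
    simp only [hL1, map3_apply, LinearMap.sub_apply, LinearMap.add_apply, pj_apply, if_true,
      hab, hac, hbc, hab.symm, hac.symm, hbc.symm, if_false]
    split_ifs with h1 h2 h3
    · rw [h1]; ring
    · rw [h2]; ring
    · rw [h3]
    · rfl
  have s2 : ∀ y, IntVec y → ∃ x, IntVec x ∧ L2 x = y := by
    intro y hy
    refine ⟨map3 a b c (pj b - pj a) (pj a + pj c) (pj a) y, i1 y hy, ?_⟩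
    ext j
    simp only [hL2, map3_apply, LinearMap.sub_apply, LinearMap.add_apply, pj_apply, if_true,
      hab, hac, hbc, hab.symm, hac.symm, hbc.symm, if_false]
    split_ifs with h1 h2 h3
    · rw [h1]
    · rw [h2]; ring
    · rw [h3]; ring
    · rfl
  set A : Set (Fin N → ℝ) := {t | t a + t c ≤ t b} with hA
  set A' : Set (Fin N → ℝ) := {t | t b ≤ t a + t c} with hA'
  have mA : MeasurableSet A :=
    measurableSet_le ((measurable_pi_apply a).add (measurable_pi_apply c)) (measurable_pi_apply b)
  have mA' : MeasurableSet A' :=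
    measurableSet_le (measurable_pi_apply b) ((measurable_pi_apply a).add (measurable_pi_apply c))
  have v1 : ∀ t, L1 t a = t b - t a ∧ L1 t b = t a + t c ∧ L1 t c = t a := by
    intro t
    simp only [hL1, map3_apply, LinearMap.sub_apply, LinearMap.add_apply, pj_apply, if_true,
      hab.symm, hac.symm, hbc.symm, if_false]
    refine ⟨?_, ?_, ?_⟩ <;> trivial
  have v2 : ∀ t, L2 t a = t c ∧ L2 t b = t a + t c ∧ L2 t c = t b - t c := by
    intro t
    simp only [hL2, map3_apply, LinearMap.sub_apply, LinearMap.add_apply, pj_apply, if_true,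
      hab.symm, hac.symm, hbc.symm, if_false]
    refine ⟨?_, ?_, ?_⟩ <;> trivial
  have p1 : S ∩ A = L1 ⁻¹' (S' ∩ A') := by
    ext t
    obtain ⟨e1, e2, e3⟩ := v1 t
    have hA1 : t ∈ A ↔ L1 t ∈ A' := by
      simp only [hA, hA', Set.mem_ofPred_eq, e1, e2, e3]
      constructor <;> intro h <;> linarith
    rw [Set.mem_preimage, Set.mem_inter_iff, Set.mem_inter_iff, hA1]
    refine and_congr_left fun hh => ?_
    rw [← hA1] at hh
    have hh : t a + t c ≤ t b := hh
    refine h t (L1 t) ?_ ?_ ?_ ?_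
    · intro j h1 h2 h3
      simp [hL1, map3_apply, h1, h2, h3]
    · rw [e1, max_eq_right (by linarith)]
    · exact e2
    · rw [e3, min_eq_left (by linarith)]
  have p2 : S \ A = L2 ⁻¹' (S' \ A') := by
    ext t
    obtain ⟨e1, e2, e3⟩ := v2 t
    have hA1 : t ∈ A ↔ L2 t ∈ A' := by
      simp only [hA, hA', Set.mem_ofPred_eq, e1, e2, e3]
      constructor <;> intro h <;> linarith
    rw [Set.mem_preimage, Set.mem_sdiff, Set.mem_sdiff, hA1]
    refine and_congr_left fun hh => ?_
    rw [← hA1] at hh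
    have hh : ¬ (t a + t c ≤ t b) := hh
    refine h t (L2 t) ?_ ?_ ?_ ?_
    · intro j h1 h2 h3
      simp [hL2, map3_apply, h1, h2, h3]
    · rw [e1, max_eq_left (by linarith)]
    · exact e2
    · rw [e3, min_eq_right (by linarith)]
  rw [← MeasureTheory.measure_inter_add_sdiff S mA, p1, p2, unimod_vol L1 i1 s1,
    unimod_vol L2 i2 s2, MeasureTheory.measure_inter_add_sdiff S' mA']

theorem swap_vol {N : ℕ} {a b : Fin N} (S S' : Set (Fin N → ℝ))
    (h : ∀ t t' : Fin N → ℝ, (∀ j, j ≠ a → j ≠ b → t' j = t j) →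
      t' a = t b → t' b = t a → (t ∈ S ↔ t' ∈ S')) :
    MeasureTheory.volume S = MeasureTheory.volume S' := by
  let L : (Fin N → ℝ) →ₗ[ℝ] (Fin N → ℝ) := LinearMap.funLeft ℝ ℝ (Equiv.swap a b)
  have hL : ∀ t j, L t j = t (Equiv.swap a b j) := fun t j => rfl
  have i1 : ∀ x, IntVec x → IntVec (L x) := fun x hx j => hx _
  have : S = L ⁻¹' S' := by
    ext t
    refine h t (L t) ?_ ?_ ?_
    · intro j h1 h2
      rw [hL, Equiv.swap_apply_of_ne_of_ne h1 h2]
    · rw [hL, Equiv.swap_apply_left]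
    · rw [hL, Equiv.swap_apply_right]
  rw [this]
  refine unimod_vol L i1 (fun y hy => ⟨L y, i1 y hy, ?_⟩) S'
  ext j
  simp [hL]

theorem vol_three {n : ℕ} {u v : List ℕ} {a : ℕ} {lam : ℕ → ℤ}
    (hw : IsReduced n (u ++ [a, a + 1, a] ++ v)) (hw' : IsReduced n (u ++ [a + 1, a, a + 1] ++ v)) :
    MeasureTheory.volume (stringPolytope n (u ++ [a, a + 1, a] ++ v) lam) =
      MeasureTheory.volume (stringPolytope n (u ++ [a + 1, a, a + 1] ++ v) lam) := by
  have hl : u.length + 3 ≤ Dim n := by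
    have : (u ++ [a, a + 1, a] ++ v).length = Dim n := hw.1
    simp only [List.length_append, List.length_cons, List.length_nil] at this
    omega
  have l0 : u.length < Dim n := by omega
  have l1 : u.length + 1 < Dim n := by omega
  have l2 : u.length + 2 < Dim n := by omega
  refine exchange_vol (a := ⟨u.length, l0⟩) (b := ⟨u.length + 1, l1⟩) (c := ⟨u.length + 2, l2⟩)
    (by simp) (by simp) (by simp) _ _ ?_
  intro t t' hj ha hb hc
  have ht : ∀ j, (j < u.length ∨ u.length + 3 ≤ j) → entry n t' j = entry n t j := by
    intro j hj'
    unfold entry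
    split_ifs with h
    · apply hj <;> (intro h'; rw [Fin.mk.injEq] at h'; omega)
    · rfl
  have e0 : ∀ s, entry n s u.length = s ⟨u.length, l0⟩ := fun s => by simp only [entry, l0, dif_pos]
  have e1 : ∀ s, entry n s (u.length + 1) = s ⟨u.length + 1, l1⟩ :=
    fun s => by simp only [entry, l1, dif_pos]
  have e2 : ∀ s, entry n s (u.length + 2) = s ⟨u.length + 2, l2⟩ :=
    fun s => by simp only [entry, l2, dif_pos]
  rw [← e0 t', ← e0 t, ← e1 t, ← e2 t] at ha
  rw [← e1 t', ← e0 t, ← e2 t] at hb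
  rw [← e2 t', ← e0 t, ← e1 t, ← e2 t] at hc
  unfold stringPolytope
  rw [Set.mem_inter_iff, Set.mem_inter_iff, mem_stringCone hw, mem_stringCone hw', mem_lamCone,
    mem_lamCone]
  refine and_congr (forall₃_congr fun k _ _ => ⟨?_, ?_⟩) (lam_three hl ht ha hb hc)
  · exact PCone.three_fwd hw.good ht ha hb hc
  · exact PCone.three_bwd hw'.good ht ha hb hc

theorem vol_two {n : ℕ} {u v : List ℕ} {a b : ℕ} {lam : ℕ → ℤ} (hab : a + 1 < b ∨ b + 1 < a)
    (hw : IsReduced n (u ++ [a, b] ++ v)) (hw' : IsReduced n (u ++ [b, a] ++ v)) :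
    MeasureTheory.volume (stringPolytope n (u ++ [a, b] ++ v) lam) =
      MeasureTheory.volume (stringPolytope n (u ++ [b, a] ++ v) lam) := by
  have hl : u.length + 2 ≤ Dim n := by
    have : (u ++ [a, b] ++ v).length = Dim n := hw.1
    simp only [List.length_append, List.length_cons, List.length_nil] at this
    omega
  have l0 : u.length < Dim n := by omega
  have l1 : u.length + 1 < Dim n := by omega
  refine swap_vol (a := ⟨u.length, l0⟩) (b := ⟨u.length + 1, l1⟩) _ _ ?_
  intro t t' hj ha hb
  have ht : ∀ j, (j < u.length ∨ u.length + 2 ≤ j) → entry n t' j = entry n t j := by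
    intro j hj'
    unfold entry
    split_ifs with h
    · apply hj <;> (intro h'; rw [Fin.mk.injEq] at h'; omega)
    · rfl
  have e0 : ∀ s, entry n s u.length = s ⟨u.length, l0⟩ := fun s => by simp only [entry, l0, dif_pos]
  have e1 : ∀ s, entry n s (u.length + 1) = s ⟨u.length + 1, l1⟩ :=
    fun s => by simp only [entry, l1, dif_pos]
  rw [← e0 t', ← e1 t] at ha
  rw [← e1 t', ← e0 t] at hb
  unfold stringPolytope
  rw [Set.mem_inter_iff, Set.mem_inter_iff, mem_stringCone hw, mem_stringCone hw', mem_lamCone,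
    mem_lamCone]
  refine and_congr (forall₃_congr fun k _ _ => ⟨?_, ?_⟩) (lam_two hab hl ht ha hb)
  · exact PCone.two hab ht ha hb
  · exact PCone.two hab.symm (fun j hj => (ht j hj).symm) hb.symm ha.symm

theorem vol_step {n : ℕ} {w w' : List ℕ} {lam : ℕ → ℤ} (hw : IsReduced n w)
    (hw' : IsReduced n w') (h : BraidStep w w') :
    MeasureTheory.volume (stringPolytope n w lam) =
      MeasureTheory.volume (stringPolytope n w' lam) := by
  rcases h with ⟨u, v, a, b, h, rfl, rfl⟩ | ⟨u, v, a, b, rfl | rfl, rfl, rfl⟩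
  · exact vol_two h hw hw'
  · exact vol_three hw hw'
  · exact (vol_three hw' hw).symm

theorem vol_base {n : ℕ} {w : List ℕ} {lam : ℕ → ℤ} (hw : IsReduced n w) :
    MeasureTheory.volume (stringPolytope n w lam) =
      MeasureTheory.volume (stringPolytope n (baseWord n) lam) :=
  reduced_induction (Q := fun w => MeasureTheory.volume (stringPolytope n w lam) =
      MeasureTheory.volume (stringPolytope n (baseWord n) lam)) rfl
    (fun _ _ h1 h2 hs h => (vol_step h1 h2 hs).symm.trans h) hw


/-! ### The Gelfand–Cetlin polytope and the base word -/

theorem Dim_mono {m n : ℕ} (h : m ≤ n) : Dim m ≤ Dim n := by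
  induction h with
  | refl => exact le_rfl
  | step _ ih => exact ih.trans (by rw [Dim_succ]; omega)

theorem row_lt {n m i : ℕ} (hm : m < n) (hi : i ≤ m) : Dim m + i < Dim n := by
  have h1 := Dim_mono (show m + 1 ≤ n from hm)
  rw [Dim_succ] at h1
  omega

theorem exists_row {n j : ℕ} (h : j < Dim n) : ∃ p : ℕ × ℕ, p.1 < n ∧ p.2 ≤ p.1 ∧
    j = Dim p.1 + p.2 := by
  induction n with
  | zero => simp [Dim] at h
  | succ n ih =>
    by_cases h' : j < Dim n
    · obtain ⟨p, h1, h2, h3⟩ := ih h'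
      exact ⟨p, by omega, h2, h3⟩
    · rw [Dim_succ] at h
      exact ⟨(n, j - Dim n), by simp, by simp only; omega, by simp only; omega⟩

theorem row_unique {m i m' i' : ℕ} (hi : i ≤ m) (hi' : i' ≤ m')
    (h : Dim m + i = Dim m' + i') : m = m' ∧ i = i' := by
  rcases lt_trichotomy m m' with h1 | h1 | h1
  · have := row_lt h1 hi
    omega
  · subst h1
    exact ⟨rfl, by omega⟩
  · have := row_lt h1 hi'
    omega

/-- the row and position of an index. -/
def rowPos {n : ℕ} (j : Fin (Dim n)) : ℕ × ℕ := (exists_row j.2).choose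

theorem rowPos_spec {n : ℕ} (j : Fin (Dim n)) : (rowPos j).1 < n ∧ (rowPos j).2 ≤ (rowPos j).1 ∧
    (j : ℕ) = Dim (rowPos j).1 + (rowPos j).2 := (exists_row j.2).choose_spec

theorem rowPos_eq {n m i : ℕ} (hm : m < n) (hi : i ≤ m) :
    rowPos (⟨Dim m + i, row_lt hm hi⟩ : Fin (Dim n)) = (m, i) := by
  obtain ⟨h1, h2, h3⟩ := rowPos_spec (⟨Dim m + i, row_lt hm hi⟩ : Fin (Dim n))
  obtain ⟨e1, e2⟩ := row_unique hi h2 h3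
  exact Prod.ext e1.symm e2.symm

theorem base_letter_gen {n m i : ℕ} (hm : m < n) (hi : i ≤ m) :
    letterAt (baseWord n) (Dim m + i + 1) = m + 1 - i := by
  induction n with
  | zero => omega
  | succ n ih =>
    by_cases h : m = n
    · subst h
      exact base_letter (by omega)
    · rw [base_letter_left (row_lt (by omega) hi), ih (by omega)]

theorem cf_sum_short (c : ℕ) (Q : ℕ → ℝ) :
    ∑ l ∈ Finset.range (c + 1), cf l (c + 1) * Q l = Q c := by
  rw [Finset.sum_range_succ, cf_left, Finset.sum_eq_zero]
  · ring
  · intro l hl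
    rw [Finset.mem_range] at hl
    rw [cf_far (by omega), zero_mul]

theorem cf_sum_long (c d : ℕ) (Q : ℕ → ℝ) :
    ∑ l ∈ Finset.range (c + 3 + d), cf l (c + 1) * Q l = Q c - 2 * Q (c + 1) + Q (c + 2) := by
  induction d with
  | zero =>
    rw [add_zero, Finset.sum_range_succ, Finset.sum_range_succ, cf_sum_short, cf_self,
      show c + 2 = c + 1 + 1 from rfl, cf_right]
    ring
  | succ d ih =>
    rw [← add_assoc, Finset.sum_range_succ, ih, cf_far (by omega)]
    ring

/-- a part of a row. -/
theorem row_sum {n m a : ℕ} {e Q : ℕ → ℝ} (hm : m < n)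
    (hQ : ∀ i ≤ m, e (Dim m + i) = Q (m + 1 - i)) (hQ0 : Q 0 = 0) (b : ℕ) :
    ∀ i, i + b = m + 1 → ∑ k ∈ Finset.Ico (Dim m + i) (Dim (m + 1)),
      cf (letterAt (baseWord n) (k + 1)) a * e k = ∑ l ∈ Finset.range (b + 1), cf l a * Q l := by
  induction b with
  | zero =>
    intro i hi
    rw [Dim_succ, show i = m + 1 by omega]
    simp [hQ0]
  | succ b ih =>
    intro i hi
    have h3 := ih (i + 1) (by omega)
    rw [← add_assoc] at h3
    rw [Finset.sum_eq_sum_Ico_succ_bot (by rw [Dim_succ]; omega), h3, Finset.sum_range_succ _ (b + 1),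
      base_letter_gen hm (by omega), hQ i (by omega), show m + 1 - i = b + 1 by omega]
    ring

/-- partial row sums. -/
def PS (X : ℕ → ℕ → ℝ) (m l : ℕ) : ℝ := ∑ c ∈ Finset.range l, X m c

/-- differences of partial row sums. -/
def QS (X : ℕ → ℕ → ℝ) (m l : ℕ) : ℝ := PS X (m + 1) l - PS X m l

theorem tail_rows {n : ℕ} {X : ℕ → ℕ → ℝ} {e : ℕ → ℝ}
    (he : ∀ m < n, ∀ i ≤ m, e (Dim m + i) = QS X m (m + 1 - i)) (c d : ℕ) :
    ∀ m, m + d = n → c + 1 ≤ m → tailS (baseWord n) (Dim n) (c + 1) (Dim m) e =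
      (X n (c + 1) - X n c) - (X m (c + 1) - X m c) := by
  induction d with
  | zero =>
    intro m hm hc
    have : m = n := by omega
    subst this
    simp [tailS]
  | succ d ih =>
    intro m hm hc
    have h1 := ih (m + 1) (by omega) (by omega)
    unfold tailS at h1 ⊢
    rw [← Finset.sum_Ico_consecutive _ (Dim_mono (Nat.le_succ m))
      (Dim_mono (show m + 1 ≤ n by omega)), h1]
    have h2 := row_sum (n := n) (a := c + 1) (show m < n by omega) (he m (by omega))
      (by simp [QS, PS]) (m + 1) 0 (by omega)
    rw [add_zero] at h2
    rw [h2]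
    obtain ⟨d', rfl⟩ : ∃ d', m = c + 1 + d' := ⟨m - (c + 1), by omega⟩
    rw [show c + 1 + d' + 1 + 1 = c + 3 + d' by omega, cf_sum_long]
    simp only [QS, PS, Finset.sum_range_succ]
    ring

theorem gc_iff {n : ℕ} {lam : ℕ → ℤ} {X : ℕ → ℕ → ℝ} {e : ℕ → ℝ}
    (hX : ∀ c < n, X n c - X n (c + 1) = lam (c + 1))
    (he : ∀ m < n, ∀ i ≤ m, e (Dim m + i) = QS X m (m + 1 - i)) :
    (Chain n e ∧ ∀ j < Dim n, LamP (baseWord n) (Dim n) lam e j) ↔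
      ∀ m < n, ∀ c ≤ m, X m c ≤ X (m + 1) c ∧ X (m + 1) (c + 1) ≤ X m c := by
  have hch : Chain n e ↔ ∀ m < n, ∀ c ≤ m, X m c ≤ X (m + 1) c := by
    have key : ∀ m < n, ∀ c ≤ m, ((if m - c = m then 0 else e (Dim m + (m - c + 1))) ≤
        e (Dim m + (m - c)) ↔ X m c ≤ X (m + 1) c) := by
      intro m hm c hc
      rw [he m hm (m - c) (by omega), show m + 1 - (m - c) = c + 1 by omega]
      have : (if m - c = m then 0 else e (Dim m + (m - c + 1))) = QS X m c := by
        split_ifs with h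
        · rw [show c = 0 by omega]
          simp [QS, PS]
        · rw [he m hm _ (by omega), show m + 1 - (m - c + 1) = c by omega]
      rw [this]
      simp only [QS, PS, Finset.sum_range_succ]
      constructor <;> intro h <;> linarith
    constructor
    · intro h m hm c hc
      exact (key m hm c hc).1 (h m hm (m - c) (by omega))
    · intro h m hm i hi
      have := (key m hm (m - i) (by omega)).2 (h m hm (m - i) (by omega))
      rwa [show m - (m - i) = i by omega] at this
  have hlam : (∀ j < Dim n, LamP (baseWord n) (Dim n) lam e j) ↔
      ∀ m < n, ∀ c ≤ m, X (m + 1) (c + 1) ≤ X m c := by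
    have key : ∀ m < n, ∀ c ≤ m, (LamP (baseWord n) (Dim n) lam e (Dim m + (m - c)) ↔
        X (m + 1) (c + 1) ≤ X m c) := by
      intro m hm c hc
      have t1 := tail_rows he c (n - (m + 1)) (m + 1) (by omega) (by omega)
      have t2 := row_sum (n := n) (a := c + 1) hm (he m hm) (by simp [QS, PS]) c (m - c + 1)
        (by omega)
      rw [cf_sum_short] at t2
      have t3 : tailS (baseWord n) (Dim n) (c + 1) (Dim m + (m - c) + 1) e = QS X m c +
          ((X n (c + 1) - X n c) - (X (m + 1) (c + 1) - X (m + 1) c)) := by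
        rw [← t1, ← t2]
        unfold tailS
        rw [add_assoc, Finset.sum_Ico_consecutive _ (by rw [Dim_succ]; omega)
          (Dim_mono (show m + 1 ≤ n by omega))]
      unfold LamP
      rw [base_letter_gen hm (by omega), show m + 1 - (m - c) = c + 1 by omega, t3,
        he m hm (m - c) (by omega), show m + 1 - (m - c) = c + 1 by omega, ← hX c (by omega)]
      simp only [QS, PS, Finset.sum_range_succ]
      constructor <;> intro h <;> linarith
    constructor
    · intro h m hm c hc
      exact (key m hm c hc).1 (h _ (row_lt hm (by omega)))
    · intro h j hj
      obtain ⟨⟨m, i⟩, h1, h2, rfl⟩ := exists_row hj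
      simp only at h1 h2 ⊢
      have := (key m h1 (m - i) (by omega)).2 (h m h1 (m - i) (by omega))
      rwa [show m - (m - i) = i by omega] at this
  rw [hch, hlam]
  constructor
  · rintro ⟨h1, h2⟩ m hm c hc
    exact ⟨h1 m hm c hc, h2 m hm c hc⟩
  · intro h
    exact ⟨fun m hm c hc => (h m hm c hc).1, fun m hm c hc => (h m hm c hc).2⟩

/-- the linear part of the pattern. -/
def X0 (n : ℕ) (x : Fin (Dim n) → ℝ) (m c : ℕ) : ℝ := if m < n then entry n x (Dim m + c) else 0

/-- the constant part of the pattern. -/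
def XC (n : ℕ) (lam : ℕ → ℤ) (m c : ℕ) : ℝ :=
  if m < n then 0 else ∑ t ∈ Finset.Icc (c + 1) n, (lam t : ℝ)

theorem gcX_eq {n : ℕ} {lam : ℕ → ℤ} (x : Fin (Dim n) → ℝ) {m c : ℕ} (hm : m ≤ n) :
    gcX n lam x (m + 1) (c + 1) = X0 n x m c + XC n lam m c := by
  unfold gcX X0 XC
  by_cases h : m < n
  · rw [if_neg (by omega), if_pos h, if_pos h, add_zero]
    have : (m + 1) * (m + 1 - 1) / 2 + (c + 1 - 1) = Dim m + c := by
      simp only [Nat.add_sub_cancel, Dim]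
      rw [mul_comm]
    simp only [this, entry]
  · rw [if_pos (by omega), if_neg h, if_neg h, zero_add]
    split_ifs with h2
    · rfl
    · rw [Finset.Icc_eq_empty (by omega), Finset.sum_empty]

theorem XC_top {n : ℕ} {lam : ℕ → ℤ} {c : ℕ} (hc : c < n) :
    XC n lam n c - XC n lam n (c + 1) = lam (c + 1) := by
  unfold XC
  simp only [lt_irrefl, if_false]
  rw [← Finset.insert_Icc_add_one_left_eq_Icc (show c + 1 ≤ n from hc), Finset.sum_insert (by simp)]
  ring

theorem X0_add {n : ℕ} (x y : Fin (Dim n) → ℝ) (m c : ℕ) :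
    X0 n (x + y) m c = X0 n x m c + X0 n y m c := by
  unfold X0 entry
  split_ifs <;> simp

theorem X0_smul {n : ℕ} (r : ℝ) (x : Fin (Dim n) → ℝ) (m c : ℕ) :
    X0 n (r • x) m c = r * X0 n x m c := by
  unfold X0 entry
  split_ifs <;> simp

/-- the linear part of the change of coordinates. -/
def gcL (n : ℕ) : (Fin (Dim n) → ℝ) →ₗ[ℝ] (Fin (Dim n) → ℝ) where
  toFun x j := QS (X0 n x) (rowPos j).1 ((rowPos j).1 + 1 - (rowPos j).2)
  map_add' x y := by
    ext j
    simp only [QS, PS, X0_add, Finset.sum_add_distrib, Pi.add_apply]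
    ring
  map_smul' r x := by
    ext j
    simp only [QS, PS, X0_smul, ← Finset.mul_sum, Pi.smul_apply, smul_eq_mul, RingHom.id_apply]
    ring

theorem gcL_apply {n : ℕ} (x : Fin (Dim n) → ℝ) (j : Fin (Dim n)) :
    gcL n x j = QS (X0 n x) (rowPos j).1 ((rowPos j).1 + 1 - (rowPos j).2) := rfl

/-- the subgroup of integers. -/
def ZZ : AddSubgroup ℝ := (Int.castAddHom ℝ).range

theorem mem_ZZ {r : ℝ} : r ∈ ZZ ↔ ∃ z : ℤ, r = z := by
  unfold ZZ
  rw [AddMonoidHom.mem_range]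
  exact exists_congr fun z => eq_comm

theorem entry_ZZ {n : ℕ} {x : Fin (Dim n) → ℝ} (hx : IntVec x) (a : ℕ) : entry n x a ∈ ZZ := by
  unfold entry
  split_ifs
  · exact mem_ZZ.2 (hx _)
  · exact zero_mem _

theorem gcL_int {n : ℕ} (x : Fin (Dim n) → ℝ) (hx : IntVec x) : IntVec (gcL n x) := by
  have h : ∀ m c, X0 n x m c ∈ ZZ := by
    intro m c
    unfold X0
    split_ifs
    · exact entry_ZZ hx _
    · exact zero_mem _
  intro j
  rw [← mem_ZZ, gcL_apply]
  exact sub_mem (sum_mem fun c _ => h _ _) (sum_mem fun c _ => h _ _)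

theorem gcL_surj {n : ℕ} (y : Fin (Dim n) → ℝ) (hy : IntVec y) :
    ∃ x, IntVec x ∧ gcL n x = y := by
  set Y : ℕ → ℕ → ℝ := fun m l => if l = 0 then 0 else entry n y (Dim m + (m + 1 - l)) with hY
  have hYZ : ∀ m l, Y m l ∈ ZZ := by
    intro m l
    simp only [hY]
    split_ifs
    · exact zero_mem _
    · exact entry_ZZ hy _
  set Z : ℕ → ℕ → ℝ := fun m c => - ∑ m' ∈ Finset.Ico m n, (Y m' (c + 1) - Y m' c) with hZ
  refine ⟨fun j => Z (rowPos j).1 (rowPos j).2, ?_, ?_⟩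
  · intro j
    rw [← mem_ZZ]
    exact neg_mem (sum_mem fun c _ => sub_mem (hYZ _ _) (hYZ _ _))
  · have hX : ∀ m ≤ n, ∀ c ≤ m,
        X0 n (fun j : Fin (Dim n) => Z (rowPos j).1 (rowPos j).2) m c = Z m c := by
      intro m hm c hc
      unfold X0
      split_ifs with h
      · unfold entry
        rw [dif_pos (row_lt h hc)]
        simp only [rowPos_eq h hc]
      · have : m = n := by omega
        subst this
        simp [hZ]
    ext j
    obtain ⟨h1, h2, h3⟩ := rowPos_spec j
    rw [gcL_apply]
    set m := (rowPos j).1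
    set i := (rowPos j).2
    unfold QS PS
    rw [← Finset.sum_sub_distrib]
    have e1 : ∀ c ∈ Finset.range (m + 1 - i),
        X0 n (fun j : Fin (Dim n) => Z (rowPos j).1 (rowPos j).2) (m + 1) c -
        X0 n (fun j : Fin (Dim n) => Z (rowPos j).1 (rowPos j).2) m c = Y m (c + 1) - Y m c := by
      intro c hc
      rw [Finset.mem_range] at hc
      rw [hX _ (by omega) _ (by omega), hX _ (by omega) _ (by omega)]
      simp only [hZ]
      rw [Finset.sum_eq_sum_Ico_succ_bot h1]
      ring
    rw [Finset.sum_congr rfl e1, Finset.sum_range_sub]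
    simp only [hY, if_true, sub_zero]
    rw [if_neg (by omega), show m + 1 - (m + 1 - i) = i by omega, ← h3, entry_coe]

theorem vol_gc (n : ℕ) (lam : ℕ → ℤ) :
    MeasureTheory.volume (stringPolytope n (baseWord n) lam) =
      MeasureTheory.volume (GCPolytope n lam) := by
  set v : Fin (Dim n) → ℝ := fun j => QS (XC n lam) (rowPos j).1 ((rowPos j).1 + 1 - (rowPos j).2)
    with hv
  have key : GCPolytope n lam =
      gcL n ⁻¹' ((fun s => s + v) ⁻¹' (stringPolytope n (baseWord n) lam)) := by
    ext x
    set X : ℕ → ℕ → ℝ := fun m c => X0 n x m c + XC n lam m c with hX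
    rw [Set.mem_preimage, Set.mem_preimage]
    unfold stringPolytope
    rw [Set.mem_inter_iff, mem_stringCone_base, mem_lamCone, gc_iff (X := X)]
    · unfold GCPolytope
      rw [Set.mem_ofPred_eq]
      constructor
      · intro h m hm c hc
        have := h (m + 1) (c + 1) (by omega) (by omega) (by omega) (by omega)
        rw [gcX_eq x (by omega), gcX_eq x (by omega), gcX_eq x (by omega)] at this
        exact this
      · intro h k j h1 h2 h3 h4
        obtain ⟨m, rfl⟩ : ∃ m, k = m + 1 := ⟨k - 1, by omega⟩
        obtain ⟨c, rfl⟩ : ∃ c, j = c + 1 := ⟨j - 1, by omega⟩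
        rw [gcX_eq x (by omega), gcX_eq x (by omega), gcX_eq x (by omega)]
        exact h m (by omega) c (by omega)
    · intro c hc
      simp only [hX, X0, lt_irrefl, if_false, zero_add]
      exact XC_top hc
    · intro m hm i hi
      unfold entry
      rw [dif_pos (row_lt hm hi), Pi.add_apply, gcL_apply]
      simp only [hv, rowPos_eq hm hi, hX, QS, PS, Finset.sum_add_distrib]
      ring
  rw [key, unimod_vol _ gcL_int gcL_surj, MeasureTheory.measure_preimage_add_right]


open MeasureTheory in
/-- equal volumes.
For every reduced word `i ∈ Σ_{n+1}` and every dominant integral weight `λ`, the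
Euclidean volume of the string polytope `Δ_i(λ)` equals that of the Gelfand–Cetlin
polytope `GC(λ)`. -/
theorem statement15 (n : ℕ) (hn : 1 ≤ n) (i : List ℕ) (hi : IsReduced n i)
    (lam : ℕ → ℤ) (hlam : Dominant n lam) :
    volume (stringPolytope n i lam) = volume (GCPolytope n lam) := by
  exact (vol_base hi).trans (vol_gc n lam)

end StringPolytope
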